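/- Let {X_i : i ∈ 𝒥} satisfy condition (LD4*) and put κ = max_{i∈𝒥} max(|D_i*|, |{j ∈ 𝒥 : i ∈ D_j*}|). For each i let ξ_i be a measurable function of X_i with E ξ_i = 0 and |ξ_i| ≤ 1/(4κ). Define ξ_{A_j} = Σ_{l∈A_j} ξ_l, ξ_{B_j} = Σ_{l∈B_j} ξ_l and T = Σ_{j∈𝒥} ξ_j, and assume 1/2 ≤ E T² ≤ 2. Fix i ∈ 𝒥 and let ζ = (ξ_i, ξ_{A_i}, ξ_{B_i}). Then there is an absolute constant C such that for any Borel measurable a, b : ℝ³ → ℝ with 0 ≤ a ≤ b pointwise, writing a_ζ = a(ζ), b_ζ = b(ζ) and α = 16 κ² Σ_{j∈𝒥} E|ξ_j|³, one has almost surely E[(1 + T)³ · 1{a_ζ ≤ T ≤ b_ζ} | σ(ζ)] ≤ C (b_ζ − a_ζ + α). -/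

import Mathlib

open MeasureTheory ProbabilityTheory Real

namespace LDep

/-- bounded and measurable with respect to `m` -/
def BM {Ω : Type*} (m : MeasurableSpace Ω) (f : Ω → ℝ) : Prop :=
  Measurable[m] f ∧ ∃ C, ∀ ω, |f ω| ≤ C

namespace BM
variable {Ω : Type*} {m m' : MeasurableSpace Ω} {f g : Ω → ℝ}

lemma mono (hf : BM m f) (h : m ≤ m') : BM m' f := ⟨hf.1.mono h le_rfl, hf.2⟩

lemma const (c : ℝ) : BM m (fun _ => c) := ⟨measurable_const, |c|, fun _ => le_rfl⟩

lemma add (hf : BM m f) (hg : BM m g) : BM m (fun ω => f ω + g ω) := by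
  obtain ⟨h1, C, hC⟩ := hf
  obtain ⟨h2, D, hD⟩ := hg
  exact ⟨h1.add h2, C + D, fun ω => (abs_add_le _ _).trans (add_le_add (hC ω) (hD ω))⟩

lemma neg (hf : BM m f) : BM m (fun ω => - f ω) := by
  obtain ⟨h1, C, hC⟩ := hf
  exact ⟨h1.neg, C, fun ω => by rw [abs_neg]; exact hC ω⟩

lemma sub (hf : BM m f) (hg : BM m g) : BM m (fun ω => f ω - g ω) := by
  simpa [sub_eq_add_neg] using hf.add hg.neg

lemma mul (hf : BM m f) (hg : BM m g) : BM m (fun ω => f ω * g ω) := by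
  obtain ⟨h1, C, hC⟩ := hf
  obtain ⟨h2, D, hD⟩ := hg
  refine ⟨h1.mul h2, C * D, fun ω => ?_⟩
  rw [abs_mul]
  exact mul_le_mul (hC ω) (hD ω) (abs_nonneg _) ((abs_nonneg _).trans (hC ω))

lemma cmul (c : ℝ) (hf : BM m f) : BM m (fun ω => c * f ω) := (const c).mul hf

lemma abs (hf : BM m f) : BM m (fun ω => |f ω|) := by
  obtain ⟨h1, C, hC⟩ := hf
  exact ⟨measurable_norm.comp h1, C, fun ω => by rw [abs_abs]; exact hC ω⟩

lemma pow (hf : BM m f) (n : ℕ) : BM m (fun ω => f ω ^ n) := by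
  obtain ⟨h1, C, hC⟩ := hf
  exact ⟨h1.pow_const n, C ^ n, fun ω => by
    rw [abs_pow]; exact pow_le_pow_left₀ (abs_nonneg _) (hC ω) n⟩

lemma sum {ι : Type*} (s : Finset ι) {f : ι → Ω → ℝ} (hf : ∀ i ∈ s, BM m (f i)) :
    BM m (fun ω => ∑ i ∈ s, f i ω) := by
  classical
  induction s using Finset.induction_on with
  | empty => simpa using const (m := m) 0
  | insert a s ha ih =>
    simp only [Finset.sum_insert ha]
    exact (hf a (Finset.mem_insert_self a s)).add
      (ih fun i hi => hf i (Finset.mem_insert_of_mem hi))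

lemma of_le (hf : Measurable[m] f) (C : ℝ) (h : ∀ ω, |f ω| ≤ C) : BM m f := ⟨hf, C, h⟩

lemma comp {Ω' : Type*} {m' : MeasurableSpace Ω'} (hf : BM m f) {g : Ω' → Ω}
    (hg : Measurable[m', m] g) : BM m' (fun ω => f (g ω)) :=
  ⟨hf.1.comp hg, hf.2.imp fun _ h ω => h _⟩

end BM

section basic
variable {Ω : Type*} {m0 : MeasurableSpace Ω} {μ : Measure Ω} [IsFiniteMeasure μ]
  {f g : Ω → ℝ}

lemma BM.int (hf : BM m0 f) : Integrable f μ := by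
  obtain ⟨h1, C, hC⟩ := hf
  exact Integrable.of_bound h1.aestronglyMeasurable C (Filter.Eventually.of_forall hC)

lemma int_mono (hf : BM m0 f) (hg : BM m0 g) (h : ∀ ω, f ω ≤ g ω) :
    ∫ ω, f ω ∂μ ≤ ∫ ω, g ω ∂μ := integral_mono hf.int hg.int h

lemma int_add (hf : BM m0 f) (hg : BM m0 g) :
    ∫ ω, (f ω + g ω) ∂μ = ∫ ω, f ω ∂μ + ∫ ω, g ω ∂μ := integral_add hf.int hg.int

lemma int_sub (hf : BM m0 f) (hg : BM m0 g) :
    ∫ ω, (f ω - g ω) ∂μ = ∫ ω, f ω ∂μ - ∫ ω, g ω ∂μ := integral_sub hf.int hg.int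

lemma int_sum {ι : Type*} (s : Finset ι) {f : ι → Ω → ℝ} (hf : ∀ i ∈ s, BM m0 (f i)) :
    ∫ ω, (∑ i ∈ s, f i ω) ∂μ = ∑ i ∈ s, ∫ ω, f i ω ∂μ :=
  integral_finset_sum s fun i hi => (hf i hi).int

lemma int_abs_le (hf : BM m0 f) (hg : BM m0 g) (h : ∀ ω, |f ω| ≤ g ω) :
    |∫ ω, f ω ∂μ| ≤ ∫ ω, g ω ∂μ :=
  (abs_integral_le_integral_abs).trans (int_mono hf.abs hg h)

lemma indep_mul {m1 m2 : MeasurableSpace Ω} (h : Indep m1 m2 μ) (h1 : m1 ≤ m0) (h2 : m2 ≤ m0)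
    (hf : BM m1 f) (hg : BM m2 g) :
    ∫ ω, f ω * g ω ∂μ = (∫ ω, f ω ∂μ) * ∫ ω, g ω ∂μ := by
  have : IndepFun f g μ := by
    rw [IndepFun_iff_Indep]
    exact indep_of_indep_of_le h hf.1.comap_le hg.1.comap_le
  exact this.integral_fun_mul_eq_mul_integral (hf.1.mono h1 le_rfl).aestronglyMeasurable
    (hg.1.mono h2 le_rfl).aestronglyMeasurable

/-- Cauchy-Schwarz -/
lemma cs (hf : BM m0 f) (hg : BM m0 g) :
    (∫ ω, f ω * g ω ∂μ) ^ 2 ≤ (∫ ω, f ω ^ 2 ∂μ) * ∫ ω, g ω ^ 2 ∂μ := by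
  have key : ∀ t : ℝ, 0 ≤ (∫ ω, g ω ^ 2 ∂μ) * (t * t) + (2 * ∫ ω, f ω * g ω ∂μ) * t
      + ∫ ω, f ω ^ 2 ∂μ := by
    intro t
    have : ∫ ω, (f ω + t * g ω) ^ 2 ∂μ = (∫ ω, g ω ^ 2 ∂μ) * (t * t)
        + (2 * ∫ ω, f ω * g ω ∂μ) * t + ∫ ω, f ω ^ 2 ∂μ := by
      have : (fun ω => (f ω + t * g ω) ^ 2)
          = fun ω => ((t * t) * g ω ^ 2 + (2 * t) * (f ω * g ω)) + f ω ^ 2 := by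
        funext ω; ring
      rw [this, int_add (((hg.pow 2).cmul _).add ((hf.mul hg).cmul _)) (hf.pow 2),
        int_add ((hg.pow 2).cmul _) ((hf.mul hg).cmul _), integral_const_mul, integral_const_mul]
      ring
    rw [← this]
    exact integral_nonneg fun ω => sq_nonneg _
  have := discrim_le_zero key
  unfold discrim at this
  nlinarith

end basic

section prob
variable {Ω : Type*} {m0 : MeasurableSpace Ω} {μ : Measure Ω} [IsProbabilityMeasure μ]
  {f g : Ω → ℝ}

lemma int_c (c : ℝ) : ∫ _, c ∂μ = c := by simp

lemma cube_int_le (hf : BM m0 f) (h0 : ∀ ω, 0 ≤ f ω) :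
    (∫ ω, f ω ∂μ) ^ 3 ≤ ∫ ω, f ω ^ 3 ∂μ := by
  set c := ∫ ω, f ω ∂μ with hc
  have hc0 : 0 ≤ c := integral_nonneg h0
  have : ∫ ω, (3 * c ^ 2 * f ω - 2 * c ^ 3) ∂μ ≤ ∫ ω, f ω ^ 3 ∂μ := by
    refine int_mono ((hf.cmul _).sub (BM.const _)) (hf.pow 3) fun ω => ?_
    nlinarith [mul_nonneg (add_nonneg (h0 ω) (mul_nonneg zero_le_two hc0)) (sq_nonneg (f ω - c))]
  rw [int_sub (hf.cmul _) (BM.const _), integral_const_mul, int_c, ← hc] at this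
  nlinarith

lemma sq_int_le (hf : BM m0 f) :
    (∫ ω, f ω ∂μ) ^ 2 ≤ ∫ ω, f ω ^ 2 ∂μ := by
  have := cs (μ := μ) hf (BM.const 1)
  simpa using this

end prob

/-- third order combinatorial sum bound -/
lemma triple {ι : Type*} [Fintype ι] [DecidableEq ι] (D : ι → Finset ι) (κ : ℕ)
    (h1 : ∀ j, (D j).card ≤ κ) (h2 : ∀ j, (Finset.univ.filter fun l => j ∈ D l).card ≤ κ)
    (x y z : ι → ℝ) (hx : ∀ j, 0 ≤ x j) (hy : ∀ j, 0 ≤ y j) (hz : ∀ j, 0 ≤ z j) :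
    ∑ j, x j * ((∑ k ∈ D j, y k) * ∑ l ∈ D j, z l) ≤
      (κ : ℝ) ^ 2 * ((∑ j, x j ^ 3 + ∑ j, y j ^ 3 + ∑ j, z j ^ 3) / 3) := by
  have amgm : ∀ a b c : ℝ, 0 ≤ a → 0 ≤ b → 0 ≤ c → a * (b * c) ≤ (a ^ 3 + b ^ 3 + c ^ 3) / 3 := by
    intro a b c ha hb hc
    nlinarith [mul_nonneg (add_nonneg (add_nonneg ha hb) hc) (add_nonneg (add_nonneg
      (sq_nonneg (a - b)) (sq_nonneg (b - c))) (sq_nonneg (a - c)))]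
  have swap : ∀ w : ι → ℝ, (∀ j, 0 ≤ w j) → ∑ j, ∑ k ∈ D j, w k ≤ κ * ∑ k, w k := by
    intro w hw
    have : ∑ j, ∑ k ∈ D j, w k = ∑ k, ∑ j, if k ∈ D j then w k else 0 := by
      rw [Finset.sum_comm]
      refine Finset.sum_congr rfl fun j _ => ?_
      rw [Finset.sum_ite_mem, Finset.univ_inter]
    rw [this, Finset.mul_sum]
    refine Finset.sum_le_sum fun k _ => ?_
    rw [← Finset.sum_filter, Finset.sum_const, nsmul_eq_mul]
    exact mul_le_mul_of_nonneg_right (by exact_mod_cast h2 k) (hw k)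
  have hcard : ∀ j, ((D j).card : ℝ) ≤ κ := fun j => by exact_mod_cast h1 j
  have hκ : (0 : ℝ) ≤ κ := Nat.cast_nonneg _
  have step : ∀ j, x j * ((∑ k ∈ D j, y k) * ∑ l ∈ D j, z l) ≤
      (κ ^ 2 * x j ^ 3 + κ * ∑ k ∈ D j, y k ^ 3 + κ * ∑ k ∈ D j, z k ^ 3) / 3 := by
    intro j
    have e : x j * ((∑ k ∈ D j, y k) * ∑ l ∈ D j, z l)
        = ∑ k ∈ D j, ∑ l ∈ D j, x j * (y k * z l) := by
      rw [Finset.sum_mul_sum, Finset.mul_sum]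
      refine Finset.sum_congr rfl fun k _ => by rw [Finset.mul_sum]
    rw [e]
    calc _ ≤ ∑ k ∈ D j, ∑ l ∈ D j, (x j ^ 3 + y k ^ 3 + z l ^ 3) / 3 :=
          Finset.sum_le_sum fun k _ => Finset.sum_le_sum fun l _ =>
            amgm _ _ _ (hx j) (hy k) (hz l)
      _ = ((D j).card ^ 2 * x j ^ 3 + (D j).card * ∑ k ∈ D j, y k ^ 3
            + (D j).card * ∑ k ∈ D j, z k ^ 3) / 3 := by
          simp only [← Finset.sum_div, Finset.sum_add_distrib, Finset.sum_const, nsmul_eq_mul,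
            ← Finset.mul_sum]
          ring
      _ ≤ _ := by
          have a1 : 0 ≤ x j ^ 3 := pow_nonneg (hx j) 3
          have a2 : 0 ≤ ∑ k ∈ D j, y k ^ 3 := Finset.sum_nonneg fun k _ => pow_nonneg (hy k) 3
          have a3 : 0 ≤ ∑ k ∈ D j, z k ^ 3 := Finset.sum_nonneg fun k _ => pow_nonneg (hz k) 3
          have := hcard j
          gcongr
  calc _ ≤ ∑ j, (κ ^ 2 * x j ^ 3 + κ * ∑ k ∈ D j, y k ^ 3 + κ * ∑ k ∈ D j, z k ^ 3) / 3 :=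
        Finset.sum_le_sum fun j _ => step j
    _ = (κ ^ 2 * ∑ j, x j ^ 3 + κ * (∑ j, ∑ k ∈ D j, y k ^ 3)
          + κ * ∑ j, ∑ k ∈ D j, z k ^ 3) / 3 := by
        simp only [← Finset.sum_div, Finset.sum_add_distrib, ← Finset.mul_sum]
    _ ≤ (κ ^ 2 * ∑ j, x j ^ 3 + κ * (κ * ∑ k, y k ^ 3)
          + κ * (κ * ∑ k, z k ^ 3)) / 3 := by
        have := swap (fun k => y k ^ 3) fun k => pow_nonneg (hy k) 3
        have := swap (fun k => z k ^ 3) fun k => pow_nonneg (hz k) 3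
        gcongr
    _ = _ := by ring

/-! ### the dependence structure -/

/-- sigma-algebra generated by the variables with index in `S` -/
def FF {Ω ι : Type*} (ξ : ι → Ω → ℝ) (S : Finset ι) : MeasurableSpace Ω :=
  ⨆ k ∈ S, MeasurableSpace.comap (ξ k) inferInstance

/-- sigma-algebra generated by the neighbourhoods of the indices in `S` -/
def GG {Ω ι : Type*} (ξ : ι → Ω → ℝ) (A : ι → Finset ι) (S : Finset ι) : MeasurableSpace Ω :=
  ⨆ l ∈ S, FF ξ (A l)

/-- the standing assumptions -/
structure LD {Ω : Type*} [m0 : MeasurableSpace Ω] (μ : Measure Ω) {ι : Type*} [Fintype ι]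
    [DecidableEq ι] (ξ : ι → Ω → ℝ) (A B Bs Cs Ds : ι → Finset ι) (κ : ℕ) : Prop where
  meas : ∀ j, Measurable (ξ j)
  memA : ∀ j, j ∈ A j
  AB : ∀ j, A j ⊆ B j
  BBs : ∀ j, B j ⊆ Bs j
  BsCs : ∀ j, Bs j ⊆ Cs j
  CsDs : ∀ j, Cs j ⊆ Ds j
  i1 : ∀ j, Indep (FF ξ {j}) (FF ξ (A j)ᶜ) μ
  i2 : ∀ j, Indep (FF ξ (A j)) (FF ξ (B j)ᶜ) μ
  i3 : ∀ j, Indep (FF ξ (A j)) (GG ξ A (Bs j)ᶜ) μ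
  i4 : ∀ j, Indep (GG ξ A (Bs j)) (GG ξ A (Cs j)ᶜ) μ
  i5 : ∀ j, Indep (GG ξ A (Cs j)) (GG ξ A (Ds j)ᶜ) μ
  mean : ∀ j, ∫ ω, ξ j ω ∂μ = 0
  bdd : ∀ j ω, |ξ j ω| ≤ 1 / (4 * (κ : ℝ))
  kpos : 0 < κ
  c1 : ∀ j, (Ds j).card ≤ κ
  c2 : ∀ j, (Finset.univ.filter fun l => j ∈ Ds l).card ≤ κ

section sig
variable {Ω ι : Type*} {ξ : ι → Ω → ℝ} {A : ι → Finset ι}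

lemma FF_mono {S S' : Finset ι} (h : S ⊆ S') : FF ξ S ≤ FF ξ S' :=
  iSup₂_le fun k hk => le_iSup₂ (f := fun k (_ : k ∈ S') => MeasurableSpace.comap (ξ k)
    inferInstance) k (h hk)

lemma FF_le_GG {S : Finset ι} {l : ι} (h : l ∈ S) : FF ξ (A l) ≤ GG ξ A S :=
  le_iSup₂ (f := fun l (_ : l ∈ S) => FF ξ (A l)) l h

lemma GG_mono {S S' : Finset ι} (h : S ⊆ S') : GG ξ A S ≤ GG ξ A S' :=
  iSup₂_le fun _ hk => FF_le_GG (h hk)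

lemma meas_FF {S : Finset ι} {k : ι} (h : k ∈ S) : Measurable[FF ξ S] (ξ k) :=
  measurable_iff_comap_le.2 (le_iSup₂ (f := fun k (_ : k ∈ S) => MeasurableSpace.comap (ξ k)
    inferInstance) k h)

end sig

namespace LD
variable {Ω : Type*} [m0 : MeasurableSpace Ω] {μ : Measure Ω} {ι : Type*} [Fintype ι]
    [DecidableEq ι] {ξ : ι → Ω → ℝ} {A B Bs Cs Ds : ι → Finset ι} {κ : ℕ}

lemma FF_le (H : LD μ ξ A B Bs Cs Ds κ) (S : Finset ι) : FF ξ S ≤ m0 :=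
  iSup₂_le fun k _ => (H.meas k).comap_le

lemma GG_le (H : LD μ ξ A B Bs Cs Ds κ) (S : Finset ι) : GG ξ A S ≤ m0 :=
  iSup₂_le fun l _ => H.FF_le (A l)

lemma FF_GG (H : LD μ ξ A B Bs Cs Ds κ) (S : Finset ι) : FF ξ S ≤ GG ξ A S :=
  iSup₂_le fun k hk => measurable_iff_comap_le.1
    ((meas_FF (H.memA k)).mono (FF_le_GG hk) le_rfl)

lemma bF (H : LD μ ξ A B Bs Cs Ds κ) {S : Finset ι} {k : ι} (h : k ∈ S) : BM (FF ξ S) (ξ k) :=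
  ⟨meas_FF h, _, H.bdd k⟩

lemma bG (H : LD μ ξ A B Bs Cs Ds κ) {S : Finset ι} {k : ι} (h : k ∈ S) : BM (GG ξ A S) (ξ k) :=
  (H.bF h).mono (H.FF_GG S)

lemma b0 (H : LD μ ξ A B Bs Cs Ds κ) (k : ι) : BM m0 (ξ k) := ⟨H.meas k, _, H.bdd k⟩

lemma bFs (H : LD μ ξ A B Bs Cs Ds κ) {S S' : Finset ι} (h : S ⊆ S') :
    BM (FF ξ S') (fun ω => ∑ k ∈ S, ξ k ω) := BM.sum S fun _ hk => H.bF (h hk)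

lemma bGs (H : LD μ ξ A B Bs Cs Ds κ) {S S' : Finset ι} (h : S ⊆ S') :
    BM (GG ξ A S') (fun ω => ∑ k ∈ S, ξ k ω) := BM.sum S fun _ hk => H.bG (h hk)

lemma b0s (H : LD μ ξ A B Bs Cs Ds κ) (S : Finset ι) :
    BM m0 (fun ω => ∑ k ∈ S, ξ k ω) := BM.sum S fun k _ => H.b0 k

/-- local absolute sum -/
def Xi (ξ : ι → Ω → ℝ) (Ds : ι → Finset ι) (j : ι) (ω : Ω) : ℝ := ∑ k ∈ Ds j, |ξ k ω|

lemma Xi_nonneg (j : ι) (ω : Ω) : 0 ≤ Xi ξ Ds j ω := Finset.sum_nonneg fun _ _ => abs_nonneg _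

lemma Xi_le (H : LD μ ξ A B Bs Cs Ds κ) (j : ι) (ω : Ω) : Xi ξ Ds j ω ≤ 1 / 4 := by
  have hk : (0 : ℝ) < κ := by exact_mod_cast H.kpos
  calc Xi ξ Ds j ω ≤ ∑ k ∈ Ds j, 1 / (4 * (κ : ℝ)) := Finset.sum_le_sum fun k _ => H.bdd k ω
    _ = (Ds j).card * (1 / (4 * (κ : ℝ))) := by rw [Finset.sum_const, nsmul_eq_mul]
    _ ≤ κ * (1 / (4 * (κ : ℝ))) := by
        have : ((Ds j).card : ℝ) ≤ κ := by exact_mod_cast H.c1 j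
        gcongr
    _ = 1 / 4 := by field_simp

lemma Xi_b (H : LD μ ξ A B Bs Cs Ds κ) (j : ι) : BM m0 (Xi ξ Ds j) :=
  BM.sum _ fun k _ => (H.b0 k).abs

lemma sum_le_Xi {S : Finset ι} {j : ι} (h : S ⊆ Ds j) (ω : Ω) :
    |∑ k ∈ S, ξ k ω| ≤ Xi ξ Ds j ω :=
  (Finset.abs_sum_le_sum_abs _ _).trans
    (Finset.sum_le_sum_of_subset_of_nonneg h fun _ _ _ => abs_nonneg _)

lemma xi_int_le (H : LD μ ξ A B Bs Cs Ds κ) [IsProbabilityMeasure μ] (j : ι) :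
    ∫ ω, Xi ξ Ds j ω ∂μ ≤ 1 / 4 := by
  rw [← int_c (μ := μ) (1 / 4)]
  exact int_mono (H.Xi_b j) (BM.const _) (H.Xi_le j)

lemma xi_int_nonneg (j : ι) : 0 ≤ ∫ ω, Xi ξ Ds j ω ∂μ := integral_nonneg (Xi_nonneg j)

/-- the third moment quantity `κ² Σ E|ξ|³` -/
noncomputable def tau (μ : Measure Ω) (ξ : ι → Ω → ℝ) (κ : ℕ) : ℝ :=
  (κ : ℝ) ^ 2 * ∑ j, ∫ ω, |ξ j ω| ^ 3 ∂μ

variable [IsProbabilityMeasure μ]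

lemma T1 (H : LD μ ξ A B Bs Cs Ds κ) :
    ∑ j, ∫ ω, |ξ j ω| * (Xi ξ Ds j ω * Xi ξ Ds j ω) ∂μ ≤ tau μ ξ κ := by
  have hb : ∀ j, BM m0 (fun ω => |ξ j ω| * (Xi ξ Ds j ω * Xi ξ Ds j ω)) := fun j =>
    (H.b0 j).abs.mul ((H.Xi_b j).mul (H.Xi_b j))
  rw [← int_sum _ fun j _ => hb j]
  have hc : BM m0 (fun ω => ∑ j, |ξ j ω| ^ 3) := BM.sum _ fun j _ => (H.b0 j).abs.pow 3
  calc _ ≤ ∫ ω, (κ : ℝ) ^ 2 * ∑ j, |ξ j ω| ^ 3 ∂μ := by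
        refine int_mono (BM.sum _ fun j _ => hb j) (hc.cmul _) fun ω => ?_
        refine (triple Ds κ H.c1 H.c2 (fun j => |ξ j ω|) (fun j => |ξ j ω|) (fun j => |ξ j ω|)
          (fun _ => abs_nonneg _) (fun _ => abs_nonneg _) (fun _ => abs_nonneg _)).trans ?_
        apply le_of_eq; ring
    _ = _ := by
        rw [integral_const_mul, int_sum _ fun j _ => (H.b0 j).abs.pow 3, tau]

lemma Exi (H : LD μ ξ A B Bs Cs Ds κ) (j : ι) :
    ∫ ω, Xi ξ Ds j ω ∂μ = ∑ k ∈ Ds j, ∫ ω, |ξ k ω| ∂μ :=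
  int_sum _ fun k _ => (H.b0 k).abs

lemma cubes (H : LD μ ξ A B Bs Cs Ds κ) :
    ∑ j, (∫ ω, |ξ j ω| ∂μ) ^ 3 ≤ ∑ j, ∫ ω, |ξ j ω| ^ 3 ∂μ :=
  Finset.sum_le_sum fun j _ => cube_int_le (H.b0 j).abs fun _ => abs_nonneg _

lemma T2 (H : LD μ ξ A B Bs Cs Ds κ) :
    ∑ j, (∫ ω, |ξ j ω| * Xi ξ Ds j ω ∂μ) * ∫ ω, Xi ξ Ds j ω ∂μ ≤ tau μ ξ κ := by
  have hb : ∀ j, BM m0 (fun ω => |ξ j ω| * (Xi ξ Ds j ω * ∑ k ∈ Ds j, ∫ ω, |ξ k ω| ∂μ)) :=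
    fun j => (H.b0 j).abs.mul ((H.Xi_b j).mul (BM.const _))
  have e : ∀ j, (∫ ω, |ξ j ω| * Xi ξ Ds j ω ∂μ) * ∫ ω, Xi ξ Ds j ω ∂μ
      = ∫ ω, |ξ j ω| * (Xi ξ Ds j ω * ∑ k ∈ Ds j, ∫ ω, |ξ k ω| ∂μ) ∂μ := by
    intro j
    rw [H.Exi, ← integral_mul_const]
    simp only [mul_assoc]
  simp only [e]
  rw [← int_sum _ fun j _ => hb j]
  have hc : BM m0 (fun ω => ∑ j, |ξ j ω| ^ 3) := BM.sum _ fun j _ => (H.b0 j).abs.pow 3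
  calc _ ≤ ∫ ω, ((κ : ℝ) ^ 2 * (2 / 3)) * (∑ j, |ξ j ω| ^ 3)
            + (κ : ℝ) ^ 2 / 3 * ∑ j, (∫ ω, |ξ j ω| ∂μ) ^ 3 ∂μ := by
        refine int_mono (BM.sum _ fun j _ => hb j) ((hc.cmul _).add (BM.const _)) fun ω => ?_
        refine (triple Ds κ H.c1 H.c2 (fun j => |ξ j ω|) (fun j => |ξ j ω|)
          (fun j => ∫ ω, |ξ j ω| ∂μ)
          (fun _ => abs_nonneg _) (fun _ => abs_nonneg _)
          (fun _ => integral_nonneg fun _ => abs_nonneg _)).trans ?_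
        apply le_of_eq; ring
    _ ≤ _ := by
        rw [int_add (hc.cmul _) (BM.const _), integral_const_mul,
          int_sum _ fun j _ => (H.b0 j).abs.pow 3, int_c, tau]
        nlinarith [H.cubes, sq_nonneg (κ : ℝ)]

lemma T3 (H : LD μ ξ A B Bs Cs Ds κ) :
    ∑ j, (∫ ω, |ξ j ω| ∂μ) * ∫ ω, Xi ξ Ds j ω * Xi ξ Ds j ω ∂μ ≤ tau μ ξ κ := by
  have hb : ∀ j, BM m0 (fun ω => (∫ ω, |ξ j ω| ∂μ) * (Xi ξ Ds j ω * Xi ξ Ds j ω)) :=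
    fun j => ((H.Xi_b j).mul (H.Xi_b j)).cmul _
  have e : ∀ j, (∫ ω, |ξ j ω| ∂μ) * ∫ ω, Xi ξ Ds j ω * Xi ξ Ds j ω ∂μ
      = ∫ ω, (∫ ω, |ξ j ω| ∂μ) * (Xi ξ Ds j ω * Xi ξ Ds j ω) ∂μ := by
    intro j
    rw [integral_const_mul]
  simp only [e]
  rw [← int_sum _ fun j _ => hb j]
  have hc : BM m0 (fun ω => ∑ j, |ξ j ω| ^ 3) := BM.sum _ fun j _ => (H.b0 j).abs.pow 3
  calc _ ≤ ∫ ω, ((κ : ℝ) ^ 2 * (2 / 3)) * (∑ j, |ξ j ω| ^ 3)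
            + (κ : ℝ) ^ 2 / 3 * ∑ j, (∫ ω, |ξ j ω| ∂μ) ^ 3 ∂μ := by
        refine int_mono (BM.sum _ fun j _ => hb j) ((hc.cmul _).add (BM.const _)) fun ω => ?_
        refine (triple Ds κ H.c1 H.c2 (fun j => ∫ ω, |ξ j ω| ∂μ) (fun j => |ξ j ω|)
          (fun j => |ξ j ω|)
          (fun _ => integral_nonneg fun _ => abs_nonneg _)
          (fun _ => abs_nonneg _) (fun _ => abs_nonneg _)).trans ?_
        apply le_of_eq; ring
    _ ≤ _ := by
        rw [int_add (hc.cmul _) (BM.const _), integral_const_mul,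
          int_sum _ fun j _ => (H.b0 j).abs.pow 3, int_c, tau]
        nlinarith [H.cubes, sq_nonneg (κ : ℝ)]

end LD
end LDep

open MeasureTheory ProbabilityTheory Real

namespace LDep
namespace LD
variable {Ω : Type*} [m0 : MeasurableSpace Ω] {μ : Measure Ω} {ι : Type*} [Fintype ι]
    [DecidableEq ι] {ξ : ι → Ω → ℝ} {A B Bs Cs Ds : ι → Finset ι} {κ : ℕ}
    [IsProbabilityMeasure μ]

lemma split_sum (S G : Finset ι) (ξ : ι → Ω → ℝ) (ω : Ω) :
    ∑ k ∈ G, ξ k ω = ∑ k ∈ G ∩ S, ξ k ω + ∑ k ∈ G \ S, ξ k ω := by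
  exact (Finset.sum_inter_add_sum_sdiff G S _).symm

lemma split_univ (S : Finset ι) (ξ : ι → Ω → ℝ) (ω : Ω) :
    ∑ k, ξ k ω = ∑ k ∈ S, ξ k ω + ∑ k ∈ Sᶜ, ξ k ω := (Finset.sum_add_sum_compl S _).symm

lemma AD (H : LD μ ξ A B Bs Cs Ds κ) (j : ι) : A j ⊆ Ds j :=
  (H.AB j).trans ((H.BBs j).trans ((H.BsCs j).trans (H.CsDs j)))

lemma BD (H : LD μ ξ A B Bs Cs Ds κ) (j : ι) : B j ⊆ Ds j :=
  (H.BBs j).trans ((H.BsCs j).trans (H.CsDs j))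

lemma BsD (H : LD μ ξ A B Bs Cs Ds κ) (j : ι) : Bs j ⊆ Ds j := (H.BsCs j).trans (H.CsDs j)

lemma second (H : LD μ ξ A B Bs Cs Ds κ) :
    ∑ j, ∫ ω, ξ j ω * ∑ l ∈ A j, ξ l ω ∂μ = ∫ ω, (∑ j, ξ j ω) ^ 2 ∂μ := by
  have e : ∀ j, ∫ ω, ξ j ω * (∑ l ∈ A j, ξ l ω) ∂μ = ∫ ω, ξ j ω * ∑ l, ξ l ω ∂μ := by
    intro j
    have h0 : ∫ ω, ξ j ω * (∑ l ∈ (A j)ᶜ, ξ l ω) ∂μ = 0 := by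
      rw [indep_mul (H.i1 j) (H.FF_le _) (H.FF_le _) (H.bF (Finset.mem_singleton_self j))
        (H.bFs subset_rfl), H.mean, zero_mul]
    have : ∀ ω, ξ j ω * ∑ l, ξ l ω = ξ j ω * (∑ l ∈ A j, ξ l ω) + ξ j ω * ∑ l ∈ (A j)ᶜ, ξ l ω := by
      intro ω; rw [split_univ (A j)]; ring
    simp only [this]
    rw [int_add ((H.b0 j).mul (H.b0s _)) ((H.b0 j).mul (H.b0s _)), h0, add_zero]
  simp only [e]
  rw [← int_sum _ fun j _ => (H.b0 j).mul (H.b0s _)]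
  congr 1; funext ω
  rw [← Finset.sum_mul, sq]

/-- moments of `|T_c|` -/
lemma absmom {f g : Ω → ℝ} (hf : BM m0 f) (hg : BM m0 g) (h : ∀ ω, |f ω - g ω| ≤ 1 / 4)
    (h2 : ∫ ω, f ω ^ 2 ∂μ ≤ 2) : ∫ ω, |g ω| ∂μ ≤ 2 := by
  have : ∫ ω, |g ω| ∂μ ≤ ∫ ω, ((1 / 2) * f ω ^ 2 + 3 / 4) ∂μ := by
    refine int_mono hg.abs (((hf.pow 2).cmul _).add (BM.const _)) fun ω => ?_
    have h1 : |g ω| ≤ |f ω| + 1 / 4 := by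
      have := abs_sub_abs_le_abs_sub (g ω) (f ω)
      rw [abs_sub_comm] at this
      linarith [h ω]
    have h3 := sq_abs (f ω)
    nlinarith [sq_nonneg (|f ω| - 1)]
  rw [int_add ((hf.pow 2).cmul _) (BM.const _), integral_const_mul, int_c] at this
  linarith

lemma fourth_j (H : LD μ ξ A B Bs Cs Ds κ) (h2 : ∫ ω, (∑ j, ξ j ω) ^ 2 ∂μ ≤ 2) (j : ι) :
    ∫ ω, ξ j ω * (∑ l, ξ l ω) ^ 3 ∂μ ≤
      3 * (∫ ω, ξ j ω * ∑ l ∈ A j, ξ l ω ∂μ) * (∫ ω, (∑ l, ξ l ω) ^ 2 ∂μ)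
      + 15 * ((∫ ω, |ξ j ω| * Xi ξ Ds j ω ∂μ) * ∫ ω, Xi ξ Ds j ω ∂μ)
      + 30 * ∫ ω, |ξ j ω| * (Xi ξ Ds j ω * Xi ξ Ds j ω) ∂μ := by
  set T : Ω → ℝ := fun ω => ∑ l, ξ l ω with hT
  set a : Ω → ℝ := fun ω => ∑ l ∈ A j, ξ l ω with ha
  set b : Ω → ℝ := fun ω => ∑ l ∈ B j, ξ l ω with hb
  set c : Ω → ℝ := fun ω => ∑ l ∈ Cs j, ξ l ω with hc
  set Ta : Ω → ℝ := fun ω => ∑ l ∈ (A j)ᶜ, ξ l ω with hTa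
  set Tb : Ω → ℝ := fun ω => ∑ l ∈ (B j)ᶜ, ξ l ω with hTb
  set Tc : Ω → ℝ := fun ω => ∑ l ∈ (Cs j)ᶜ, ξ l ω with hTc
  have eA : ∀ ω, T ω = a ω + Ta ω := fun ω => split_univ _ _ _
  have eB : ∀ ω, T ω = b ω + Tb ω := fun ω => split_univ _ _ _
  have eC : ∀ ω, T ω = c ω + Tc ω := fun ω => split_univ _ _ _
  have bT : BM m0 T := H.b0s _
  have bTa : BM m0 Ta := H.b0s _
  have bTb : BM m0 Tb := H.b0s _
  have bTc : BM m0 Tc := H.b0s _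
  have ba : BM m0 a := H.b0s _
  have bb : BM m0 b := H.b0s _
  have bx : BM m0 (ξ j) := H.b0 j
  have aX : ∀ ω, |a ω| ≤ Xi ξ Ds j ω := fun ω => sum_le_Xi (H.AD j) ω
  have bX : ∀ ω, |b ω| ≤ Xi ξ Ds j ω := fun ω => sum_le_Xi (H.BD j) ω
  have cX : ∀ ω, |c ω| ≤ Xi ξ Ds j ω := fun ω => sum_le_Xi (H.CsDs j) ω
  have X4 := H.Xi_le j
  have mTc : ∫ ω, |Tc ω| ∂μ ≤ 2 := absmom bT bTc (fun ω => by
    rw [eC ω, add_sub_cancel_right]; exact (cX ω).trans (X4 ω)) h2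
  -- pieces
  have p1 : ∫ ω, ξ j ω * Ta ω ^ 3 ∂μ = 0 := by
    rw [indep_mul (H.i1 j) (H.FF_le _) (H.FF_le _) (H.bF (Finset.mem_singleton_self j))
      ((H.bFs subset_rfl).pow 3), H.mean, zero_mul]
  have p2 : ∫ ω, (ξ j ω * a ω) * Tb ω ^ 2 ∂μ = (∫ ω, ξ j ω * a ω ∂μ) * ∫ ω, Tb ω ^ 2 ∂μ :=
    indep_mul (H.i2 j) (H.FF_le _) (H.FF_le _) ((H.bF (H.memA j)).mul (H.bFs subset_rfl))
      ((H.bFs subset_rfl).pow 2)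
  set P : Ω → ℝ := fun ω => |ξ j ω| * (|a ω| * |a ω| + |a ω| * |b ω|) with hP
  have bbB : BM (GG ξ A (Bs j)) b := H.bGs (H.BBs j)
  have baB : BM (GG ξ A (Bs j)) a := H.bGs ((H.AB j).trans (H.BBs j))
  have bxB : BM (GG ξ A (Bs j)) (ξ j) := H.bG (H.BBs j (H.AB j (H.memA j)))
  have bPB : BM (GG ξ A (Bs j)) P :=
    bxB.abs.mul ((baB.abs.mul baB.abs).add (baB.abs.mul bbB.abs))
  have bP : BM m0 P := bPB.mono (H.GG_le _)
  have bTcC : BM (GG ξ A (Cs j)ᶜ) Tc := H.bGs subset_rfl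
  have p3 : ∫ ω, P ω * (6 * |Tc ω| + 3) ∂μ ≤ 15 * ∫ ω, P ω ∂μ := by
    rw [indep_mul (H.i4 j) (H.GG_le _) (H.GG_le _) bPB ((bTcC.abs.cmul _).add (BM.const _)),
      int_add (bTc.abs.cmul _) (BM.const _), integral_const_mul, int_c]
    have : 0 ≤ ∫ ω, P ω ∂μ := integral_nonneg fun ω => by positivity
    nlinarith
  have p4 : ∫ ω, P ω ∂μ ≤ 2 * ∫ ω, |ξ j ω| * (Xi ξ Ds j ω * Xi ξ Ds j ω) ∂μ := by
    rw [← integral_const_mul]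
    refine int_mono bP ((bx.abs.mul ((H.Xi_b j).mul (H.Xi_b j))).cmul 2) fun ω => ?_
    have h1 : |a ω| * |a ω| ≤ Xi ξ Ds j ω * Xi ξ Ds j ω :=
      mul_le_mul (aX ω) (aX ω) (abs_nonneg _) (Xi_nonneg j ω)
    have h2 : |a ω| * |b ω| ≤ Xi ξ Ds j ω * Xi ξ Ds j ω :=
      mul_le_mul (aX ω) (bX ω) (abs_nonneg _) (Xi_nonneg j ω)
    simp only [hP]
    nlinarith [abs_nonneg (ξ j ω)]
  have p5 : |∫ ω, Tb ω ^ 2 ∂μ - ∫ ω, T ω ^ 2 ∂μ| ≤ 5 * ∫ ω, |b ω| ∂μ := by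
    rw [← int_sub (bTb.pow 2) (bT.pow 2)]
    calc _ ≤ ∫ ω, |b ω| * (2 * |Tc ω| + 1) ∂μ := by
          refine int_abs_le ((bTb.pow 2).sub (bT.pow 2)) (bb.abs.mul ((bTc.abs.cmul _).add
            (BM.const _))) fun ω => ?_
          have e : Tb ω ^ 2 - T ω ^ 2 = - (b ω * (2 * Tc ω + 2 * c ω - b ω)) := by
            have h1 := eB ω
            have h2 := eC ω
            have h3 : Tb ω = Tc ω + c ω - b ω := by linarith
            rw [h3, h2]; ring
          rw [e, abs_neg, abs_mul]
          refine mul_le_mul_of_nonneg_left ?_ (abs_nonneg _)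
          have h1 := abs_le.1 ((cX ω).trans (X4 ω))
          have h2 := abs_le.1 ((bX ω).trans (X4 ω))
          rw [abs_le]
          have h3 := neg_abs_le (Tc ω)
          have h4 := le_abs_self (Tc ω)
          constructor <;> linarith [h1.1, h1.2, h2.1, h2.2]
      _ ≤ _ := by
          rw [indep_mul (H.i4 j) (H.GG_le _) (H.GG_le _) bbB.abs
            ((bTcC.abs.cmul _).add (BM.const _)),
            int_add (bTc.abs.cmul _) (BM.const _), integral_const_mul, int_c]
          have : 0 ≤ ∫ ω, |b ω| ∂μ := integral_nonneg fun ω => abs_nonneg _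
          nlinarith
  have p6 : |∫ ω, ξ j ω * a ω ∂μ| ≤ ∫ ω, |ξ j ω| * Xi ξ Ds j ω ∂μ := by
    refine int_abs_le (bx.mul ba) (bx.abs.mul (H.Xi_b j)) fun ω => ?_
    rw [abs_mul]
    exact mul_le_mul_of_nonneg_left (aX ω) (abs_nonneg _)
  have p7 : ∫ ω, |b ω| ∂μ ≤ ∫ ω, Xi ξ Ds j ω ∂μ := int_mono bb.abs (H.Xi_b j) bX
  -- main
  have main : ∫ ω, ξ j ω * T ω ^ 3 ∂μ ≤
      ∫ ω, ((ξ j ω * Ta ω ^ 3 + 3 * ((ξ j ω * a ω) * Tb ω ^ 2)) + P ω * (6 * |Tc ω| + 3)) ∂μ := by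
    refine int_mono (bx.mul (bT.pow 3)) (((bx.mul (bTa.pow 3)).add
      (((bx.mul ba).mul (bTb.pow 2)).cmul 3)).add (bP.mul ((bTc.abs.cmul _).add (BM.const _))))
      fun ω => ?_
    have h1 := (aX ω).trans (X4 ω)
    have h2 := (bX ω).trans (X4 ω)
    have h3 := (cX ω).trans (X4 ω)
    have e : ξ j ω * T ω ^ 3 - (ξ j ω * Ta ω ^ 3 + 3 * ((ξ j ω * a ω) * Tb ω ^ 2))
        = ξ j ω * (-3 * T ω * (a ω * a ω) + (a ω * a ω) * a ω + 6 * T ω * (a ω * b ω)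
          - 3 * (a ω * b ω) * b ω) := by
      have e1 : Ta ω = T ω - a ω := by linarith [eA ω]
      have e2 : Tb ω = T ω - b ω := by linarith [eB ω]
      rw [e1, e2]; ring
    have hTT : |T ω| ≤ |Tc ω| + 1 / 4 := by
      rw [eC ω]; exact (abs_add_le _ _).trans (by linarith)
    have bd : |-3 * T ω * (a ω * a ω) + (a ω * a ω) * a ω + 6 * T ω * (a ω * b ω)
          - 3 * (a ω * b ω) * b ω| ≤ (|a ω| * |a ω| + |a ω| * |b ω|) * (6 * |Tc ω| + 3) := by
      calc _ ≤ |-3 * T ω * (a ω * a ω)| + |(a ω * a ω) * a ω| + |6 * T ω * (a ω * b ω)|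
            + |3 * (a ω * b ω) * b ω| := by
            refine (abs_sub _ _).trans ?_
            gcongr
            refine (abs_add_le _ _).trans ?_
            gcongr
            exact abs_add_le _ _
        _ = 3 * |T ω| * (|a ω| * |a ω|) + (|a ω| * |a ω|) * |a ω| + 6 * |T ω| * (|a ω| * |b ω|)
            + 3 * (|a ω| * |b ω|) * |b ω| := by simp [abs_mul]
        _ ≤ _ := by
            have q1 : 0 ≤ |a ω| * |a ω| := by positivity
            have q2 : 0 ≤ |a ω| * |b ω| := by positivity
            have r1 := mul_le_mul_of_nonneg_left hTT q1
            have r2 := mul_le_mul_of_nonneg_left hTT q2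
            have r3 := mul_le_mul_of_nonneg_left h1 q1
            have r4 := mul_le_mul_of_nonneg_left h2 q2
            have r5 := mul_nonneg q1 (abs_nonneg (Tc ω))
            nlinarith
    have : ξ j ω * T ω ^ 3 - (ξ j ω * Ta ω ^ 3 + 3 * ((ξ j ω * a ω) * Tb ω ^ 2))
        ≤ P ω * (6 * |Tc ω| + 3) := by
      rw [e]
      refine (le_abs_self _).trans ?_
      rw [abs_mul]
      simp only [hP]
      rw [mul_assoc |ξ j ω|]
      exact mul_le_mul_of_nonneg_left bd (abs_nonneg _)
    linarith
  rw [int_add ((bx.mul (bTa.pow 3)).add (((bx.mul ba).mul (bTb.pow 2)).cmul 3))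
      (bP.mul ((bTc.abs.cmul _).add (BM.const _))),
    int_add (bx.mul (bTa.pow 3)) (((bx.mul ba).mul (bTb.pow 2)).cmul 3), integral_const_mul,
    p1, p2] at main
  have p8 : (∫ ω, ξ j ω * a ω ∂μ) * (∫ ω, Tb ω ^ 2 ∂μ - ∫ ω, T ω ^ 2 ∂μ)
      ≤ (∫ ω, |ξ j ω| * Xi ξ Ds j ω ∂μ) * (5 * ∫ ω, Xi ξ Ds j ω ∂μ) := by
    refine (le_abs_self _).trans ?_
    rw [abs_mul]
    refine mul_le_mul p6 (p5.trans (by linarith)) (abs_nonneg _)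
      (integral_nonneg fun ω => mul_nonneg (abs_nonneg _) (Xi_nonneg j ω))
  nlinarith

lemma fourth (H : LD μ ξ A B Bs Cs Ds κ) (h2 : ∫ ω, (∑ j, ξ j ω) ^ 2 ∂μ ≤ 2) :
    ∫ ω, (∑ l, ξ l ω) ^ 4 ∂μ ≤ 12 + 45 * tau μ ξ κ := by
  have e : ∫ ω, (∑ l, ξ l ω) ^ 4 ∂μ = ∑ j, ∫ ω, ξ j ω * (∑ l, ξ l ω) ^ 3 ∂μ := by
    rw [← int_sum _ fun j _ => (H.b0 j).mul ((H.b0s _).pow 3)]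
    congr 1; funext ω
    rw [← Finset.sum_mul]; ring
  rw [e]
  have h := Finset.sum_le_sum fun j (_ : j ∈ Finset.univ) => H.fourth_j h2 j
  refine h.trans ?_
  rw [Finset.sum_add_distrib, Finset.sum_add_distrib, ← Finset.sum_mul, ← Finset.mul_sum,
    ← Finset.mul_sum, ← Finset.mul_sum, H.second]
  have := H.T1
  have := H.T2
  have h0 : 0 ≤ ∫ ω, (∑ j, ξ j ω) ^ 2 ∂μ := integral_nonneg fun ω => sq_nonneg _
  nlinarith

end LD
end LDep

open MeasureTheory ProbabilityTheory Real

namespace LDep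

/-- derivative of the absolute cube -/
def dcube (z : ℝ) : ℝ := 3 * (z * |z|)

lemma hasDerivAt_cube (x : ℝ) : HasDerivAt (fun y : ℝ => |y| ^ 3) (dcube x) x := by
  have h := hasDerivAt_abs_rpow x (p := 3) (by norm_num)
  have e : (fun y : ℝ => |y| ^ (3 : ℝ)) = fun y : ℝ => |y| ^ 3 := by
    funext y; exact_mod_cast Real.rpow_natCast |y| 3
  rw [e] at h
  convert h using 1
  have : (3 : ℝ) - 2 = 1 := by norm_num
  rw [this, Real.rpow_one, dcube]; ring

lemma dcube_sub (c z : ℝ) : |dcube c - dcube z| ≤ 3 * |c - z| * (2 * |z| + |c - z|) := by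
  have e : dcube c - dcube z = 3 * ((c - z) * |c| + z * (|c| - |z|)) := by unfold dcube; ring
  rw [e, abs_mul, mul_assoc, abs_of_pos (by norm_num : (0 : ℝ) < 3)]
  refine mul_le_mul_of_nonneg_left ?_ (by norm_num)
  have h1 := abs_add_le ((c - z) * |c|) (z * (|c| - |z|))
  rw [abs_mul, abs_mul, abs_abs] at h1
  have h2 := abs_abs_sub_abs_le c z
  have h3 : |c| ≤ |z| + |c - z| := by linarith [abs_sub_abs_le_abs_sub c z]
  nlinarith [abs_nonneg z, abs_nonneg (c - z), mul_le_mul_of_nonneg_left h2 (abs_nonneg z),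
    mul_le_mul_of_nonneg_left h3 (abs_nonneg (c - z))]

lemma cube_taylor (x y z r : ℝ) (hx : |x - z| ≤ r) (hy : |y - z| ≤ r) :
    |(|x| ^ 3 - |y| ^ 3 - (x - y) * dcube z)| ≤ |x - y| * (3 * r * (2 * |z| + r)) := by
  have hr : 0 ≤ r := (abs_nonneg _).trans hx
  have h := (convex_closedBall z r).norm_image_sub_le_of_norm_hasDerivWithin_le
    (f := fun c : ℝ => |c| ^ 3 - c * dcube z) (f' := fun c => dcube c - 1 * dcube z)
    (C := 3 * r * (2 * |z| + r)) (x := y) (y := x)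
    (fun c _ => ((hasDerivAt_cube c).sub ((hasDerivAt_id c).mul_const _)).hasDerivWithinAt)
    (fun c hc => by
      have hc' : |c - z| ≤ r := by simpa [Real.dist_eq] using hc
      rw [one_mul, Real.norm_eq_abs]
      refine (dcube_sub c z).trans ?_
      refine mul_le_mul (by linarith) (by linarith) (by positivity) (by positivity))
    (by simpa [Real.dist_eq] using hy) (by simpa [Real.dist_eq] using hx)
  simp only [Real.norm_eq_abs] at h
  have e : |x| ^ 3 - |y| ^ 3 - (x - y) * dcube z
      = (|x| ^ 3 - x * dcube z) - (|y| ^ 3 - y * dcube z) := by ring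
  rw [e, mul_comm |x - y|]
  exact h

lemma BM.dcube {Ω : Type*} {m : MeasurableSpace Ω} {f : Ω → ℝ} (hf : BM m f) :
    BM m (fun ω => dcube (f ω)) := (hf.mul hf.abs).cmul 3

lemma abs_dcube (x : ℝ) : |dcube x| = 3 * x ^ 2 := by
  unfold dcube
  rw [abs_mul, abs_mul, abs_abs, abs_mul_abs_self, abs_of_pos (by norm_num : (0 : ℝ) < 3)]; ring

namespace LD
variable {Ω : Type*} [m0 : MeasurableSpace Ω] {μ : Measure Ω} {ι : Type*} [Fintype ι]
    [DecidableEq ι] {ξ : ι → Ω → ℝ} {A B Bs Cs Ds : ι → Finset ι} {κ : ℕ}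
    [IsProbabilityMeasure μ]

/-- the family `Y` of centred local variables -/
structure Loc (μ : Measure Ω) (ξ : ι → Ω → ℝ) (A : ι → Finset ι) (Y : ι → Ω → ℝ) : Prop where
  bF : ∀ j, BM (FF ξ (A j)) (Y j)
  mean : ∀ j, ∫ ω, Y j ω ∂μ = 0
  le : ∀ j ω, |Y j ω| ≤ |ξ j ω| + ∫ ω, |ξ j ω| ∂μ

variable {Y : ι → Ω → ℝ}

/-- second order local quantity -/
noncomputable def qq (μ : Measure Ω) (ξ : ι → Ω → ℝ) (Ds : ι → Finset ι) (Y : ι → Ω → ℝ) (j : ι) :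
    ℝ := ∫ ω, |Y j ω| * (Xi ξ Ds j ω + ∫ ω, Xi ξ Ds j ω ∂μ) ∂μ

lemma Yb0 (H : LD μ ξ A B Bs Cs Ds κ) (hY : Loc μ ξ A Y) (j : ι) : BM m0 (Y j) :=
  (hY.bF j).mono (H.FF_le _)

lemma YbG (hY : Loc μ ξ A Y) {S : Finset ι} {j : ι} (h : j ∈ S) :
    BM (GG ξ A S) (Y j) := (hY.bF j).mono (FF_le_GG h)

lemma YbGs (hY : Loc μ ξ A Y) {S S' : Finset ι} (h : S ⊆ S') :
    BM (GG ξ A S') (fun ω => ∑ k ∈ S, Y k ω) := BM.sum _ fun _ hk => YbG hY (h hk)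

lemma Yb0s (H : LD μ ξ A B Bs Cs Ds κ) (hY : Loc μ ξ A Y) (S : Finset ι) :
    BM m0 (fun ω => ∑ k ∈ S, Y k ω) := BM.sum _ fun k _ => H.Yb0 hY k

lemma Yloc (H : LD μ ξ A B Bs Cs Ds κ) (hY : Loc μ ξ A Y) {S : Finset ι} {j : ι} (h : S ⊆ Ds j)
    (ω : Ω) : |∑ k ∈ S, Y k ω| ≤ Xi ξ Ds j ω + ∫ ω, Xi ξ Ds j ω ∂μ := by
  rw [H.Exi, Xi, ← Finset.sum_add_distrib]
  calc _ ≤ ∑ k ∈ S, |Y k ω| := Finset.abs_sum_le_sum_abs _ _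
    _ ≤ ∑ k ∈ Ds j, |Y k ω| :=
        Finset.sum_le_sum_of_subset_of_nonneg h fun _ _ _ => abs_nonneg _
    _ ≤ _ := Finset.sum_le_sum fun k _ => hY.le k ω

lemma Yloc' (H : LD μ ξ A B Bs Cs Ds κ) (hY : Loc μ ξ A Y) {S : Finset ι} {j : ι} (h : S ⊆ Ds j)
    (ω : Ω) : |∑ k ∈ S, Y k ω| ≤ 1 / 2 :=
  (H.Yloc hY h ω).trans (by linarith [H.Xi_le j ω, H.xi_int_le j])

lemma qq_nonneg (j : ι) : 0 ≤ qq μ ξ Ds Y j := integral_nonneg fun ω =>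
  mul_nonneg (abs_nonneg _) (add_nonneg (Xi_nonneg j ω) (xi_int_nonneg j))

lemma YS2 (H : LD μ ξ A B Bs Cs Ds κ) (hY : Loc μ ξ A Y) (G : Finset ι) :
    ∫ ω, (∑ k ∈ G, Y k ω) ^ 2 ∂μ ≤ ∑ j, qq μ ξ Ds Y j := by
  have e : ∀ ω, (∑ k ∈ G, Y k ω) ^ 2 = ∑ j ∈ G, Y j ω * ∑ k ∈ G, Y k ω := by
    intro ω; rw [← Finset.sum_mul, sq]
  simp only [e]
  rw [int_sum _ fun j _ => (H.Yb0 hY j).mul (H.Yb0s hY G)]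
  refine (Finset.sum_le_sum fun j _ => ?_).trans
    (Finset.sum_le_sum_of_subset_of_nonneg (Finset.subset_univ G) fun j _ _ => qq_nonneg j)
  have h0 : ∫ ω, Y j ω * (∑ k ∈ G \ Bs j, Y k ω) ∂μ = 0 := by
    rw [indep_mul (H.i3 j) (H.FF_le _) (H.GG_le _) (hY.bF j) (YbGs hY (fun k hk => by
      simp at hk ⊢; exact hk.2)), hY.mean, zero_mul]
  have e2 : ∀ ω, Y j ω * ∑ k ∈ G, Y k ω
      = Y j ω * (∑ k ∈ G ∩ Bs j, Y k ω) + Y j ω * ∑ k ∈ G \ Bs j, Y k ω := by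
    intro ω; rw [split_sum (Bs j)]; ring
  simp only [e2]
  rw [int_add ((H.Yb0 hY j).mul (H.Yb0s hY _)) ((H.Yb0 hY j).mul (H.Yb0s hY _)), h0, add_zero]
  refine int_mono ((H.Yb0 hY j).mul (H.Yb0s hY _)) ((H.Yb0 hY j).abs.mul ((H.Xi_b j).add
    (BM.const _))) fun ω => ?_
  refine (le_abs_self _).trans ?_
  rw [abs_mul]
  exact mul_le_mul_of_nonneg_left (H.Yloc hY (Finset.inter_subset_right.trans (H.BsD j)) ω)
    (abs_nonneg _)

/-- third order local quantity -/
noncomputable def rr (μ : Measure Ω) (ξ : ι → Ω → ℝ) (Ds : ι → Finset ι) (Y : ι → Ω → ℝ) (j : ι) :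
    ℝ := ∫ ω, |Y j ω| * (Xi ξ Ds j ω * (Xi ξ Ds j ω + ∫ ω, Xi ξ Ds j ω ∂μ)) ∂μ

lemma rr_nonneg (j : ι) : 0 ≤ rr μ ξ Ds Y j := integral_nonneg fun ω =>
  mul_nonneg (abs_nonneg _) (mul_nonneg (Xi_nonneg j ω)
    (add_nonneg (Xi_nonneg j ω) (xi_int_nonneg j)))

lemma rr_sum (H : LD μ ξ A B Bs Cs Ds κ) (hY : Loc μ ξ A Y) :
    ∑ j, rr μ ξ Ds Y j ≤ 4 * tau μ ξ κ := by
  have h : ∀ j, rr μ ξ Ds Y j ≤ ∫ ω, |ξ j ω| * (Xi ξ Ds j ω * Xi ξ Ds j ω) ∂μ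
      + (∫ ω, |ξ j ω| * Xi ξ Ds j ω ∂μ) * (∫ ω, Xi ξ Ds j ω ∂μ)
      + 2 * ((∫ ω, |ξ j ω| ∂μ) * ∫ ω, Xi ξ Ds j ω * Xi ξ Ds j ω ∂μ) := by
    intro j
    set e := ∫ ω, Xi ξ Ds j ω ∂μ with he
    have he0 : 0 ≤ e := xi_int_nonneg j
    set c := ∫ ω, |ξ j ω| ∂μ with hc
    have hc0 : 0 ≤ c := integral_nonneg fun _ => abs_nonneg _
    have bX := H.Xi_b j
    have bx := (H.b0 j).abs
    calc rr μ ξ Ds Y j ≤ ∫ ω, ((|ξ j ω| * (Xi ξ Ds j ω * Xi ξ Ds j ω)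
          + e * (|ξ j ω| * Xi ξ Ds j ω)) + (c * (Xi ξ Ds j ω * Xi ξ Ds j ω)
          + (c * e) * Xi ξ Ds j ω)) ∂μ := by
          refine int_mono ((H.Yb0 hY j).abs.mul (bX.mul (bX.add (BM.const _))))
            (((bx.mul (bX.mul bX)).add ((bx.mul bX).cmul _)).add (((bX.mul bX).cmul _).add
              (bX.cmul _))) fun ω => ?_
          refine (mul_le_mul_of_nonneg_right (hY.le j ω) (mul_nonneg (Xi_nonneg j ω)
            (add_nonneg (Xi_nonneg j ω) he0))).trans (le_of_eq ?_)
          ring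
      _ = ∫ ω, |ξ j ω| * (Xi ξ Ds j ω * Xi ξ Ds j ω) ∂μ
          + e * (∫ ω, |ξ j ω| * Xi ξ Ds j ω ∂μ) + (c * (∫ ω, Xi ξ Ds j ω * Xi ξ Ds j ω ∂μ)
          + (c * e) * e) := by
          rw [int_add ((bx.mul (bX.mul bX)).add ((bx.mul bX).cmul _)) (((bX.mul bX).cmul _).add
              (bX.cmul _)), int_add (bx.mul (bX.mul bX)) ((bx.mul bX).cmul _),
              int_add ((bX.mul bX).cmul _) (bX.cmul _), integral_const_mul, integral_const_mul,
              integral_const_mul]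
      _ ≤ _ := by
          have := sq_int_le (μ := μ) bX
          simp only [pow_two] at this
          nlinarith [mul_le_mul_of_nonneg_left this hc0]
  refine (Finset.sum_le_sum fun j _ => h j).trans ?_
  rw [Finset.sum_add_distrib, Finset.sum_add_distrib, ← Finset.mul_sum]
  linarith [H.T1, H.T2, H.T3]

set_option maxHeartbeats 4000000 in
lemma weighted_j (H : LD μ ξ A B Bs Cs Ds κ) (hY : Loc μ ξ A Y) (G : Finset ι)
    (h4 : ∫ ω, (∑ k ∈ G, ξ k ω) ^ 4 ∂μ ≤ 500) (j : ι) :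
    ∫ ω, Y j ω * (∑ k ∈ G, Y k ω) * |∑ k ∈ G, ξ k ω| ^ 3 ∂μ ≤
      (∫ ω, Y j ω * (∑ k ∈ G, ξ k ω) ∂μ) * (∫ ω, (∑ k ∈ G, Y k ω) * dcube (∑ k ∈ G, ξ k ω) ∂μ)
      + 12000 * qq μ ξ Ds Y j + 18 * (∑ j, qq μ ξ Ds Y j) * rr μ ξ Ds Y j := by
  set W : Ω → ℝ := fun ω => ∑ k ∈ G, ξ k ω with hW
  set S : Ω → ℝ := fun ω => ∑ k ∈ G, Y k ω with hS
  set u : Ω → ℝ := fun ω => ∑ k ∈ G ∩ Bs j, ξ k ω with hu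
  set v : Ω → ℝ := fun ω => ∑ k ∈ G ∩ Cs j, ξ k ω with hv
  set w : Ω → ℝ := fun ω => ∑ k ∈ (G \ Cs j) ∩ Ds j, ξ k ω with hw
  set WB : Ω → ℝ := fun ω => ∑ k ∈ G \ Bs j, ξ k ω with hWB
  set WC : Ω → ℝ := fun ω => ∑ k ∈ G \ Cs j, ξ k ω with hWC
  set WD : Ω → ℝ := fun ω => ∑ k ∈ (G \ Cs j) \ Ds j, ξ k ω with hWD
  set SC : Ω → ℝ := fun ω => ∑ k ∈ G ∩ Cs j, Y k ω with hSC
  set SCc : Ω → ℝ := fun ω => ∑ k ∈ G \ Cs j, Y k ω with hSCc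
  set s : Ω → ℝ := fun ω => ∑ k ∈ (G \ Cs j) ∩ Ds j, Y k ω with hs
  set SDc : Ω → ℝ := fun ω => ∑ k ∈ (G \ Cs j) \ Ds j, Y k ω with hSDc
  set Q := ∑ j, qq μ ξ Ds Y j with hQ
  set e := ∫ ω, Xi ξ Ds j ω ∂μ with he
  have he0 : 0 ≤ e := xi_int_nonneg j
  have he4 : e ≤ 1 / 4 := H.xi_int_le j
  have eB : ∀ ω, W ω = u ω + WB ω := fun ω => split_sum _ _ _ _
  have eC : ∀ ω, W ω = v ω + WC ω := fun ω => split_sum _ _ _ _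
  have eD : ∀ ω, WC ω = w ω + WD ω := fun ω => split_sum _ _ _ _
  have sC : ∀ ω, S ω = SC ω + SCc ω := fun ω => split_sum _ _ _ _
  have sD : ∀ ω, SCc ω = s ω + SDc ω := fun ω => split_sum _ _ _ _
  have bW : BM m0 W := H.b0s _
  have bu : BM m0 u := H.b0s _
  have bv : BM m0 v := H.b0s _
  have bWB : BM m0 WB := H.b0s _
  have bWC : BM m0 WC := H.b0s _
  have bWD : BM m0 WD := H.b0s _
  have bS : BM m0 S := H.Yb0s hY _
  have bSC : BM m0 SC := H.Yb0s hY _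
  have bSCc : BM m0 SCc := H.Yb0s hY _
  have bSDc : BM m0 SDc := H.Yb0s hY _
  have bY : BM m0 (Y j) := H.Yb0 hY j
  have bX := H.Xi_b j
  have inB : j ∈ Bs j := H.BBs j (H.AB j (H.memA j))
  have inC : j ∈ Cs j := H.BsCs j inB
  have bYB : BM (GG ξ A (Bs j)) (Y j) := YbG hY inB
  have bYC : BM (GG ξ A (Cs j)) (Y j) := YbG hY inC
  have buB : BM (GG ξ A (Bs j)) u := H.bGs Finset.inter_subset_right
  have buC : BM (GG ξ A (Cs j)) u := H.bGs (Finset.inter_subset_right.trans (H.BsCs j))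
  have bvC : BM (GG ξ A (Cs j)) v := H.bGs Finset.inter_subset_right
  have bSCC : BM (GG ξ A (Cs j)) SC := YbGs hY Finset.inter_subset_right
  have subB : G \ Bs j ⊆ (Bs j)ᶜ := fun k hk => by simp at hk ⊢; exact hk.2
  have subC : G \ Cs j ⊆ (Cs j)ᶜ := fun k hk => by simp at hk ⊢; exact hk.2
  have subCB : G \ Cs j ⊆ (Bs j)ᶜ := fun k hk => by
    simp at hk ⊢; exact fun h => hk.2 (H.BsCs j h)
  have subD : (G \ Cs j) \ Ds j ⊆ (Ds j)ᶜ := fun k hk => by simp at hk ⊢; exact hk.2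
  have bWBB : BM (GG ξ A (Bs j)ᶜ) WB := H.bGs subB
  have bSCcB : BM (GG ξ A (Bs j)ᶜ) SCc := YbGs hY subCB
  have bWCC : BM (GG ξ A (Cs j)ᶜ) WC := H.bGs subC
  have bSCcC : BM (GG ξ A (Cs j)ᶜ) SCc := YbGs hY subC
  have bWDD : BM (GG ξ A (Ds j)ᶜ) WD := H.bGs subD
  have bSDcD : BM (GG ξ A (Ds j)ᶜ) SDc := YbGs hY subD
  have uX : ∀ ω, |u ω| ≤ Xi ξ Ds j ω := fun ω =>
    sum_le_Xi (Finset.inter_subset_right.trans (H.BsD j)) ω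
  have vX : ∀ ω, |v ω| ≤ Xi ξ Ds j ω := fun ω =>
    sum_le_Xi (Finset.inter_subset_right.trans (H.CsDs j)) ω
  have wX : ∀ ω, |w ω| ≤ Xi ξ Ds j ω := fun ω => sum_le_Xi Finset.inter_subset_right ω
  have X4 := H.Xi_le j
  have SC1 : ∀ ω, |SC ω| ≤ Xi ξ Ds j ω + e := fun ω =>
    H.Yloc hY (Finset.inter_subset_right.trans (H.CsDs j)) ω
  have SC2 : ∀ ω, |SC ω| ≤ 1 / 2 := fun ω =>
    H.Yloc' hY (Finset.inter_subset_right.trans (H.CsDs j)) ω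
  have s2 : ∀ ω, |s ω| ≤ 1 / 2 := fun ω => H.Yloc' hY Finset.inter_subset_right ω
  have aSCc : ∀ ω, |SCc ω| ≤ |SDc ω| + 1 / 2 := fun ω => by
    rw [sD]; exact (abs_add_le _ _).trans (by linarith [s2 ω])
  have aWC : ∀ ω, |WC ω| ≤ |WD ω| + 1 / 4 := fun ω => by
    rw [eD]; exact (abs_add_le _ _).trans (by linarith [wX ω, X4 ω])
  have aW : ∀ ω, |W ω| ≤ |WD ω| + 1 / 2 := fun ω => by
    rw [eC]; exact (abs_add_le _ _).trans (by linarith [vX ω, X4 ω, aWC ω])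
  have aWD : ∀ ω, |WD ω| ≤ |W ω| + 1 / 2 := fun ω => by
    have : WD ω = W ω + (-(v ω) + -(w ω)) := by rw [eC, eD]; ring
    rw [this]
    refine (abs_add_le _ _).trans ?_
    have := abs_add_le (-(v ω)) (-(w ω))
    rw [abs_neg, abs_neg] at this
    linarith [vX ω, X4 ω, wX ω]
  -- moments
  have mW2 : ∫ ω, W ω ^ 2 ∂μ ≤ 251 := by
    have : ∫ ω, W ω ^ 2 ∂μ ≤ ∫ ω, ((1 / 2) * W ω ^ 4 + 1 / 2) ∂μ := by
      refine int_mono (bW.pow 2) (((bW.pow 4).cmul _).add (BM.const _)) fun ω => ?_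
      nlinarith [sq_nonneg (W ω ^ 2 - 1)]
    rw [int_add ((bW.pow 4).cmul _) (BM.const _), integral_const_mul, int_c] at this
    linarith
  have mWD2 : ∫ ω, WD ω ^ 2 ∂μ ≤ 503 := by
    have : ∫ ω, WD ω ^ 2 ∂μ ≤ ∫ ω, (2 * W ω ^ 2 + 1 / 2) ∂μ := by
      refine int_mono (bWD.pow 2) (((bW.pow 2).cmul _).add (BM.const _)) fun ω => ?_
      have := aWD ω
      rw [← sq_abs (WD ω), ← sq_abs (W ω)]
      nlinarith [abs_nonneg (WD ω), abs_nonneg (W ω), sq_nonneg (|W ω| - 1 / 2)]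
    rw [int_add ((bW.pow 2).cmul _) (BM.const _), integral_const_mul, int_c] at this
    linarith
  have mWD3 : ∫ ω, |WD ω| ^ 3 ∂μ ≤ 2005 := by
    have : ∫ ω, |WD ω| ^ 3 ∂μ ≤ ∫ ω, (4 * W ω ^ 4 + 5) ∂μ := by
      refine int_mono (bWD.abs.pow 3) (((bW.pow 4).cmul _).add (BM.const _)) fun ω => ?_
      have h1 : |WD ω| ^ 3 ≤ (|W ω| + 1 / 2) ^ 3 := by
        have := aWD ω; have := abs_nonneg (WD ω); gcongr
      have h2 : W ω ^ 4 = |W ω| ^ 4 := by rw [← abs_pow]; exact (abs_of_nonneg (by positivity)).symm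
      rw [h2]
      have h0 := abs_nonneg (W ω)
      set x := |W ω|
      nlinarith [sq_nonneg (x ^ 2 - 1), sq_nonneg (x - 1), mul_nonneg h0 (sq_nonneg (x - 1)),
        mul_nonneg h0 (sq_nonneg (x - 1 / 2))]
    rw [int_add ((bW.pow 4).cmul _) (BM.const _), integral_const_mul, int_c] at this
    linarith
  have mS : ∫ ω, SDc ω ^ 2 ∂μ ≤ Q := H.YS2 hY _
  have hQ0 : 0 ≤ Q := Finset.sum_nonneg fun j _ => qq_nonneg j
  have bprod : BM (GG ξ A (Ds j)ᶜ) (fun ω => (|SDc ω| + 1 / 2) * (2 * |WD ω| + 1)) :=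
    (bSDcD.abs.add (BM.const _)).mul ((bWDD.abs.cmul _).add (BM.const _))
  have mprod : ∫ ω, (|SDc ω| + 1 / 2) * (2 * |WD ω| + 1) ∂μ ≤ 2 * Q + 1007 := by
    have : ∫ ω, (|SDc ω| + 1 / 2) * (2 * |WD ω| + 1) ∂μ
        ≤ ∫ ω, ((2 * SDc ω ^ 2 + 2 * WD ω ^ 2) + 1) ∂μ := by
      refine int_mono (bprod.mono (H.GG_le _)) ((((bSDc.pow 2).cmul _).add
        ((bWD.pow 2).cmul _)).add (BM.const _)) fun ω => ?_
      rw [← sq_abs (SDc ω), ← sq_abs (WD ω)]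
      nlinarith [sq_nonneg (|SDc ω| - |WD ω|), sq_nonneg (|SDc ω| - 1 / 2),
        sq_nonneg (|WD ω| - 1 / 2)]
    rw [int_add (((bSDc.pow 2).cmul _).add ((bWD.pow 2).cmul _)) (BM.const _),
      int_add ((bSDc.pow 2).cmul _) ((bWD.pow 2).cmul _), integral_const_mul, integral_const_mul,
      int_c] at this
    linarith
  -- local quantities
  set y1 := ∫ ω, |Y j ω| * Xi ξ Ds j ω ∂μ with hy1
  have y10 : 0 ≤ y1 := integral_nonneg fun ω => mul_nonneg (abs_nonneg _) (Xi_nonneg j ω)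
  have y1q : y1 ≤ qq μ ξ Ds Y j := by
    refine int_mono (bY.abs.mul bX) (bY.abs.mul (bX.add (BM.const _))) fun ω => ?_
    exact mul_le_mul_of_nonneg_left (by linarith) (abs_nonneg _)
  set y2 := ∫ ω, |Y j ω| * (Xi ξ Ds j ω * Xi ξ Ds j ω) ∂μ with hy2
  have y20 : 0 ≤ y2 := integral_nonneg fun ω => mul_nonneg (abs_nonneg _)
    (mul_nonneg (Xi_nonneg j ω) (Xi_nonneg j ω))
  have yr : y2 + e * y1 = rr μ ξ Ds Y j := by
    rw [hy1, hy2, ← integral_const_mul, ← int_add (bY.abs.mul (bX.mul bX))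
      ((bY.abs.mul bX).cmul _)]
    unfold rr
    congr 1; funext ω; ring
  have rq : rr μ ξ Ds Y j ≤ (1 / 4) * qq μ ξ Ds Y j := by
    unfold rr qq
    rw [← integral_const_mul]
    refine int_mono (bY.abs.mul (bX.mul (bX.add (BM.const _))))
      ((bY.abs.mul (bX.add (BM.const _))).cmul _) fun ω => ?_
    have := mul_nonneg (abs_nonneg (Y j ω)) (add_nonneg (Xi_nonneg (ξ := ξ) (Ds := Ds) j ω) he0)
    nlinarith [X4 ω]
  -- (b)
  have pb : ∫ ω, Y j ω * SC ω * |W ω| ^ 3 ∂μ ≤ 8021 * qq μ ξ Ds Y j := by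
    have bYS : BM (GG ξ A (Cs j)) (fun ω => |Y j ω| * |SC ω|) := bYC.abs.mul bSCC.abs
    calc _ ≤ ∫ ω, (|Y j ω| * |SC ω|) * (4 * |WD ω| ^ 3 + 1) ∂μ := by
          refine int_mono ((bY.mul bSC).mul (bW.abs.pow 3)) ((bYS.mono (H.GG_le _)).mul
            (((bWD.abs.pow 3).cmul _).add (BM.const _))) fun ω => ?_
          refine (le_abs_self _).trans ?_
          rw [abs_mul, abs_mul, abs_of_nonneg (by positivity : 0 ≤ |W ω| ^ 3)]
          refine mul_le_mul_of_nonneg_left ?_ (by positivity)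
          have h1 : |W ω| ^ 3 ≤ (|WD ω| + 1 / 2) ^ 3 := by
            have := aW ω; have := abs_nonneg (W ω); gcongr
          have h0 := abs_nonneg (WD ω)
          set x := |WD ω|
          nlinarith [mul_nonneg h0 (sq_nonneg (x - 1)), sq_nonneg (x - 1 / 2),
            mul_nonneg h0 (sq_nonneg (x - 1 / 2)), mul_nonneg (add_nonneg h0 (by norm_num : (0 : ℝ) ≤ 1 / 2)) (sq_nonneg (x - 1 / 2))]
      _ = (∫ ω, |Y j ω| * |SC ω| ∂μ) * ∫ ω, (4 * |WD ω| ^ 3 + 1) ∂μ :=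
          indep_mul (H.i5 j) (H.GG_le _) (H.GG_le _) bYS
            (((bWDD.abs.pow 3).cmul _).add (BM.const _))
      _ ≤ qq μ ξ Ds Y j * 8021 := by
          refine mul_le_mul ?_ ?_ (integral_nonneg fun ω => by positivity) (qq_nonneg j)
          · refine int_mono (bYS.mono (H.GG_le _)) (bY.abs.mul (bX.add (BM.const _))) fun ω => ?_
            exact mul_le_mul_of_nonneg_left (SC1 ω) (abs_nonneg _)
          · rw [int_add ((bWD.abs.pow 3).cmul _) (BM.const _), integral_const_mul, int_c]
            linarith
      _ = _ := mul_comm _ _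
  -- (c)
  have pc : ∫ ω, Y j ω * (SCc ω * |WB ω| ^ 3) ∂μ = 0 := by
    rw [indep_mul (H.i3 j) (H.FF_le _) (H.GG_le _) (hY.bF j) (bSCcB.mul (bWBB.abs.pow 3)),
      hY.mean, zero_mul]
  -- (d)
  have pd : ∫ ω, (Y j ω * u ω) * (SCc ω * dcube (WC ω)) ∂μ
      = (∫ ω, Y j ω * u ω ∂μ) * ∫ ω, SCc ω * dcube (WC ω) ∂μ :=
    indep_mul (H.i4 j) (H.GG_le _) (H.GG_le _) (bYB.mul buB) (bSCcC.mul bWCC.dcube)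
  -- (e)
  have pe : ∫ ω, Y j ω * W ω ∂μ = ∫ ω, Y j ω * u ω ∂μ := by
    have h0 : ∫ ω, Y j ω * WB ω ∂μ = 0 := by
      rw [indep_mul (H.i3 j) (H.FF_le _) (H.GG_le _) (hY.bF j) bWBB, hY.mean, zero_mul]
    have : ∀ ω, Y j ω * W ω = Y j ω * u ω + Y j ω * WB ω := fun ω => by rw [eB]; ring
    simp only [this]
    rw [int_add (bY.mul bu) (bY.mul bWB), h0, add_zero]
  -- (f)
  have pf : |∫ ω, SCc ω * dcube (WC ω) ∂μ - ∫ ω, S ω * dcube (W ω) ∂μ|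
      ≤ 377 + 3 * e * (2 * Q + 1007) := by
    rw [← int_sub (bSCc.mul bWC.dcube) (bS.mul bW.dcube)]
    calc _ ≤ ∫ ω, ((3 / 2) * W ω ^ 2 + 3 * (|v ω| * ((|SDc ω| + 1 / 2) * (2 * |WD ω| + 1)))) ∂μ := by
          refine int_abs_le ((bSCc.mul bWC.dcube).sub (bS.mul bW.dcube)) (((bW.pow 2).cmul _).add
            ((bv.abs.mul (bprod.mono (H.GG_le _))).cmul _)) fun ω => ?_
          have e1 : SCc ω * dcube (WC ω) - S ω * dcube (W ω)
              = -(SC ω * dcube (W ω)) + -(SCc ω * (dcube (W ω) - dcube (WC ω))) := by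
            rw [sC]; ring
          rw [e1]
          refine (abs_add_le _ _).trans ?_
          rw [abs_neg, abs_neg, abs_mul, abs_mul, abs_dcube]
          refine add_le_add ?_ ?_
          · nlinarith [SC2 ω, sq_nonneg (W ω)]
          · have h1 := dcube_sub (W ω) (WC ω)
            have h2 : W ω - WC ω = v ω := by rw [eC]; ring
            rw [h2] at h1
            have h3 : |dcube (W ω) - dcube (WC ω)| ≤ 3 * |v ω| * (2 * |WD ω| + 1) := by
              refine h1.trans (mul_le_mul_of_nonneg_left ?_ (by positivity))
              linarith [aWC ω, vX ω, X4 ω]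
            refine (mul_le_mul (aSCc ω) h3 (abs_nonneg _) (by positivity)).trans (le_of_eq ?_)
            ring
      _ ≤ _ := by
          rw [int_add ((bW.pow 2).cmul _) ((bv.abs.mul (bprod.mono (H.GG_le _))).cmul _),
            integral_const_mul, integral_const_mul,
            indep_mul (H.i5 j) (H.GG_le _) (H.GG_le _) bvC.abs bprod]
          have h1 : ∫ ω, |v ω| ∂μ ≤ e := int_mono bv.abs bX vX
          have h2 : 0 ≤ ∫ ω, |v ω| ∂μ := integral_nonneg fun _ => abs_nonneg _
          have := mul_le_mul h1 mprod (integral_nonneg fun ω => by positivity) he0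
          linarith
  have pe2 : |∫ ω, Y j ω * u ω ∂μ| ≤ y1 := by
    refine int_abs_le (bY.mul bu) (bY.abs.mul bX) fun ω => ?_
    rw [abs_mul]
    exact mul_le_mul_of_nonneg_left (uX ω) (abs_nonneg _)
  -- (R)
  set P : Ω → ℝ := fun ω => |Y j ω| * (|u ω| * (|u ω| + |v ω|)) with hP
  have bPC : BM (GG ξ A (Cs j)) P := bYC.abs.mul (buC.abs.mul (buC.abs.add bvC.abs))
  have bP : BM m0 P := bPC.mono (H.GG_le _)
  have pR : ∫ ω, P ω * ((|SDc ω| + 1 / 2) * (2 * |WD ω| + 1)) ∂μ ≤ 2 * y2 * (2 * Q + 1007) := by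
    rw [indep_mul (H.i5 j) (H.GG_le _) (H.GG_le _) bPC bprod]
    refine mul_le_mul ?_ mprod (integral_nonneg fun ω => by positivity) (by positivity)
    rw [hy2, ← integral_const_mul]
    refine int_mono bP ((bY.abs.mul (bX.mul bX)).cmul _) fun ω => ?_
    have h1 : |u ω| * (|u ω| + |v ω|) ≤ Xi ξ Ds j ω * (Xi ξ Ds j ω + Xi ξ Ds j ω) :=
      mul_le_mul (uX ω) (add_le_add (uX ω) (vX ω)) (by positivity) (Xi_nonneg j ω)
    refine (mul_le_mul_of_nonneg_left h1 (abs_nonneg _)).trans (le_of_eq ?_)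
    ring
  have main : ∫ ω, Y j ω * S ω * |W ω| ^ 3 ∂μ ≤ ∫ ω, (((Y j ω * SC ω * |W ω| ^ 3
      + Y j ω * (SCc ω * |WB ω| ^ 3)) + (Y j ω * u ω) * (SCc ω * dcube (WC ω)))
      + 3 * (P ω * ((|SDc ω| + 1 / 2) * (2 * |WD ω| + 1)))) ∂μ := by
    refine int_mono ((bY.mul bS).mul (bW.abs.pow 3)) (((((bY.mul bSC).mul (bW.abs.pow 3)).add
      (bY.mul (bSCc.mul (bWB.abs.pow 3)))).add ((bY.mul bu).mul (bSCc.mul bWC.dcube))).add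
      ((bP.mul (bprod.mono (H.GG_le _))).cmul _)) fun ω => ?_
    have h1 := cube_taylor (W ω) (WB ω) (WC ω) (|u ω| + |v ω|)
      (by rw [eC, add_sub_cancel_right]; linarith [abs_nonneg (u ω)])
      (by
        have : WB ω - WC ω = v ω + -(u ω) := by linarith [eB ω, eC ω]
        rw [this]
        refine (abs_add_le _ _).trans ?_
        rw [abs_neg]; linarith)
    have h2 : W ω - WB ω = u ω := by rw [eB]; ring
    rw [h2] at h1
    have h3 : |(|W ω| ^ 3 - |WB ω| ^ 3 - u ω * dcube (WC ω))|
        ≤ |u ω| * (3 * (|u ω| + |v ω|) * (2 * |WD ω| + 1)) := by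
      refine h1.trans ?_
      have : 2 * |WC ω| + (|u ω| + |v ω|) ≤ 2 * |WD ω| + 1 := by
        linarith [aWC ω, vX ω, uX ω, X4 ω]
      gcongr
    have h4 : Y j ω * SCc ω * (|W ω| ^ 3 - |WB ω| ^ 3 - u ω * dcube (WC ω))
        ≤ 3 * (P ω * ((|SDc ω| + 1 / 2) * (2 * |WD ω| + 1))) := by
      refine (le_abs_self _).trans ?_
      rw [abs_mul, abs_mul]
      refine (mul_le_mul (mul_le_mul_of_nonneg_left (aSCc ω) (abs_nonneg _)) h3 (abs_nonneg _)
        (by positivity)).trans (le_of_eq ?_)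
      simp only [hP]; ring
    have h5 : Y j ω * S ω * |W ω| ^ 3 = Y j ω * SC ω * |W ω| ^ 3 + Y j ω * (SCc ω * |WB ω| ^ 3)
        + (Y j ω * u ω) * (SCc ω * dcube (WC ω))
        + Y j ω * SCc ω * (|W ω| ^ 3 - |WB ω| ^ 3 - u ω * dcube (WC ω)) := by
      rw [sC]; ring
    linarith
  rw [int_add ((((bY.mul bSC).mul (bW.abs.pow 3)).add
      (bY.mul (bSCc.mul (bWB.abs.pow 3)))).add ((bY.mul bu).mul (bSCc.mul bWC.dcube)))
      ((bP.mul (bprod.mono (H.GG_le _))).cmul _),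
    int_add (((bY.mul bSC).mul (bW.abs.pow 3)).add
      (bY.mul (bSCc.mul (bWB.abs.pow 3)))) ((bY.mul bu).mul (bSCc.mul bWC.dcube)),
    int_add ((bY.mul bSC).mul (bW.abs.pow 3)) (bY.mul (bSCc.mul (bWB.abs.pow 3))),
    integral_const_mul, pc, pd] at main
  rw [pe]
  have p8 : (∫ ω, Y j ω * u ω ∂μ) * (∫ ω, SCc ω * dcube (WC ω) ∂μ - ∫ ω, S ω * dcube (W ω) ∂μ)
      ≤ y1 * (377 + 3 * e * (2 * Q + 1007)) := by
    refine (le_abs_self _).trans ?_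
    rw [abs_mul]
    exact mul_le_mul pe2 pf (abs_nonneg _) y10
  have hq0 := qq_nonneg (μ := μ) (ξ := ξ) (Ds := Ds) (Y := Y) j
  have hey : 0 ≤ e * y1 := mul_nonneg he0 y10
  have hQy2 : 0 ≤ Q * y2 := mul_nonneg hQ0 y20
  have hQe : 0 ≤ Q * (e * y1) := mul_nonneg hQ0 hey
  rw [← yr] at rq ⊢
  rw [add_zero] at main
  refine main.trans ?_
  clear_value Q e y1 y2
  generalize (∫ ω, Y j ω * u ω ∂μ) = z1 at *
  generalize (∫ ω, SCc ω * dcube (WC ω) ∂μ) = z2 at *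
  generalize (∫ ω, S ω * dcube (W ω) ∂μ) = z3 at *
  linarith

set_option maxHeartbeats 4000000 in
lemma weighted (H : LD μ ξ A B Bs Cs Ds κ) (hY : Loc μ ξ A Y) (G : Finset ι)
    (h4 : ∫ ω, (∑ k ∈ G, ξ k ω) ^ 4 ∂μ ≤ 500) (ht : tau μ ξ κ ≤ 1) :
    ∫ ω, (32 + 4 * |∑ k ∈ G, ξ k ω| ^ 3) * (∑ k ∈ G, Y k ω) ^ 2 ∂μ ≤
      60000 * ∑ j, qq μ ξ Ds Y j := by
  set W : Ω → ℝ := fun ω => ∑ k ∈ G, ξ k ω with hW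
  set S : Ω → ℝ := fun ω => ∑ k ∈ G, Y k ω with hS
  set Q := ∑ j, qq μ ξ Ds Y j with hQ
  have hQ0 : 0 ≤ Q := Finset.sum_nonneg fun j _ => qq_nonneg j
  have bW : BM m0 W := H.b0s _
  have bS : BM m0 S := H.Yb0s hY _
  have hS2 : ∫ ω, S ω ^ 2 ∂μ ≤ Q := H.YS2 hY G
  have hS20 : 0 ≤ ∫ ω, S ω ^ 2 ∂μ := integral_nonneg fun _ => sq_nonneg _
  have mW2 : ∫ ω, W ω ^ 2 ∂μ ≤ 251 := by
    have : ∫ ω, W ω ^ 2 ∂μ ≤ ∫ ω, ((1 / 2) * W ω ^ 4 + 1 / 2) ∂μ := by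
      refine int_mono (bW.pow 2) (((bW.pow 4).cmul _).add (BM.const _)) fun ω => ?_
      nlinarith [sq_nonneg (W ω ^ 2 - 1)]
    rw [int_add ((bW.pow 4).cmul _) (BM.const _), integral_const_mul, int_c] at this
    linarith
  have mW20 : 0 ≤ ∫ ω, W ω ^ 2 ∂μ := integral_nonneg fun _ => sq_nonneg _
  have hmain : (∫ ω, S ω * W ω ∂μ) * (∫ ω, S ω * dcube (W ω) ∂μ) ≤ 1100 * Q := by
    have c1 := cs (μ := μ) bS bW
    have c2 := cs (μ := μ) bS bW.dcube
    have e : ∀ ω, dcube (W ω) ^ 2 = 9 * W ω ^ 4 := fun ω => by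
      rw [← sq_abs, abs_dcube]; ring
    simp only [e] at c2
    rw [integral_const_mul] at c2
    have d1 : (∫ ω, S ω * W ω ∂μ) ^ 2 ≤ 251 * Q := by
      refine c1.trans ?_
      nlinarith
    have d2 : (∫ ω, S ω * dcube (W ω) ∂μ) ^ 2 ≤ 4500 * Q := by
      refine c2.trans ?_
      have : 0 ≤ ∫ ω, W ω ^ 4 ∂μ := integral_nonneg fun _ => by positivity
      nlinarith
    refine abs_le_of_sq_le_sq' ?_ (by positivity) |>.2
    rw [mul_pow]
    have := mul_le_mul d1 d2 (sq_nonneg _) (by positivity)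
    nlinarith [sq_nonneg Q]
  have key : ∫ ω, S ω ^ 2 * |W ω| ^ 3 ∂μ ≤ 14000 * Q := by
    have e1 : ∫ ω, S ω ^ 2 * |W ω| ^ 3 ∂μ = ∑ j ∈ G, ∫ ω, Y j ω * S ω * |W ω| ^ 3 ∂μ := by
      rw [← int_sum _ fun j _ => ((H.Yb0 hY j).mul bS).mul (bW.abs.pow 3)]
      congr 1; funext ω
      rw [← Finset.sum_mul, ← Finset.sum_mul, sq]
    have e2 : ∫ ω, S ω * W ω ∂μ = ∑ j ∈ G, ∫ ω, Y j ω * W ω ∂μ := by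
      rw [← int_sum _ fun j _ => (H.Yb0 hY j).mul bW]
      congr 1; funext ω
      rw [← Finset.sum_mul]
    rw [e1]
    refine (Finset.sum_le_sum fun j _ => H.weighted_j hY G h4 j).trans ?_
    rw [Finset.sum_add_distrib, Finset.sum_add_distrib, ← Finset.sum_mul, ← e2,
      ← Finset.mul_sum, ← Finset.mul_sum]
    have s1 : ∑ j ∈ G, qq μ ξ Ds Y j ≤ Q :=
      Finset.sum_le_sum_of_subset_of_nonneg (Finset.subset_univ G) fun j _ _ => qq_nonneg j
    have s2 : ∑ j ∈ G, rr μ ξ Ds Y j ≤ 4 :=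
      (Finset.sum_le_sum_of_subset_of_nonneg (Finset.subset_univ G)
        fun j _ _ => rr_nonneg j).trans ((H.rr_sum hY).trans (by linarith))
    have := mul_le_mul_of_nonneg_left s2 hQ0
    nlinarith
  have e : ∀ ω, (32 + 4 * |W ω| ^ 3) * S ω ^ 2 = 32 * S ω ^ 2 + 4 * (S ω ^ 2 * |W ω| ^ 3) :=
    fun ω => by ring
  show ∫ ω, (32 + 4 * |W ω| ^ 3) * S ω ^ 2 ∂μ ≤ _
  simp only [e]
  rw [int_add ((bS.pow 2).cmul _) (((bS.pow 2).mul (bW.abs.pow 3)).cmul _), integral_const_mul,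
    integral_const_mul]
  linarith

end LD
end LDep

open MeasureTheory ProbabilityTheory Real

namespace LDep

/-- integrated clamp -/
noncomputable def RR (δ p : ℝ) : ℝ := ((max (p + δ) 0) ^ 2 - (max p 0) ^ 2) / (2 * δ)

/-- clamp -/
noncomputable def rc (δ p : ℝ) : ℝ := (max (p + δ) 0 - max p 0) / δ

/-- trapezoid -/
noncomputable def psi (δ l p : ℝ) : ℝ := rc δ p - rc δ (p - l - δ)

/-- integrated trapezoid -/
noncomputable def ff (δ l p : ℝ) : ℝ := RR δ p - RR δ (p - l - δ)

lemma hasDerivAt_ppsq (x : ℝ) : HasDerivAt (fun y : ℝ => (max y 0) ^ 2) (2 * max x 0) x := by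
  rcases lt_trichotomy x 0 with h | h | h
  · have e : (fun y : ℝ => (max y 0) ^ 2) =ᶠ[nhds x] fun _ => 0 := by
      filter_upwards [Iio_mem_nhds h] with y hy
      rw [max_eq_right (le_of_lt hy)]; norm_num
    rw [max_eq_right h.le, mul_zero]
    exact (hasDerivAt_const x (0 : ℝ)).congr_of_eventuallyEq e
  · subst h
    rw [max_self, mul_zero]
    rw [hasDerivAt_iff_isLittleO]
    simp only [max_self, sub_zero, smul_zero]
    have : (fun y : ℝ => max y 0 ^ 2 - 0 ^ 2) =O[nhds 0] fun y : ℝ => y ^ 2 := by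
      refine Asymptotics.IsBigO.of_bound 1 (Filter.Eventually.of_forall fun y => ?_)
      rw [Real.norm_eq_abs, Real.norm_eq_abs, one_mul]
      rcases le_total y 0 with h | h
      · rw [max_eq_right h]; simp; positivity
      · rw [max_eq_left h]; simp
    refine this.trans_isLittleO ?_
    have := Asymptotics.isLittleO_pow_id (𝕜 := ℝ) (n := 2) (by norm_num)
    exact this
  · have e : (fun y : ℝ => (max y 0) ^ 2) =ᶠ[nhds x] fun y => y ^ 2 := by
      filter_upwards [Ioi_mem_nhds h] with y hy
      rw [max_eq_left (le_of_lt hy)]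
    rw [max_eq_left h.le]
    have := (hasDerivAt_pow 2 x).congr_of_eventuallyEq e
    simpa using this

lemma hasDerivAt_RR {δ : ℝ} (hδ : 0 < δ) (p : ℝ) : HasDerivAt (RR δ) (rc δ p) p := by
  have h1 : HasDerivAt (fun y : ℝ => (max (y + δ) 0) ^ 2) (2 * max (p + δ) 0) p :=
    (hasDerivAt_ppsq (p + δ)).comp_add_const p δ
  have h := (h1.sub (hasDerivAt_ppsq p)).div_const (2 * δ)
  have e : rc δ p = (2 * max (p + δ) 0 - 2 * max p 0) / (2 * δ) := by
    unfold rc; field_simp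
  rw [e]; exact h

lemma hasDerivAt_ff {δ : ℝ} (hδ : 0 < δ) (l p : ℝ) : HasDerivAt (ff δ l) (psi δ l p) p := by
  have h2 : HasDerivAt (fun y : ℝ => RR δ (y - l - δ)) (rc δ (p - l - δ)) p := by
    have := (hasDerivAt_RR hδ (p - (l + δ))).comp_sub_const p (l + δ)
    simpa only [sub_sub] using this
  exact (hasDerivAt_RR hδ p).sub h2

lemma rc_nonneg {δ : ℝ} (hδ : 0 < δ) (p : ℝ) : 0 ≤ rc δ p := by
  unfold rc
  refine div_nonneg ?_ hδ.le
  have : max p 0 ≤ max (p + δ) 0 := max_le_max (by linarith) le_rfl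
  linarith

lemma rc_le {δ : ℝ} (hδ : 0 < δ) (p : ℝ) : rc δ p ≤ 1 := by
  unfold rc
  rw [div_le_one hδ]
  rcases le_total p 0 with h | h <;> rcases le_total (p + δ) 0 with h' | h' <;>
    simp only [max_eq_left, max_eq_right, h, h'] <;> linarith

lemma rc_zero {δ : ℝ} (hδ : 0 < δ) {p : ℝ} (hp : p ≤ -δ) : rc δ p = 0 := by
  unfold rc
  rw [max_eq_right (by linarith), max_eq_right (by linarith)]; simp

lemma rc_one {δ : ℝ} (hδ : 0 < δ) {p : ℝ} (hp : 0 ≤ p) : rc δ p = 1 := by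
  unfold rc
  rw [max_eq_left (by linarith), max_eq_left hp]; field_simp; ring

lemma rc_mono {δ : ℝ} (hδ : 0 < δ) {p q : ℝ} (h : p ≤ q) : rc δ p ≤ rc δ q := by
  rcases le_total p (-δ) with h1 | h1
  · rw [rc_zero hδ h1]; exact rc_nonneg hδ q
  rcases le_total 0 q with h2 | h2
  · rw [rc_one hδ h2]; exact rc_le hδ p
  unfold rc
  rw [max_eq_left (by linarith), max_eq_right (by linarith), max_eq_left (by linarith),
    max_eq_right (by linarith)]
  gcongr

lemma rc_lip {δ : ℝ} (hδ : 0 < δ) {p t : ℝ} (ht : 0 ≤ t) : rc δ (p + t) - rc δ p ≤ t / δ := by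
  unfold rc
  rw [← sub_div]
  gcongr
  rcases le_total p 0 with h | h <;> rcases le_total (p + δ) 0 with h1 | h1 <;>
  rcases le_total (p + t) 0 with h2 | h2 <;> rcases le_total (p + t + δ) 0 with h3 | h3 <;>
    simp only [max_eq_left, max_eq_right, h, h1, h2, h3] <;> linarith

lemma rc_diff {δ : ℝ} (hδ : 0 < δ) (p t : ℝ) : |rc δ (p + t) - rc δ p| ≤
    min 1 (|t| / δ) * (Set.Icc (-δ - |t|) |t|).indicator (fun _ => 1) p := by
  by_cases hp : p ∈ Set.Icc (-δ - |t|) |t|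
  · rw [Set.indicator_of_mem hp, mul_one]
    refine le_min ?_ ?_
    · rw [abs_le]
      constructor <;> linarith [rc_nonneg hδ p, rc_le hδ p, rc_nonneg hδ (p + t), rc_le hδ (p + t)]
    · rcases le_total 0 t with h | h
      · rw [abs_of_nonneg h, abs_of_nonneg (by linarith [rc_mono hδ (p := p) (q := p + t) (by linarith)])]
        exact rc_lip hδ h
      · rw [abs_of_nonpos h, abs_of_nonpos (by linarith [rc_mono hδ (p := p + t) (q := p) (by linarith)])]
        have := rc_lip hδ (p := p + t) (t := -t) (by linarith)
        rw [show p + t + -t = p by ring] at this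
        linarith
  · rw [Set.indicator_of_notMem hp, mul_zero]
    have a1 := neg_abs_le t
    have a2 := le_abs_self t
    rw [Set.mem_Icc, not_and_or, not_le, not_le] at hp
    rcases hp with hp | hp
    · rw [rc_zero hδ (by linarith), rc_zero hδ (by linarith)]; simp
    · rw [rc_one hδ (by linarith), rc_one hδ (by linarith)]; simp

lemma psi_nonneg {δ : ℝ} (hδ : 0 < δ) {l : ℝ} (hl : 0 ≤ l) (p : ℝ) : 0 ≤ psi δ l p :=
  sub_nonneg.2 (rc_mono hδ (by linarith))

lemma psi_le {δ : ℝ} (hδ : 0 < δ) (l p : ℝ) : psi δ l p ≤ 1 := by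
  unfold psi; linarith [rc_le hδ p, rc_nonneg hδ (p - l - δ)]

lemma psi_one {δ : ℝ} (hδ : 0 < δ) {l p : ℝ} (h0 : 0 ≤ p) (h1 : p ≤ l) : psi δ l p = 1 := by
  unfold psi; rw [rc_one hδ h0, rc_zero hδ (by linarith)]; norm_num

lemma psi_zero {δ : ℝ} (hδ : 0 < δ) {l p : ℝ} (hl : 0 ≤ l) (h : p ≤ -δ) : psi δ l p = 0 := by
  unfold psi; rw [rc_zero hδ h, rc_zero hδ (by linarith)]; norm_num

lemma psi_diff {δ : ℝ} (hδ : 0 < δ) (l p t : ℝ) : |psi δ l (p + t) - psi δ l p| ≤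
    min 1 (|t| / δ) * ((Set.Icc (-δ - |t|) |t|).indicator (fun _ => 1) p
      + (Set.Icc (-δ - |t|) |t|).indicator (fun _ => 1) (p - l - δ)) := by
  have e : psi δ l (p + t) - psi δ l p
      = (rc δ (p + t) - rc δ p) - (rc δ (p - l - δ + t) - rc δ (p - l - δ)) := by
    unfold psi; rw [show p + t - l - δ = p - l - δ + t by ring]; ring
  rw [e, mul_add]
  exact (abs_sub _ _).trans (add_le_add (rc_diff hδ p t) (rc_diff hδ _ t))

lemma ff_mono {δ : ℝ} (hδ : 0 < δ) {l : ℝ} (hl : 0 ≤ l) : Monotone (ff δ l) :=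
  monotone_of_hasDerivAt_nonneg (fun p => hasDerivAt_ff hδ l p) fun p => psi_nonneg hδ hl p

lemma ff_zero {δ : ℝ} {l : ℝ} (hδ : 0 < δ) (hl : 0 ≤ l) {p : ℝ} (h : p ≤ -δ) : ff δ l p = 0 := by
  unfold ff RR
  rw [max_eq_right (by linarith), max_eq_right (by linarith), max_eq_right (by linarith),
    max_eq_right (by linarith)]
  simp

lemma ff_nonneg {δ : ℝ} {l : ℝ} (hδ : 0 < δ) (hl : 0 ≤ l) (p : ℝ) : 0 ≤ ff δ l p := by
  rw [← ff_zero hδ hl (min_le_right p (-δ))]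
  exact ff_mono hδ hl (min_le_left _ _)

lemma ff_le {δ : ℝ} {l : ℝ} (hδ : 0 < δ) (hl : 0 ≤ l) (p : ℝ) : ff δ l p ≤ l + δ := by
  refine (ff_mono hδ hl (le_max_left p (l + δ))).trans (le_of_eq ?_)
  have h := le_max_right p (l + δ)
  set q := max p (l + δ)
  unfold ff RR
  rw [max_eq_left (by linarith), max_eq_left (by linarith), max_eq_left (by linarith),
    max_eq_left (by linarith)]
  field_simp; ring

/-- kernel -/
noncomputable def kk (s t : ℝ) : ℝ :=
  (Set.Ioc (-s) 0).indicator (fun _ => 1) t - (Set.Ioc 0 (-s)).indicator (fun _ => 1) t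

lemma kk_abs (s t : ℝ) : |kk s t| ≤ 1 := by
  unfold kk
  simp only [Set.indicator_apply]
  split_ifs with h1 h2 h2 <;> simp

lemma kk_zero {s t : ℝ} (h : |s| < |t|) : kk s t = 0 := by
  unfold kk
  simp only [Set.indicator_apply, Set.mem_Ioc]
  rw [lt_abs, abs_lt, abs_lt] at h
  rw [if_neg, if_neg] <;> [norm_num; skip; skip]
  all_goals rintro ⟨h1, h2⟩; rcases h with h | h <;> linarith

lemma kk_sign (s t : ℝ) : |kk s t| = SignType.sign s * kk s t := by
  unfold kk
  rcases lt_trichotomy s 0 with h | h | h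
  · rw [sign_neg h]
    simp only [Set.indicator_apply, Set.mem_Ioc]
    rw [if_neg (by rintro ⟨h1, h2⟩; linarith)]
    split_ifs <;> simp
  · subst h; simp
  · rw [sign_pos h]
    simp only [Set.indicator_apply, Set.mem_Ioc]
    rw [if_neg (c := 0 < t ∧ t ≤ -s) (by rintro ⟨h1, h2⟩; linarith)]
    split_ifs <;> simp

lemma kk_meas : Measurable (fun p : ℝ × ℝ => kk p.1 p.2) := by
  unfold kk
  refine Measurable.sub ?_ ?_
  · have : MeasurableSet {p : ℝ × ℝ | -p.1 < p.2 ∧ p.2 ≤ 0} :=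
      (measurableSet_lt measurable_fst.neg measurable_snd).inter
        (measurableSet_le measurable_snd measurable_const)
    exact (measurable_const (a := (1 : ℝ))).indicator this
  · have : MeasurableSet {p : ℝ × ℝ | 0 < p.2 ∧ p.2 ≤ -p.1} :=
      (measurableSet_lt measurable_const measurable_snd).inter
        (measurableSet_le measurable_snd measurable_fst.neg)
    exact (measurable_const (a := (1 : ℝ))).indicator this

/-- the reference measure -/
noncomputable def nu : Measure ℝ := volume.restrict (Set.Icc (-1 / 4) (1 / 4))

instance : IsFiniteMeasure nu := by unfold nu; infer_instance

lemma nu_ae : ∀ᵐ t ∂nu, |t| ≤ 1 / 4 := by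
  unfold nu
  filter_upwards [ae_restrict_mem measurableSet_Icc] with t ht
  rw [abs_le]; exact ⟨by linarith [ht.1], ht.2⟩

lemma kk_int {s : ℝ} (hs : |s| ≤ 1 / 4) {h : ℝ → ℝ} (hh : Continuous h) :
    ∫ t, kk s t * h t ∂nu = ∫ t in (-s)..0, h t := by
  rw [abs_le] at hs
  have e : ∀ t, kk s t * h t = (Set.Ioc (-s) 0).indicator h t - (Set.Ioc 0 (-s)).indicator h t := by
    intro t
    unfold kk
    simp only [Set.indicator_apply]
    split_ifs <;> simp
  have i : Integrable h nu := (hh.integrableOn_Icc)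
  simp only [e]
  rw [integral_sub (i.indicator measurableSet_Ioc) (i.indicator measurableSet_Ioc),
    integral_indicator measurableSet_Ioc, integral_indicator measurableSet_Ioc, nu,
    Measure.restrict_restrict measurableSet_Ioc, Measure.restrict_restrict measurableSet_Ioc,
    Set.inter_eq_left.2, Set.inter_eq_left.2, intervalIntegral]
  · intro t ht; exact ⟨by linarith [ht.1], by linarith [ht.2]⟩
  · intro t ht; exact ⟨by linarith [ht.1], by linarith [ht.2]⟩

lemma kk_int1 {s : ℝ} (hs : |s| ≤ 1 / 4) : ∫ t, kk s t ∂nu = s := by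
  have := kk_int hs (h := fun _ => 1) continuous_const
  simpa using this

lemma kk_int_abs {s : ℝ} (hs : |s| ≤ 1 / 4) : ∫ t, |kk s t| ∂nu = |s| := by
  simp only [kk_sign]
  rw [integral_const_mul, kk_int1 hs, sign_mul_self]

lemma psi_cont {δ : ℝ} (l : ℝ) : Continuous (psi δ l) := by
  unfold psi rc; fun_prop

lemma kk_ff {δ : ℝ} (hδ : 0 < δ) (l p : ℝ) {s : ℝ} (hs : |s| ≤ 1 / 4) :
    ∫ t, kk s t * psi δ l (p + t) ∂nu = ff δ l p - ff δ l (p - s) := by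
  have hc : Continuous fun t => psi δ l (p + t) := (psi_cont l).comp (by fun_prop)
  rw [kk_int hs hc]
  rw [intervalIntegral.integral_eq_sub_of_hasDerivAt (f := fun t => ff δ l (p + t))]
  · rw [add_zero, sub_eq_add_neg p s]
  · intro t _
    exact (hasDerivAt_ff hδ l (p + t)).comp_const_add p t
  · exact ((psi_cont l).comp (continuous_const.add continuous_id)).intervalIntegrable _ _

lemma psi_int {δ : ℝ} (hδ : 0 < δ) {l : ℝ} (hl : 0 ≤ l) (p : ℝ) :
    ∫ t, psi δ l (p + t) ∂nu ≤ l + δ := by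
  rw [nu, integral_Icc_eq_integral_Ioc, ← intervalIntegral.integral_of_le (by norm_num)]
  rw [intervalIntegral.integral_eq_sub_of_hasDerivAt (f := fun t => ff δ l (p + t))]
  · linarith [ff_le hδ hl (p + 1 / 4), ff_nonneg hδ hl (p + -1 / 4)]
  · intro t _
    exact (hasDerivAt_ff hδ l (p + t)).comp_const_add p t
  · exact ((psi_cont l).comp (continuous_const.add continuous_id)).intervalIntegrable _ _

end LDep

open MeasureTheory ProbabilityTheory Real

namespace LDep

section prod
variable {Ω : Type*} [m0 : MeasurableSpace Ω] {μ : Measure Ω} [IsProbabilityMeasure μ]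

/-- jointly bounded measurable -/
def BP (F : Ω → ℝ → ℝ) : Prop := BM (inferInstance : MeasurableSpace (Ω × ℝ)) (fun p : Ω × ℝ => F p.1 p.2)

lemma BP.swap {F : Ω → ℝ → ℝ} (h : BP F) :
    ∫ t, (∫ ω, F ω t ∂μ) ∂nu = ∫ ω, (∫ t, F ω t ∂nu) ∂μ := by
  have : Integrable (Function.uncurry F) (μ.prod nu) := BM.int h
  exact (integral_integral_swap this).symm

lemma BP.bt {F : Ω → ℝ → ℝ} (h : BP F) :
    BM (inferInstance : MeasurableSpace ℝ) (fun t => ∫ ω, F ω t ∂μ) := by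
  obtain ⟨h1, C, hC⟩ := h
  refine ⟨?_, C, fun t => ?_⟩
  · have : StronglyMeasurable (fun p : Ω × ℝ => F p.1 p.2) := h1.stronglyMeasurable
    exact (this.integral_prod_left' (μ := μ)).measurable
  · have := norm_integral_le_of_norm_le_const (μ := μ) (C := C) (f := fun ω => F ω t)
      (Filter.Eventually.of_forall fun ω => hC (ω, t))
    simpa using this

lemma BP.bw {F : Ω → ℝ → ℝ} (h : BP F) : BM m0 (fun ω => ∫ t, F ω t ∂nu) := by
  obtain ⟨h1, C, hC⟩ := h
  refine ⟨?_, C * nu.real Set.univ, fun ω => ?_⟩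
  · have : StronglyMeasurable (fun p : Ω × ℝ => F p.1 p.2) := h1.stronglyMeasurable
    exact (this.integral_prod_right' (ν := nu)).measurable
  · exact norm_integral_le_of_norm_le_const (μ := nu) (C := C) (f := fun t => F ω t)
      (Filter.Eventually.of_forall fun t => hC (ω, t))

lemma BM.bp {f : Ω → ℝ} (h : BM m0 f) : BP (fun ω _ => f ω) := h.comp measurable_fst

lemma BP.at {F : Ω → ℝ → ℝ} (h : BP F) (t : ℝ) : BM m0 (fun ω => F ω t) :=
  ⟨h.1.comp (measurable_id.prodMk measurable_const), h.2.imp fun _ hC ω => hC (ω, t)⟩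

lemma BP.at' {F : Ω → ℝ → ℝ} (h : BP F) (ω : Ω) :
    BM (inferInstance : MeasurableSpace ℝ) (fun t => F ω t) :=
  ⟨h.1.comp (measurable_const.prodMk measurable_id), h.2.imp fun _ hC t => hC (ω, t)⟩

lemma bp_kk {s : Ω → ℝ} (h : BM m0 s) : BP (fun ω t => kk (s ω) t) :=
  ⟨kk_meas.comp ((h.1.comp measurable_fst).prodMk measurable_snd), 1, fun p => kk_abs _ _⟩

lemma kk_swap {g s : Ω → ℝ} (hg : BM m0 g) (hs : BM m0 s) (h4 : ∀ ω, |s ω| ≤ 1 / 4) :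
    ∫ t, (∫ ω, g ω * kk (s ω) t ∂μ) ∂nu = ∫ ω, g ω * s ω ∂μ := by
  have hb : BP (fun ω t => g ω * kk (s ω) t) := BM.mul hg.bp (bp_kk hs)
  rw [hb.swap]
  congr 1; funext ω
  rw [integral_const_mul, kk_int1 (h4 ω)]

lemma kk_swap_abs {g s : Ω → ℝ} (hg : BM m0 g) (hs : BM m0 s) (h4 : ∀ ω, |s ω| ≤ 1 / 4) :
    ∫ t, (∫ ω, g ω * |kk (s ω) t| ∂μ) ∂nu = ∫ ω, g ω * |s ω| ∂μ := by
  have hb : BP (fun ω t => g ω * |kk (s ω) t|) := BM.mul hg.bp (BM.abs (bp_kk hs))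
  rw [hb.swap]
  congr 1; funext ω
  rw [integral_const_mul, kk_int_abs (h4 ω)]

end prod

/-- weight -/
noncomputable def ww (x : ℝ) : ℝ := (1 + max x 0) ^ 3

lemma ww_nonneg (x : ℝ) : 0 ≤ ww x := by unfold ww; positivity

lemma ww_le {x W : ℝ} (h : x ≤ W + 1) : ww x ≤ 32 + 4 * |W| ^ 3 := by
  unfold ww
  have h0 := abs_nonneg W
  have h1 : max x 0 ≤ 1 + |W| := max_le (by linarith [le_abs_self W]) (by linarith)
  have h2 : (1 + max x 0) ^ 3 ≤ (2 + |W|) ^ 3 := by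
    have := le_max_right x 0
    exact pow_le_pow_left₀ (by linarith) (by linarith) 3
  refine h2.trans ?_
  set u := |W|
  nlinarith [mul_nonneg (add_nonneg h0 (by norm_num : (0 : ℝ) ≤ 2)) (sq_nonneg (u - 2))]

lemma ww_shift {x y : ℝ} (h : x - 1 / 2 ≤ y) : ww x ≤ 8 * ww y := by
  unfold ww
  have h0 := le_max_right y 0
  have h1 := le_max_left y 0
  have h2 : 1 + max x 0 ≤ 2 * (1 + max y 0) := by
    have : max x 0 ≤ 1 + 2 * max y 0 := max_le (by linarith) (by linarith)
    linarith
  have h3 := le_max_right x 0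
  calc (1 + max x 0) ^ 3 ≤ (2 * (1 + max y 0)) ^ 3 := by gcongr
    _ = _ := by ring

lemma BM.comp_cont {Ω : Type*} {m : MeasurableSpace Ω} {f : Ω → ℝ} (hf : BM m f) {g : ℝ → ℝ}
    (hg : Continuous g) : BM m (fun ω => g (f ω)) := by
  obtain ⟨h1, C, hC⟩ := hf
  obtain ⟨D, hD⟩ := (isCompact_Icc (a := -C) (b := C)).exists_bound_of_continuousOn hg.continuousOn
  exact ⟨hg.measurable.comp h1, D, fun ω => hD _ (abs_le.1 (hC ω))⟩

lemma BM.max {Ω : Type*} {m : MeasurableSpace Ω} {f g : Ω → ℝ} (hf : BM m f) (hg : BM m g) :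
    BM m (fun ω => max (f ω) (g ω)) := by
  have : (fun ω => Max.max (f ω) (g ω)) = fun ω => (1 / 2) * (f ω + g ω + |f ω - g ω|) := by
    funext ω
    rcases le_total (f ω) (g ω) with h | h
    · rw [max_eq_right h, abs_of_nonpos (by linarith)]; ring
    · rw [max_eq_left h, abs_of_nonneg (by linarith)]; ring
  rw [this]
  exact ((hf.add hg).add (hf.sub hg).abs).cmul _

lemma BM.ww {Ω : Type*} {m : MeasurableSpace Ω} {f : Ω → ℝ} (hf : BM m f) :
    BM m (fun ω => ww (f ω)) := ((BM.const 1).add (hf.max (BM.const 0))).pow 3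

lemma BM.rc {Ω : Type*} {m : MeasurableSpace Ω} {f : Ω → ℝ} (δ : ℝ) (hf : BM m f) :
    BM m (fun ω => rc δ (f ω)) := by
  have := (((hf.add (BM.const δ)).max (BM.const 0)).sub (hf.max (BM.const 0))).cmul (1 / δ)
  have e : (fun ω => LDep.rc δ (f ω))
      = fun ω => 1 / δ * (Max.max (f ω + δ) 0 - Max.max (f ω) 0) := by
    funext ω; unfold LDep.rc; ring
  rw [e]; exact this

lemma BM.psi {Ω : Type*} {m : MeasurableSpace Ω} {f l : Ω → ℝ} (δ : ℝ) (hf : BM m f)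
    (hl : BM m l) : BM m (fun ω => psi δ (l ω) (f ω)) :=
  (hf.rc δ).sub (((hf.sub hl).sub (BM.const δ)).rc δ)

lemma BM.RR {Ω : Type*} {m : MeasurableSpace Ω} {f : Ω → ℝ} (δ : ℝ) (hf : BM m f) :
    BM m (fun ω => RR δ (f ω)) := by
  have := ((((hf.add (BM.const δ)).max (BM.const 0)).pow 2).sub
    ((hf.max (BM.const 0)).pow 2)).cmul (1 / (2 * δ))
  have e : (fun ω => LDep.RR δ (f ω))
      = fun ω => 1 / (2 * δ) * (Max.max (f ω + δ) 0 ^ 2 - Max.max (f ω) 0 ^ 2) := by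
    funext ω; unfold LDep.RR; ring
  rw [e]; exact this

lemma BM.ff {Ω : Type*} {m : MeasurableSpace Ω} {f l : Ω → ℝ} (δ : ℝ) (hf : BM m f)
    (hl : BM m l) : BM m (fun ω => ff δ (l ω) (f ω)) :=
  (hf.RR δ).sub (((hf.sub hl).sub (BM.const δ)).RR δ)

lemma BM.ind {Ω : Type*} {m : MeasurableSpace Ω} {a b f : Ω → ℝ} (ha : BM m a) (hb : BM m b)
    (hf : BM m f) : BM m (fun ω => (Set.Icc (a ω) (b ω)).indicator (fun _ => (1 : ℝ)) (f ω)) := by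
  refine ⟨?_, 1, fun ω => ?_⟩
  · have : MeasurableSet[m] {ω | a ω ≤ f ω ∧ f ω ≤ b ω} :=
      (measurableSet_le ha.1 hf.1).inter (measurableSet_le hf.1 hb.1)
    exact (measurable_const (a := (1 : ℝ))).indicator this
  · simp only [Set.indicator_apply]; split_ifs <;> simp

lemma ind_nonneg (s : Set ℝ) (p : ℝ) : 0 ≤ s.indicator (fun _ => (1 : ℝ)) p :=
  Set.indicator_nonneg (fun _ _ => zero_le_one) p

lemma ind_le (s : Set ℝ) (p : ℝ) : s.indicator (fun _ => (1 : ℝ)) p ≤ 1 := by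
  classical
  rw [Set.indicator_apply]; split_ifs <;> simp

namespace LD
variable {Ω : Type*} [m0 : MeasurableSpace Ω] {μ : Measure Ω} {ι : Type*} [Fintype ι]
    [DecidableEq ι] {ξ : ι → Ω → ℝ} {A B Bs Cs Ds : ι → Finset ι} {κ : ℕ}
    [IsProbabilityMeasure μ]

lemma ae_zero (H : LD μ ξ A B Bs Cs Ds κ) {i j k : ι} (hj : j ∉ Cs i) (h1 : k ∈ B i)
    (h2 : k ∈ A j) : ξ k =ᵐ[μ] 0 := by
  have b1 : BM (GG ξ A (Bs i)) (ξ k) := H.bG (H.BBs i h1)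
  have b2 : BM (GG ξ A (Cs i)ᶜ) (ξ k) := (H.bF h2).mono (FF_le_GG (by simpa using hj))
  have h := indep_mul (H.i4 i) (H.GG_le _) (H.GG_le _) b1 b2
  rw [H.mean, zero_mul] at h
  have := (integral_eq_zero_iff_of_nonneg (fun ω => mul_self_nonneg (ξ k ω))
    ((H.b0 k).mul (H.b0 k)).int).1 h
  filter_upwards [this] with ω hω
  simpa using hω

lemma stein_zero (H : LD μ ξ A B Bs Cs Ds κ) {i j : ι} (hj : j ∉ Cs i) {g : Ω → ℝ}
    (hg : BM (FF ξ (B i) ⊔ FF ξ (A j)ᶜ) g) : ∫ ω, ξ j ω * g ω ∂μ = 0 := by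
  have hle : FF ξ (B i) ⊔ FF ξ (A j)ᶜ ≤ eventuallyMeasurableSpace (FF ξ (A j)ᶜ) (ae μ) := by
    refine sup_le (iSup₂_le fun k hk => ?_) le_eventuallyMeasurableSpace
    by_cases h : k ∈ A j
    · have hz := H.ae_zero hj hk h
      have : @EventuallyMeasurable Ω (FF ξ (A j)ᶜ) (ae μ) _ ℝ _ (ξ k) :=
        Measurable.eventuallyMeasurable_of_eventuallyEq (m := FF ξ (A j)ᶜ)
          (@measurable_zero ℝ Ω _ (FF ξ (A j)ᶜ) _) hz
      exact measurable_iff_comap_le.1 this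
    · exact (measurable_iff_comap_le.1 (meas_FF (by simpa using h))).trans
        le_eventuallyMeasurableSpace
  have hind : Indep (FF ξ {j}) (FF ξ (B i) ⊔ FF ξ (A j)ᶜ) μ := by
    rw [Indep_iff]
    intro s t hs ht
    obtain ⟨t', ht', e⟩ := hle t ht
    have := (Indep_iff _ _ _).1 (H.i1 j) s t' hs ht'
    rw [measure_congr e, ← this]
    exact measure_congr ((Filter.EventuallyEq.refl _ s).inter e)
  rw [indep_mul hind (H.FF_le _) (sup_le (H.FF_le _) (H.FF_le _))
    (H.bF (Finset.mem_singleton_self j)) hg, H.mean, zero_mul]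

/-- the local random kernel -/
noncomputable def mh (ξ : ι → Ω → ℝ) (A : ι → Finset ι) (j : ι) (t : ℝ) (ω : Ω) : ℝ :=
  ξ j ω * kk (∑ l ∈ A j, ξ l ω) t

lemma mh_b (H : LD μ ξ A B Bs Cs Ds κ) (j : ι) (t : ℝ) : BM (FF ξ (A j)) (mh ξ A j t) :=
  (H.bF (H.memA j)).mul ⟨kk_meas.comp ((H.bFs subset_rfl).1.prodMk measurable_const), 1,
    fun _ => kk_abs _ _⟩

lemma mh_b0 (H : LD μ ξ A B Bs Cs Ds κ) (j : ι) (t : ℝ) : BM m0 (mh ξ A j t) :=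
  (H.mh_b j t).mono (H.FF_le _)

lemma mh_bp (H : LD μ ξ A B Bs Cs Ds κ) (j : ι) : BP (fun ω t => mh ξ A j t ω) :=
  BM.mul (H.b0 j).bp (bp_kk (H.b0s _))

lemma mh_abs (j : ι) (t : ℝ) (ω : Ω) : |mh ξ A j t ω| ≤ |ξ j ω| := by
  unfold mh; rw [abs_mul]
  exact mul_le_of_le_one_right (abs_nonneg _) (kk_abs _ _)

lemma mh_loc (H : LD μ ξ A B Bs Cs Ds κ) (t : ℝ) :
    Loc μ ξ A (fun j ω => mh ξ A j t ω - ∫ ω, mh ξ A j t ω ∂μ) where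
  bF j := (H.mh_b j t).sub (BM.const _)
  mean j := by
    rw [int_sub (H.mh_b0 j t) (BM.const _), int_c, sub_self]
  le j ω := by
    refine (abs_sub _ _).trans (add_le_add (mh_abs j t ω) ?_)
    exact int_abs_le (H.mh_b0 j t) (H.b0 j).abs (mh_abs j t)

/-- majorant of `qq` -/
noncomputable def hh (μ : Measure Ω) (ξ : ι → Ω → ℝ) (A Ds : ι → Finset ι) (j : ι) (t : ℝ) : ℝ :=
  ∫ ω, |mh ξ A j t ω| * (Xi ξ Ds j ω + 3 * ∫ ω, Xi ξ Ds j ω ∂μ) ∂μ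

lemma qq_le_hh (H : LD μ ξ A B Bs Cs Ds κ) (j : ι) (t : ℝ) :
    qq μ ξ Ds (fun j ω => mh ξ A j t ω - ∫ ω, mh ξ A j t ω ∂μ) j ≤ hh μ ξ A Ds j t := by
  have bX := H.Xi_b j
  have bm := H.mh_b0 j t
  set e := ∫ ω, Xi ξ Ds j ω ∂μ with he
  have he0 : 0 ≤ e := xi_int_nonneg j
  set c := ∫ ω, |mh ξ A j t ω| ∂μ with hc
  have hcm : |∫ ω, mh ξ A j t ω ∂μ| ≤ c := int_abs_le bm bm.abs fun _ => le_rfl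
  have h1 : qq μ ξ Ds (fun j ω => mh ξ A j t ω - ∫ ω, mh ξ A j t ω ∂μ) j
      ≤ ∫ ω, (|mh ξ A j t ω| * (Xi ξ Ds j ω + e) + c * (Xi ξ Ds j ω + e)) ∂μ := by
    refine int_mono ((bm.sub (BM.const _)).abs.mul (bX.add (BM.const _)))
      ((bm.abs.mul (bX.add (BM.const _))).add ((bX.add (BM.const _)).cmul _)) fun ω => ?_
    rw [← add_mul]
    refine mul_le_mul_of_nonneg_right ?_ (add_nonneg (Xi_nonneg j ω) he0)
    exact (abs_sub _ _).trans (add_le_add le_rfl hcm)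
  refine h1.trans (le_of_eq ?_)
  unfold hh
  rw [int_add (bm.abs.mul (bX.add (BM.const _))) ((bX.add (BM.const _)).cmul _),
    integral_const_mul, int_add bX (BM.const _), int_c, ← he]
  have e1 : ∀ ω, |mh ξ A j t ω| * (Xi ξ Ds j ω + 3 * e)
      = |mh ξ A j t ω| * (Xi ξ Ds j ω + e) + (2 * e) * |mh ξ A j t ω| := fun ω => by ring
  simp only [e1]
  rw [int_add (bm.abs.mul (bX.add (BM.const _))) (bm.abs.cmul _), integral_const_mul]
  ring

lemma hh_nonneg (j : ι) (t : ℝ) : 0 ≤ hh μ ξ A Ds j t := integral_nonneg fun ω =>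
  mul_nonneg (abs_nonneg _) (add_nonneg (Xi_nonneg j ω) (mul_nonneg (by norm_num)
    (xi_int_nonneg j)))

lemma sA (H : LD μ ξ A B Bs Cs Ds κ) (j : ι) (ω : Ω) : |∑ l ∈ A j, ξ l ω| ≤ Xi ξ Ds j ω :=
  sum_le_Xi (H.AD j) ω

lemma sA4 (H : LD μ ξ A B Bs Cs Ds κ) (j : ι) (ω : Ω) : |∑ l ∈ A j, ξ l ω| ≤ 1 / 4 :=
  (H.sA j ω).trans (H.Xi_le j ω)

lemma hh_bp (H : LD μ ξ A B Bs Cs Ds κ) (j : ι) :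
    BP (fun ω t => |mh ξ A j t ω| * (Xi ξ Ds j ω + 3 * ∫ ω, Xi ξ Ds j ω ∂μ)) :=
  BM.mul (BM.abs (H.mh_bp j)) (BM.bp ((H.Xi_b j).add (BM.const _)))

lemma hh_b (H : LD μ ξ A B Bs Cs Ds κ) (j : ι) :
    BM (inferInstance : MeasurableSpace ℝ) (hh μ ξ A Ds j) := (H.hh_bp j).bt

lemma hh_int (H : LD μ ξ A B Bs Cs Ds κ) :
    ∫ t, (∑ j, hh μ ξ A Ds j t) ∂nu ≤ 4 * tau μ ξ κ := by
  rw [int_sum _ fun j _ => H.hh_b j]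
  have h : ∀ j, ∫ t, hh μ ξ A Ds j t ∂nu ≤ ∫ ω, |ξ j ω| * (Xi ξ Ds j ω * Xi ξ Ds j ω) ∂μ
      + 3 * ((∫ ω, |ξ j ω| * Xi ξ Ds j ω ∂μ) * ∫ ω, Xi ξ Ds j ω ∂μ) := by
    intro j
    have bX := H.Xi_b j
    set e := ∫ ω, Xi ξ Ds j ω ∂μ with he
    have he0 : 0 ≤ e := xi_int_nonneg j
    have e1 : ∀ t, hh μ ξ A Ds j t
        = ∫ ω, (|ξ j ω| * (Xi ξ Ds j ω + 3 * e)) * |kk (∑ l ∈ A j, ξ l ω) t| ∂μ := by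
      intro t
      unfold hh mh
      congr 1; funext ω
      rw [abs_mul]; ring
    simp only [e1]
    rw [kk_swap_abs ((H.b0 j).abs.mul (bX.add (BM.const _))) (H.b0s _) (H.sA4 j)]
    have e2 : ∫ ω, |ξ j ω| * (Xi ξ Ds j ω * Xi ξ Ds j ω) ∂μ
      + 3 * ((∫ ω, |ξ j ω| * Xi ξ Ds j ω ∂μ) * e)
        = ∫ ω, (|ξ j ω| * (Xi ξ Ds j ω + 3 * e)) * Xi ξ Ds j ω ∂μ := by
      have : ∀ ω, (|ξ j ω| * (Xi ξ Ds j ω + 3 * e)) * Xi ξ Ds j ω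
        = |ξ j ω| * (Xi ξ Ds j ω * Xi ξ Ds j ω) + (3 * e) * (|ξ j ω| * Xi ξ Ds j ω) :=
        fun ω => by ring
      simp only [this]
      rw [int_add ((H.b0 j).abs.mul (bX.mul bX)) (((H.b0 j).abs.mul bX).cmul _),
        integral_const_mul]
      ring
    rw [e2]
    refine int_mono (((H.b0 j).abs.mul (bX.add (BM.const _))).mul (H.b0s _).abs)
      (((H.b0 j).abs.mul (bX.add (BM.const _))).mul bX) fun ω => ?_
    exact mul_le_mul_of_nonneg_left (H.sA j ω) (mul_nonneg (abs_nonneg _)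
      (add_nonneg (Xi_nonneg j ω) (by positivity)))
  refine (Finset.sum_le_sum fun j _ => h j).trans ?_
  rw [Finset.sum_add_distrib, ← Finset.mul_sum]
  linarith [H.T1, H.T2]

/-- expected kernel -/
noncomputable def MM (μ : Measure Ω) (ξ : ι → Ω → ℝ) (A : ι → Finset ι) (G : Finset ι) (t : ℝ) :
    ℝ := ∑ j ∈ G, ∫ ω, mh ξ A j t ω ∂μ

lemma MM_b (H : LD μ ξ A B Bs Cs Ds κ) (G : Finset ι) :
    BM (inferInstance : MeasurableSpace ℝ) (MM μ ξ A G) := BM.sum _ fun j _ => (H.mh_bp j).bt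

lemma MM_int (H : LD μ ξ A B Bs Cs Ds κ) (i : ι) (h : 1 / 2 ≤ ∫ ω, (∑ j, ξ j ω) ^ 2 ∂μ) :
    7 / 16 ≤ ∫ t, MM μ ξ A (Cs i)ᶜ t ∂nu := by
  unfold MM
  rw [int_sum _ fun j _ => (H.mh_bp j).bt]
  have e : ∀ j, ∫ t, (∫ ω, mh ξ A j t ω ∂μ) ∂nu = ∫ ω, ξ j ω * ∑ l ∈ A j, ξ l ω ∂μ := fun j =>
    kk_swap (H.b0 j) (H.b0s _) (H.sA4 j)
  simp only [e]
  rw [← H.second, ← Finset.sum_add_sum_compl (Cs i)] at h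
  have h2 : ∑ j ∈ Cs i, ∫ ω, ξ j ω * ∑ l ∈ A j, ξ l ω ∂μ ≤ 1 / 16 := by
    calc _ ≤ ∑ j ∈ Cs i, (1 / 4) * ∫ ω, |ξ j ω| ∂μ := by
          refine Finset.sum_le_sum fun j _ => ?_
          rw [← integral_const_mul]
          refine int_mono ((H.b0 j).mul (H.b0s _)) ((H.b0 j).abs.cmul _) fun ω => ?_
          refine (le_abs_self _).trans ?_
          rw [abs_mul, mul_comm]
          exact mul_le_mul_of_nonneg_right (H.sA4 j ω) (abs_nonneg _)
      _ ≤ ∑ j ∈ Ds i, (1 / 4) * ∫ ω, |ξ j ω| ∂μ :=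
          Finset.sum_le_sum_of_subset_of_nonneg (H.CsDs i) fun _ _ _ =>
            mul_nonneg (by norm_num) (integral_nonneg fun _ => abs_nonneg _)
      _ = (1 / 4) * ∫ ω, Xi ξ Ds i ω ∂μ := by rw [H.Exi, Finset.mul_sum]
      _ ≤ _ := by linarith [H.xi_int_le i]
  linarith

lemma MM_abs_int (H : LD μ ξ A B Bs Cs Ds κ) (G : Finset ι) :
    ∫ t, |t| * |MM μ ξ A G t| ∂nu ≤ tau μ ξ κ := by
  have hb : ∀ j, BP (fun ω t => (|ξ j ω| * |∑ l ∈ A j, ξ l ω|) * |kk (∑ l ∈ A j, ξ l ω) t|) :=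
    fun j => BM.mul (BM.bp ((H.b0 j).abs.mul (H.b0s _).abs)) (BM.abs (bp_kk (H.b0s _)))
  have hp : ∀ t, |t| * |MM μ ξ A G t| ≤
      ∑ j, ∫ ω, (|ξ j ω| * |∑ l ∈ A j, ξ l ω|) * |kk (∑ l ∈ A j, ξ l ω) t| ∂μ := by
    intro t
    calc |t| * |MM μ ξ A G t| ≤ |t| * ∑ j ∈ G, |∫ ω, mh ξ A j t ω ∂μ| :=
          mul_le_mul_of_nonneg_left (Finset.abs_sum_le_sum_abs _ _) (abs_nonneg _)
      _ ≤ |t| * ∑ j, |∫ ω, mh ξ A j t ω ∂μ| := mul_le_mul_of_nonneg_left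
          (Finset.sum_le_sum_of_subset_of_nonneg (Finset.subset_univ G) fun _ _ _ => abs_nonneg _)
          (abs_nonneg _)
      _ ≤ _ := by
          rw [Finset.mul_sum]
          refine Finset.sum_le_sum fun j _ => ?_
          rw [← abs_abs t, ← abs_mul, ← integral_const_mul]
          refine int_abs_le ((H.mh_b0 j t).cmul _) ((hb j).at t) fun ω => ?_
          unfold mh
          rw [abs_mul, abs_mul, abs_abs]
          by_cases hk : |∑ l ∈ A j, ξ l ω| < |t|
          · rw [kk_zero hk]; simp
          · have := not_lt.1 hk
            have h1 : 0 ≤ |ξ j ω| * |kk (∑ l ∈ A j, ξ l ω) t| := by positivity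
            nlinarith [mul_le_mul_of_nonneg_right this h1]
  have hl : ∫ t, |t| * |MM μ ξ A G t| ∂nu ≤ ∫ t, (∑ j, ∫ ω, (|ξ j ω| * |∑ l ∈ A j, ξ l ω|)
      * |kk (∑ l ∈ A j, ξ l ω) t| ∂μ) ∂nu := by
    have hb2 := BM.sum (m := (inferInstance : MeasurableSpace ℝ)) Finset.univ
      (fun j _ => (hb j).bt (μ := μ))
    refine integral_mono_of_nonneg (Filter.Eventually.of_forall fun t => ?_) hb2.int
      (Filter.Eventually.of_forall hp)
    exact mul_nonneg (abs_nonneg _) (abs_nonneg _)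
  refine hl.trans ?_
  rw [int_sum _ fun j _ => (hb j).bt]
  refine (Finset.sum_le_sum fun j _ => ?_).trans H.T1
  rw [kk_swap_abs ((H.b0 j).abs.mul (H.b0s _).abs) (H.b0s _) (H.sA4 j)]
  refine int_mono (((H.b0 j).abs.mul (H.b0s _).abs).mul (H.b0s _).abs)
    ((H.b0 j).abs.mul ((H.Xi_b j).mul (H.Xi_b j))) fun ω => ?_
  rw [mul_assoc]
  exact mul_le_mul_of_nonneg_left (mul_le_mul (H.sA j ω) (H.sA j ω) (abs_nonneg _)
    (Xi_nonneg j ω)) (abs_nonneg _)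

end LD
end LDep

open MeasureTheory ProbabilityTheory Real

namespace LDep
namespace LD
variable {Ω : Type*} [m0 : MeasurableSpace Ω] {μ : Measure Ω} {ι : Type*} [Fintype ι]
    [DecidableEq ι] {ξ : ι → Ω → ℝ} {A B Bs Cs Ds : ι → Finset ι} {κ : ℕ}
    [IsProbabilityMeasure μ]

/-- the concentration property with constant `L` -/
def PP (μ : Measure Ω) (ξ : ι → Ω → ℝ) (S : Finset ι) (δ L : ℝ) : Prop :=
  ∀ z x l : Ω → ℝ, BM (FF ξ S) z → BM (FF ξ S) x → BM (FF ξ S) l → (∀ ω, 0 ≤ z ω) →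
    (∀ ω, 0 ≤ l ω) → (∀ ω, l ω ≤ 1) →
    ∫ ω, z ω * (ww (x ω) * (Set.Icc (x ω) (x ω + l ω)).indicator (fun _ => (1 : ℝ)) (∑ j, ξ j ω)) ∂μ
      ≤ L * ∫ ω, z ω * (l ω + δ) ∂μ

lemma smooth (H : LD μ ξ A B Bs Cs Ds κ) {S : Finset ι} {δ L : ℝ} (hδ : 0 < δ) (hδ4 : δ ≤ 1 / 4)
    (hL : 0 ≤ L) (hP : PP μ ξ S δ L) {z x l : Ω → ℝ} (hz : BM (FF ξ S) z) (hx : BM (FF ξ S) x)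
    (hl : BM (FF ξ S) l) (hz0 : ∀ ω, 0 ≤ z ω) (hl0 : ∀ ω, 0 ≤ l ω) {t : ℝ} (ht : |t| ≤ 1 / 4) :
    ∫ ω, z ω * (ww (x ω) * |psi δ (l ω) (∑ j, ξ j ω - x ω + t) - psi δ (l ω) (∑ j, ξ j ω - x ω)|) ∂μ
      ≤ 64 * L * |t| * ∫ ω, z ω ∂μ := by
  have t0 := abs_nonneg t
  set T : Ω → ℝ := fun ω => ∑ j, ξ j ω with hT
  have bT : BM m0 T := H.b0s _
  have le := H.FF_le S
  set m := min 1 (|t| / δ) with hm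
  have m0' : 0 ≤ m := le_min zero_le_one (by positivity)
  have m1 : m ≤ 1 := min_le_left _ _
  have m2 : m * δ ≤ |t| := by
    have : m ≤ |t| / δ := min_le_right _ _
    rwa [le_div_iff₀ hδ] at this
  have bx1 : BM (FF ξ S) (fun ω => x ω - δ - |t|) := (hx.sub (BM.const _)).sub (BM.const _)
  have bx2 : BM (FF ξ S) (fun ω => x ω + l ω - |t|) := (hx.add hl).sub (BM.const _)
  have bl : BM (FF ξ S) (fun _ : Ω => δ + 2 * |t|) := BM.const _
  have p1 := hP z _ _ hz bx1 bl hz0 (fun _ => by positivity) (fun _ => by linarith)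
  have p2 := hP z _ _ hz bx2 bl hz0 (fun _ => by positivity) (fun _ => by linarith)
  have ez : ∫ ω, z ω * (δ + 2 * |t| + δ) ∂μ = (2 * δ + 2 * |t|) * ∫ ω, z ω ∂μ := by
    rw [integral_mul_const]; ring
  rw [ez] at p1 p2
  have bi1 : BM m0 (fun ω => z ω * (ww (x ω - δ - |t|) * (Set.Icc (x ω - δ - |t|)
      (x ω - δ - |t| + (δ + 2 * |t|))).indicator (fun _ => (1 : ℝ)) (T ω))) :=
    (hz.mono le).mul ((bx1.mono le).ww.mul (BM.ind (bx1.mono le) ((bx1.add bl).mono le) bT))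
  have bi2 : BM m0 (fun ω => z ω * (ww (x ω + l ω - |t|) * (Set.Icc (x ω + l ω - |t|)
      (x ω + l ω - |t| + (δ + 2 * |t|))).indicator (fun _ => (1 : ℝ)) (T ω))) :=
    (hz.mono le).mul ((bx2.mono le).ww.mul (BM.ind (bx2.mono le) ((bx2.add bl).mono le) bT))
  have bTx : BM m0 (fun ω => T ω - x ω) := bT.sub (hx.mono le)
  have main : ∫ ω, z ω * (ww (x ω) * |psi δ (l ω) (T ω - x ω + t) - psi δ (l ω) (T ω - x ω)|) ∂μ
      ≤ ∫ ω, (8 * m) * (z ω * (ww (x ω - δ - |t|) * (Set.Icc (x ω - δ - |t|)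
      (x ω - δ - |t| + (δ + 2 * |t|))).indicator (fun _ => (1 : ℝ)) (T ω))
        + z ω * (ww (x ω + l ω - |t|) * (Set.Icc (x ω + l ω - |t|)
      (x ω + l ω - |t| + (δ + 2 * |t|))).indicator (fun _ => (1 : ℝ)) (T ω))) ∂μ := by
    refine int_mono ((hz.mono le).mul ((hx.mono le).ww.mul
      (((bTx.add (BM.const t)).psi δ (hl.mono le)).sub (bTx.psi δ (hl.mono le))).abs))
      ((bi1.add bi2).cmul _) fun ω => ?_
    have h1 := psi_diff hδ (l ω) (T ω - x ω) t
    have e1 : (Set.Icc (-δ - |t|) |t|).indicator (fun _ => (1 : ℝ)) (T ω - x ω)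
        = (Set.Icc (x ω - δ - |t|) (x ω - δ - |t| + (δ + 2 * |t|))).indicator
          (fun _ => (1 : ℝ)) (T ω) := by
      simp only [Set.indicator_apply, Set.mem_Icc]
      congr 1
      refine propext (and_congr ?_ ?_) <;> constructor <;> intro h <;> linarith
    have e2 : (Set.Icc (-δ - |t|) |t|).indicator (fun _ => (1 : ℝ)) (T ω - x ω - l ω - δ)
        = (Set.Icc (x ω + l ω - |t|) (x ω + l ω - |t| + (δ + 2 * |t|))).indicator
          (fun _ => (1 : ℝ)) (T ω) := by
      simp only [Set.indicator_apply, Set.mem_Icc]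
      congr 1
      refine propext (and_congr ?_ ?_) <;> constructor <;> intro h <;> linarith
    rw [e1, e2] at h1
    have n1 := ind_nonneg (Set.Icc (x ω - δ - |t|) (x ω - δ - |t| + (δ + 2 * |t|))) (T ω)
    have n2 := ind_nonneg (Set.Icc (x ω + l ω - |t|) (x ω + l ω - |t| + (δ + 2 * |t|))) (T ω)
    have w1 : ww (x ω) ≤ 8 * ww (x ω - δ - |t|) := ww_shift (by linarith)
    have w2 : ww (x ω) ≤ 8 * ww (x ω + l ω - |t|) := ww_shift (by linarith [hl0 ω])
    have w0 := ww_nonneg (x ω)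
    set I1 := (Set.Icc (x ω - δ - |t|) (x ω - δ - |t| + (δ + 2 * |t|))).indicator
          (fun _ => (1 : ℝ)) (T ω)
    set I2 := (Set.Icc (x ω + l ω - |t|) (x ω + l ω - |t| + (δ + 2 * |t|))).indicator
          (fun _ => (1 : ℝ)) (T ω)
    calc _ ≤ z ω * (ww (x ω) * (m * (I1 + I2))) :=
          mul_le_mul_of_nonneg_left (mul_le_mul_of_nonneg_left h1 w0) (hz0 ω)
      _ = (z ω * m) * (ww (x ω) * I1 + ww (x ω) * I2) := by ring
      _ ≤ (z ω * m) * (8 * ww (x ω - δ - |t|) * I1 + 8 * ww (x ω + l ω - |t|) * I2) :=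
          mul_le_mul_of_nonneg_left (add_le_add (mul_le_mul_of_nonneg_right w1 n1)
            (mul_le_mul_of_nonneg_right w2 n2)) (mul_nonneg (hz0 ω) m0')
      _ = _ := by ring
  rw [integral_const_mul, int_add bi1 bi2] at main
  have z0 : 0 ≤ ∫ ω, z ω ∂μ := integral_nonneg hz0
  refine main.trans ?_
  calc _ ≤ (8 * m) * (L * ((2 * δ + 2 * |t|) * ∫ ω, z ω ∂μ)
        + L * ((2 * δ + 2 * |t|) * ∫ ω, z ω ∂μ)) :=
        mul_le_mul_of_nonneg_left (add_le_add p1 p2) (by positivity)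
    _ = (L * ∫ ω, z ω ∂μ) * (32 * (m * δ) + 32 * (m * |t|)) := by ring
    _ ≤ (L * ∫ ω, z ω ∂μ) * (32 * |t| + 32 * |t|) := by
        refine mul_le_mul_of_nonneg_left ?_ (by positivity)
        have : m * |t| ≤ |t| := mul_le_of_le_one_left t0 m1
        linarith
    _ = _ := by ring

/-- the lower bound for a fixed shift -/
lemma fixed_t (H : LD μ ξ A B Bs Cs Ds κ) (i : ι) {δ L : ℝ} (hδ : 0 < δ) (hδ4 : δ ≤ 1 / 4)
    (hL : 0 ≤ L) (hP : PP μ ξ (B i) δ L) {z x l : Ω → ℝ} (hz : BM (FF ξ (B i)) z)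
    (hx : BM (FF ξ (B i)) x) (hl : BM (FF ξ (B i)) l) (hz0 : ∀ ω, 0 ≤ z ω) (hl0 : ∀ ω, 0 ≤ l ω)
    (h4 : ∫ ω, (∑ k ∈ (Cs i)ᶜ, ξ k ω) ^ 4 ∂μ ≤ 500) (htau : tau μ ξ κ ≤ 1)
    {t : ℝ} (ht : |t| ≤ 1 / 4) :
    MM μ ξ A (Cs i)ᶜ t * (∫ ω, z ω * (ww (x ω) * psi δ (l ω) (∑ j, ξ j ω - x ω)) ∂μ)
      ≤ ∫ ω, z ω * (ww (x ω) * psi δ (l ω) (∑ j, ξ j ω - x ω + t)) *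
            (∑ j ∈ (Cs i)ᶜ, mh ξ A j t ω) ∂μ
        + (64 * L * ∫ ω, z ω ∂μ) * (|t| * |MM μ ξ A (Cs i)ᶜ t|)
        + 1 / 2 * ∫ ω, z ω * (ww (x ω) * psi δ (l ω) (∑ j, ξ j ω - x ω + t)) ∂μ
        + (30000 * ∫ ω, z ω ∂μ) * ∑ j, hh μ ξ A Ds j t := by
  have hsm := H.smooth hδ hδ4 hL hP hz hx hl hz0 hl0 ht
  have hwt := H.weighted (H.mh_loc t) (Cs i)ᶜ h4 htau
  have hqh : ∑ j, qq μ ξ Ds (fun j ω => mh ξ A j t ω - ∫ ω, mh ξ A j t ω ∂μ) j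
      ≤ ∑ j, hh μ ξ A Ds j t := Finset.sum_le_sum fun j _ => H.qq_le_hh j t
  have le := H.FF_le (B i)
  set T : Ω → ℝ := fun ω => ∑ j, ξ j ω with hT
  set W : Ω → ℝ := fun ω => ∑ k ∈ (Cs i)ᶜ, ξ k ω with hW
  set M := MM μ ξ A (Cs i)ᶜ t with hM
  set Mh : Ω → ℝ := fun ω => ∑ j ∈ (Cs i)ᶜ, mh ξ A j t ω with hMh
  set N : Ω → ℝ := fun ω => ∑ j ∈ (Cs i)ᶜ, (mh ξ A j t ω - ∫ ω, mh ξ A j t ω ∂μ) with hN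
  have eMN : ∀ ω, Mh ω = M + N ω := fun ω => by
    simp only [hMh, hN, hM, MM, Finset.sum_sub_distrib]; ring
  have bT : BM m0 T := H.b0s _
  have bW : BM m0 W := H.b0s _
  have bN : BM m0 N := H.Yb0s (H.mh_loc t) _
  have bWG : BM (GG ξ A (Cs i)ᶜ) W := H.bGs subset_rfl
  have bNG : BM (GG ξ A (Cs i)ᶜ) N := YbGs (H.mh_loc t) subset_rfl
  have bMh : BM m0 Mh := BM.sum _ fun j _ => H.mh_b0 j t
  have bz := hz.mono le
  have bx := hx.mono le
  have bl := hl.mono le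
  have bTx : BM m0 (fun ω => T ω - x ω) := bT.sub bx
  have bps : BM m0 (fun ω => psi δ (l ω) (T ω - x ω)) := bTx.psi δ bl
  have bpt : BM m0 (fun ω => psi δ (l ω) (T ω - x ω + t)) := (bTx.add (BM.const t)).psi δ bl
  have bzt : BM m0 (fun ω => z ω * (ww (x ω) * psi δ (l ω) (T ω - x ω + t))) :=
    bz.mul (bx.ww.mul bpt)
  have bzs : BM m0 (fun ω => z ω * (ww (x ω) * psi δ (l ω) (T ω - x ω))) :=
    bz.mul (bx.ww.mul bps)
  have bzd : BM m0 (fun ω => z ω * (ww (x ω) * |psi δ (l ω) (T ω - x ω + t)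
      - psi δ (l ω) (T ω - x ω)|)) := bz.mul (bx.ww.mul (bpt.sub bps).abs)
  have TW : ∀ ω, |T ω - W ω| ≤ 1 / 4 := fun ω => by
    have : T ω - W ω = ∑ k ∈ Cs i, ξ k ω := by
      simp only [hT, hW]; rw [split_univ (Cs i)]; ring
    rw [this]
    exact (sum_le_Xi (H.CsDs i) ω).trans (H.Xi_le i ω)
  have bwn : BM (GG ξ A (Cs i)ᶜ) (fun ω => (32 + 4 * |W ω| ^ 3) * N ω ^ 2) :=
    ((BM.const 32).add ((bWG.abs.pow 3).cmul 4)).mul (bNG.pow 2)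
  have hzG : BM (GG ξ A (Bs i)) z := hz.mono ((H.FF_GG _).trans (GG_mono (H.BBs i)))
  have hind := indep_mul (H.i4 i) (H.GG_le _) (H.GG_le _) hzG bwn
  have z0 : 0 ≤ ∫ ω, z ω ∂μ := integral_nonneg hz0
  -- pointwise inequality
  have main : ∫ ω, M * (z ω * (ww (x ω) * psi δ (l ω) (T ω - x ω))) ∂μ ≤
      ∫ ω, (((z ω * (ww (x ω) * psi δ (l ω) (T ω - x ω + t)) * Mh ω
        + |M| * (z ω * (ww (x ω) * |psi δ (l ω) (T ω - x ω + t) - psi δ (l ω) (T ω - x ω)|)))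
        + 1 / 2 * (z ω * (ww (x ω) * psi δ (l ω) (T ω - x ω + t))))
        + 1 / 2 * (z ω * ((32 + 4 * |W ω| ^ 3) * N ω ^ 2))) ∂μ := by
    refine int_mono (bzs.cmul _) ((((bzt.mul bMh).add (bzd.cmul _)).add (bzt.cmul _)).add
      ((bz.mul (bwn.mono (H.GG_le _))).cmul _)) fun ω => ?_
    have q0 := psi_nonneg hδ (hl0 ω) (T ω - x ω + t)
    have q1 := psi_le hδ (l ω) (T ω - x ω + t)
    have hkey : ww (x ω) * psi δ (l ω) (T ω - x ω + t) ≤ 32 + 4 * |W ω| ^ 3 := by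
      by_cases hx1 : x ω ≤ W ω + 1
      · exact (mul_le_of_le_one_right (ww_nonneg _) q1).trans (ww_le hx1)
      · rw [psi_zero hδ (hl0 ω), mul_zero]
        · positivity
        · linarith [(abs_le.1 (TW ω)).2, (abs_le.1 ht).2]
    rw [eMN]
    have w0 := ww_nonneg (x ω)
    have z0' := hz0 ω
    set p := psi δ (l ω) (T ω - x ω + t)
    set q := psi δ (l ω) (T ω - x ω)
    have hd : M * q - M * p ≤ |M| * |p - q| := by
      rw [← abs_mul, mul_sub]
      exact (le_abs_self _).trans (by rw [abs_sub_comm])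
    have hd2 := mul_le_mul_of_nonneg_left hd (mul_nonneg z0' w0)
    have hn : -(p * N ω) ≤ 1 / 2 * p + 1 / 2 * (p * N ω ^ 2) := by
      nlinarith [mul_nonneg q0 (sq_nonneg (N ω + 1))]
    have hn2 := mul_le_mul_of_nonneg_left hn (mul_nonneg z0' w0)
    have hn3 := mul_le_mul_of_nonneg_left (mul_le_mul_of_nonneg_right hkey (sq_nonneg (N ω))) z0'
    linarith
  rw [integral_const_mul, int_add (((bzt.mul bMh).add (bzd.cmul _)).add (bzt.cmul _))
      ((bz.mul (bwn.mono (H.GG_le _))).cmul _), int_add ((bzt.mul bMh).add (bzd.cmul _))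
      (bzt.cmul _), int_add (bzt.mul bMh) (bzd.cmul _), integral_const_mul, integral_const_mul,
      integral_const_mul, hind] at main
  have h5 := mul_le_mul_of_nonneg_left hsm (abs_nonneg M)
  have h6 := mul_le_mul_of_nonneg_left (hwt.trans (mul_le_mul_of_nonneg_left hqh (by norm_num))) z0
  refine main.trans ?_
  refine add_le_add (add_le_add (add_le_add le_rfl ?_) le_rfl) ?_
  · refine h5.trans (le_of_eq ?_); ring
  · have : 1 / 2 * ((∫ ω, z ω ∂μ) * ∫ ω, (32 + 4 * |W ω| ^ 3) * N ω ^ 2 ∂μ)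
        ≤ 1 / 2 * ((∫ ω, z ω ∂μ) * (60000 * ∑ j, hh μ ξ A Ds j t)) :=
      mul_le_mul_of_nonneg_left h6 (by norm_num)
    refine this.trans (le_of_eq ?_); ring

end LD
end LDep

open MeasureTheory ProbabilityTheory Real

namespace LDep

lemma bp_psi {Ω : Type*} [m0 : MeasurableSpace Ω] {δ : ℝ} (hδ : 0 < δ) {f l : Ω → ℝ}
    (hf : BM m0 f) (hl : BM m0 l) (hl0 : ∀ ω, 0 ≤ l ω) :
    BP (fun ω t => psi δ (l ω) (f ω + t)) := by
  refine ⟨?_, 1, fun p => ?_⟩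
  · have hc : Continuous fun q : ℝ × ℝ => psi δ q.1 q.2 := by unfold psi rc; fun_prop
    exact hc.measurable.comp ((hl.1.comp measurable_fst).prodMk
      ((hf.1.comp measurable_fst).add measurable_snd))
  · rw [abs_of_nonneg (psi_nonneg hδ (hl0 _) _)]; exact psi_le hδ _ _

namespace LD
variable {Ω : Type*} [m0 : MeasurableSpace Ω] {μ : Measure Ω} {ι : Type*} [Fintype ι]
    [DecidableEq ι] {ξ : ι → Ω → ℝ} {A B Bs Cs Ds : ι → Finset ι} {κ : ℕ}
    [IsProbabilityMeasure μ]

lemma TW (H : LD μ ξ A B Bs Cs Ds κ) (i : ι) (ω : Ω) :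
    |∑ k, ξ k ω - ∑ k ∈ (Cs i)ᶜ, ξ k ω| ≤ 1 / 4 := by
  have : ∑ k, ξ k ω - ∑ k ∈ (Cs i)ᶜ, ξ k ω = ∑ k ∈ Cs i, ξ k ω := by
    rw [split_univ (Cs i)]; ring
  rw [this]
  exact (sum_le_Xi (H.CsDs i) ω).trans (H.Xi_le i ω)

lemma W4 (H : LD μ ξ A B Bs Cs Ds κ) (i : ι) (h2 : ∫ ω, (∑ j, ξ j ω) ^ 2 ∂μ ≤ 2) :
    ∫ ω, (∑ k ∈ (Cs i)ᶜ, ξ k ω) ^ 4 ∂μ ≤ 97 + 360 * tau μ ξ κ := by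
  have h4 := H.fourth h2
  have bT := H.b0s (μ := μ) (ξ := ξ) Finset.univ
  have : ∫ ω, (∑ k ∈ (Cs i)ᶜ, ξ k ω) ^ 4 ∂μ ≤ ∫ ω, (8 * (∑ k, ξ k ω) ^ 4 + 1) ∂μ := by
    refine int_mono ((H.b0s _).pow 4) (((bT.pow 4).cmul _).add (BM.const _)) fun ω => ?_
    have h := H.TW i ω
    set T := ∑ k, ξ k ω
    set W := ∑ k ∈ (Cs i)ᶜ, ξ k ω
    set d := T - W with hd
    have hW : W = T - d := by rw [hd]; ring
    have hd2 : d ^ 2 ≤ 1 / 16 := by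
      rw [← sq_abs]; nlinarith [abs_nonneg d]
    have hd4 : d ^ 4 ≤ 1 / 8 := by nlinarith [sq_nonneg d]
    have : (T - d) ^ 2 ≤ 2 * T ^ 2 + 2 * d ^ 2 := by nlinarith [sq_nonneg (T + d)]
    have h3 : (T - d) ^ 4 ≤ (2 * T ^ 2 + 2 * d ^ 2) ^ 2 := by
      have := pow_le_pow_left₀ (sq_nonneg (T - d)) this 2
      calc _ = ((T - d) ^ 2) ^ 2 := by ring
        _ ≤ _ := this
    rw [hW]
    nlinarith [sq_nonneg (T ^ 2 - d ^ 2)]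
  rw [int_add ((bT.pow 4).cmul _) (BM.const _), integral_const_mul, int_c] at this
  linarith

lemma indW (H : LD μ ξ A B Bs Cs Ds κ) (i : ι) {z : Ω → ℝ} (hz : BM (FF ξ (B i)) z)
    {g : ℝ → ℝ} (hg : Continuous g) :
    ∫ ω, z ω * g (∑ k ∈ (Cs i)ᶜ, ξ k ω) ∂μ
      = (∫ ω, z ω ∂μ) * ∫ ω, g (∑ k ∈ (Cs i)ᶜ, ξ k ω) ∂μ :=
  indep_mul (H.i4 i) (H.GG_le _) (H.GG_le _) (hz.mono ((H.FF_GG _).trans (GG_mono (H.BBs i))))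
    ((H.bGs subset_rfl).comp_cont hg)

lemma pow_ineq (W : ℝ) : |W| ≤ 1 + W ^ 4 ∧ |W| ^ 3 ≤ 1 + W ^ 4 := by
  have e : W ^ 4 = |W| ^ 4 := by rw [← abs_pow, abs_of_nonneg (by positivity)]
  rw [e]
  have h := abs_nonneg W
  set u := |W|
  constructor
  · nlinarith [sq_nonneg (u ^ 2 - 1 / 2), sq_nonneg (u - 1)]
  · nlinarith [sq_nonneg (u * (u - 1)), sq_nonneg (u ^ 2 - 1), sq_nonneg (u - 1)]

/-- the Stein identity -/
lemma term1 (H : LD μ ξ A B Bs Cs Ds κ) (i : ι) {δ : ℝ} (hδ : 0 < δ)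
    {z x l : Ω → ℝ} (hz : BM (FF ξ (B i)) z)
    (hx : BM (FF ξ (B i)) x) (hl : BM (FF ξ (B i)) l) (hl0 : ∀ ω, 0 ≤ l ω) :
    ∫ t, (∫ ω, z ω * (ww (x ω) * psi δ (l ω) (∑ j, ξ j ω - x ω + t)) *
            (∑ j ∈ (Cs i)ᶜ, mh ξ A j t ω) ∂μ) ∂nu
      = ∫ ω, z ω * (ww (x ω) * ff δ (l ω) (∑ j, ξ j ω - x ω)) * ∑ j ∈ (Cs i)ᶜ, ξ j ω ∂μ := by
  have le := H.FF_le (B i)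
  have bz := hz.mono le
  have bx := hx.mono le
  have bl := hl.mono le
  have bT := H.b0s (μ := μ) (ξ := ξ) Finset.univ
  have bTx := bT.sub bx
  have bpsi : BP (fun ω t => psi δ (l ω) (∑ j, ξ j ω - x ω + t)) := bp_psi hδ bTx bl hl0
  have bzt : BP (fun ω t => z ω * (ww (x ω) * psi δ (l ω) (∑ j, ξ j ω - x ω + t))) :=
    BM.mul bz.bp (BM.mul bx.ww.bp bpsi)
  have bj : ∀ j, BP (fun ω t => z ω * (ww (x ω) * psi δ (l ω) (∑ j, ξ j ω - x ω + t)) *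
      mh ξ A j t ω) := fun j => BM.mul bzt (H.mh_bp j)
  have e1 : ∀ t, ∫ ω, z ω * (ww (x ω) * psi δ (l ω) (∑ j, ξ j ω - x ω + t)) *
            (∑ j ∈ (Cs i)ᶜ, mh ξ A j t ω) ∂μ
      = ∑ j ∈ (Cs i)ᶜ, ∫ ω, z ω * (ww (x ω) * psi δ (l ω) (∑ j, ξ j ω - x ω + t)) *
            mh ξ A j t ω ∂μ := fun t => by
    simp only [Finset.mul_sum]
    exact int_sum _ fun j _ => (bj j).at t
  have bz1 : BM m0 (fun ω => z ω * (ww (x ω) * ff δ (l ω) (∑ j, ξ j ω - x ω))) :=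
    bz.mul (bx.ww.mul (bTx.ff δ bl))
  simp only [e1]
  rw [int_sum _ fun j _ => (bj j).bt]
  simp only [Finset.mul_sum (Cs i)ᶜ]
  rw [int_sum _ fun j _ => bz1.mul (H.b0 j)]
  refine Finset.sum_congr rfl fun j hj => ?_
  rw [(bj j).swap]
  have bz2 : BM (FF ξ (B i) ⊔ FF ξ (A j)ᶜ) (fun ω => z ω * (ww (x ω) *
      ff δ (l ω) (∑ k ∈ (A j)ᶜ, ξ k ω - x ω))) := by
    have hz' : BM (FF ξ (B i) ⊔ FF ξ (A j)ᶜ) z := hz.mono le_sup_left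
    have hx' : BM (FF ξ (B i) ⊔ FF ξ (A j)ᶜ) x := hx.mono le_sup_left
    have hl' : BM (FF ξ (B i) ⊔ FF ξ (A j)ᶜ) l := hl.mono le_sup_left
    have hA' : BM (FF ξ (B i) ⊔ FF ξ (A j)ᶜ) (fun ω => ∑ k ∈ (A j)ᶜ, ξ k ω) :=
      (H.bFs subset_rfl).mono le_sup_right
    exact hz'.mul (hx'.ww.mul ((hA'.sub hx').ff δ hl'))
  have hz0 := H.stein_zero (by simpa using hj) bz2
  have e2 : ∀ ω, ∫ t, z ω * (ww (x ω) * psi δ (l ω) (∑ j, ξ j ω - x ω + t)) * mh ξ A j t ω ∂nu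
      = z ω * (ww (x ω) * ff δ (l ω) (∑ j, ξ j ω - x ω)) * ξ j ω
        - ξ j ω * (z ω * (ww (x ω) * ff δ (l ω) (∑ k ∈ (A j)ᶜ, ξ k ω - x ω))) := by
    intro ω
    have e3 : ∀ t, z ω * (ww (x ω) * psi δ (l ω) (∑ j, ξ j ω - x ω + t)) * mh ξ A j t ω
        = (z ω * ww (x ω) * ξ j ω) * (kk (∑ l ∈ A j, ξ l ω) t *
          psi δ (l ω) (∑ j, ξ j ω - x ω + t)) := fun t => by unfold mh; ring
    simp only [e3]
    rw [integral_const_mul, kk_ff hδ _ _ (H.sA4 j ω)]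
    have e4 : ∑ k ∈ (A j)ᶜ, ξ k ω - x ω = ∑ k, ξ k ω - x ω - ∑ l ∈ A j, ξ l ω := by
      rw [split_univ (A j)]; ring
    rw [e4]; ring
  simp only [e2]
  rw [int_sub (bz1.mul (H.b0 j)) ((H.b0 j).mul (bz2.mono (sup_le le (H.FF_le _)))), hz0, sub_zero]

lemma step (H : LD μ ξ A B Bs Cs Ds κ) (i : ι) {δ L : ℝ} (hδ : 0 < δ) (hδ4 : δ ≤ 1 / 4)
    (htd : 512 * tau μ ξ κ ≤ δ) (ht0 : 0 ≤ tau μ ξ κ)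
    (h1 : 1 / 2 ≤ ∫ ω, (∑ j, ξ j ω) ^ 2 ∂μ) (h2 : ∫ ω, (∑ j, ξ j ω) ^ 2 ∂μ ≤ 2)
    (hL : 0 ≤ L) (hP : PP μ ξ (B i) δ L) : PP μ ξ (B i) δ (50000 + L / 2) := by
  intro z x l hz hx hl hz0 hl0 hl1
  have h4 : ∫ ω, (∑ k ∈ (Cs i)ᶜ, ξ k ω) ^ 4 ∂μ ≤ 500 := by
    linarith [H.W4 i h2]
  have htau : tau μ ξ κ ≤ 1 := by linarith
  have le := H.FF_le (B i)
  have bz := hz.mono le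
  have bx := hx.mono le
  have bl := hl.mono le
  have bT := H.b0s (μ := μ) (ξ := ξ) Finset.univ
  have bW := H.b0s (μ := μ) (ξ := ξ) (Cs i)ᶜ
  have bTx := bT.sub bx
  have bpsi : BP (fun ω t => psi δ (l ω) (∑ j, ξ j ω - x ω + t)) := bp_psi hδ bTx bl hl0
  have bzt : BP (fun ω t => z ω * (ww (x ω) * psi δ (l ω) (∑ j, ξ j ω - x ω + t))) :=
    BM.mul bz.bp (BM.mul bx.ww.bp bpsi)
  have bMt : BP (fun ω t => ∑ j ∈ (Cs i)ᶜ, mh ξ A j t ω) := BM.sum _ fun j _ => H.mh_bp j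
  have bzM : BP (fun ω t => z ω * (ww (x ω) * psi δ (l ω) (∑ j, ξ j ω - x ω + t)) *
      ∑ j ∈ (Cs i)ᶜ, mh ξ A j t ω) := BM.mul bzt bMt
  have bps : BM m0 (fun ω => psi δ (l ω) (∑ j, ξ j ω - x ω)) := bTx.psi δ bl
  set Q := ∫ ω, z ω * (ww (x ω) * psi δ (l ω) (∑ j, ξ j ω - x ω)) ∂μ with hQ
  set Z := ∫ ω, z ω ∂μ with hZ
  set D := ∫ ω, z ω * (l ω + δ) ∂μ with hD
  have hbD : BM (FF ξ (B i)) (fun ω => z ω * (l ω + δ)) := hz.mul (hl.add (BM.const _))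
  have hZ0 : 0 ≤ Z := integral_nonneg hz0
  have hZD : Z * δ ≤ D := by
    rw [hZ, hD, ← integral_mul_const]
    refine int_mono (bz.mul (BM.const δ)) (hbD.mono le) fun ω => ?_
    nlinarith [hz0 ω, hl0 ω, mul_nonneg (hz0 ω) (hl0 ω)]
  have hD0 : 0 ≤ D := (mul_nonneg hZ0 hδ.le).trans hZD
  have hQ0 : 0 ≤ Q := integral_nonneg fun ω => mul_nonneg (hz0 ω) (mul_nonneg (ww_nonneg _)
    (psi_nonneg hδ (hl0 ω) _))
  -- first term
  have hA : ∫ ω, z ω * (ww (x ω) * ff δ (l ω) (∑ j, ξ j ω - x ω)) * ∑ j ∈ (Cs i)ᶜ, ξ j ω ∂μ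
      ≤ 20000 * D := by
    have hg : Continuous fun W : ℝ => 32 * |W| + 4 * W ^ 4 := by fun_prop
    have := H.indW i hbD hg
    calc _ ≤ ∫ ω, z ω * (l ω + δ) * (32 * |∑ k ∈ (Cs i)ᶜ, ξ k ω|
          + 4 * (∑ k ∈ (Cs i)ᶜ, ξ k ω) ^ 4) ∂μ := by
          refine int_mono ((bz.mul (bx.ww.mul (bTx.ff δ bl))).mul bW)
            ((hbD.mono le).mul ((bW.abs.cmul _).add ((bW.pow 4).cmul _))) fun ω => ?_
          have hTW := abs_le.1 (H.TW i ω)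
          have f0 := ff_nonneg hδ (hl0 ω) (∑ j, ξ j ω - x ω)
          have f1 := ff_le hδ (hl0 ω) (∑ j, ξ j ω - x ω)
          have w0 := ww_nonneg (x ω)
          have hk : ww (x ω) * ff δ (l ω) (∑ j, ξ j ω - x ω)
              ≤ (32 + 4 * |∑ k ∈ (Cs i)ᶜ, ξ k ω| ^ 3) * (l ω + δ) := by
            by_cases hx1 : x ω ≤ ∑ k ∈ (Cs i)ᶜ, ξ k ω + 1
            · exact mul_le_mul (ww_le hx1) f1 f0 (by positivity)
            · rw [ff_zero hδ (hl0 ω), mul_zero]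
              · have := hl0 ω
                positivity
              · linarith [hTW.2]
          set W := ∑ k ∈ (Cs i)ᶜ, ξ k ω
          set F := ff δ (l ω) (∑ j, ξ j ω - x ω)
          have e : W ^ 4 = |W| ^ 3 * |W| := by
            rw [← pow_succ, ← abs_pow, abs_of_nonneg (Even.pow_nonneg (by decide) _)]
          calc z ω * (ww (x ω) * F) * W ≤ z ω * (ww (x ω) * F) * |W| :=
                mul_le_mul_of_nonneg_left (le_abs_self _) (mul_nonneg (hz0 ω) (mul_nonneg w0 f0))
            _ ≤ z ω * ((32 + 4 * |W| ^ 3) * (l ω + δ)) * |W| :=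
                mul_le_mul_of_nonneg_right (mul_le_mul_of_nonneg_left hk (hz0 ω)) (abs_nonneg _)
            _ = _ := by rw [e]; ring
      _ = D * ∫ ω, 32 * |∑ k ∈ (Cs i)ᶜ, ξ k ω| + 4 * (∑ k ∈ (Cs i)ᶜ, ξ k ω) ^ 4 ∂μ := this
      _ ≤ D * ∫ ω, (36 * (∑ k ∈ (Cs i)ᶜ, ξ k ω) ^ 4 + 32) ∂μ := by
          refine mul_le_mul_of_nonneg_left ?_ hD0
          refine int_mono ((bW.abs.cmul _).add ((bW.pow 4).cmul _))
            (((bW.pow 4).cmul _).add (BM.const _)) fun ω => ?_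
          linarith [(pow_ineq (∑ k ∈ (Cs i)ᶜ, ξ k ω)).1]
      _ ≤ D * 20000 := by
          refine mul_le_mul_of_nonneg_left ?_ hD0
          rw [int_add ((bW.pow 4).cmul _) (BM.const _), integral_const_mul, int_c]
          linarith
      _ = _ := by ring
  -- third term
  have hB : ∫ t, (∫ ω, z ω * (ww (x ω) * psi δ (l ω) (∑ j, ξ j ω - x ω + t)) ∂μ) ∂nu
      ≤ 2100 * D := by
    rw [bzt.swap]
    have hg : Continuous fun W : ℝ => 32 + 4 * |W| ^ 3 := by fun_prop
    have := H.indW i hbD hg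
    calc _ ≤ ∫ ω, z ω * (l ω + δ) * (32 + 4 * |∑ k ∈ (Cs i)ᶜ, ξ k ω| ^ 3) ∂μ := by
          refine int_mono bzt.bw
            ((hbD.mono le).mul ((BM.const _).add ((bW.abs.pow 3).cmul _))) fun ω => ?_
          have hTW := abs_le.1 (H.TW i ω)
          rw [integral_const_mul, integral_const_mul]
          have w0 := ww_nonneg (x ω)
          have p0 : 0 ≤ ∫ t, psi δ (l ω) (∑ j, ξ j ω - x ω + t) ∂nu :=
            integral_nonneg fun t => psi_nonneg hδ (hl0 ω) _
          have hk : ww (x ω) * ∫ t, psi δ (l ω) (∑ j, ξ j ω - x ω + t) ∂nu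
              ≤ (32 + 4 * |∑ k ∈ (Cs i)ᶜ, ξ k ω| ^ 3) * (l ω + δ) := by
            by_cases hx1 : x ω ≤ ∑ k ∈ (Cs i)ᶜ, ξ k ω + 1
            · exact mul_le_mul (ww_le hx1) (psi_int hδ (hl0 ω) _) p0 (by positivity)
            · have : ∫ t, psi δ (l ω) (∑ j, ξ j ω - x ω + t) ∂nu = 0 := by
                refine integral_eq_zero_of_ae ?_
                filter_upwards [nu_ae] with t ht
                rw [psi_zero hδ (hl0 ω)]; · rfl
                linarith [hTW.2, (abs_le.1 ht).2]
              rw [this, mul_zero]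
              have := hl0 ω
              positivity
          calc _ ≤ z ω * ((32 + 4 * |∑ k ∈ (Cs i)ᶜ, ξ k ω| ^ 3) * (l ω + δ)) :=
                mul_le_mul_of_nonneg_left hk (hz0 ω)
            _ = _ := by ring
      _ = D * ∫ ω, 32 + 4 * |∑ k ∈ (Cs i)ᶜ, ξ k ω| ^ 3 ∂μ := this
      _ ≤ D * ∫ ω, (4 * (∑ k ∈ (Cs i)ᶜ, ξ k ω) ^ 4 + 36) ∂μ := by
          refine mul_le_mul_of_nonneg_left ?_ hD0
          refine int_mono ((BM.const _).add ((bW.abs.pow 3).cmul _))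
            (((bW.pow 4).cmul _).add (BM.const _)) fun ω => ?_
          linarith [(pow_ineq (∑ k ∈ (Cs i)ᶜ, ξ k ω)).2]
      _ ≤ D * 2100 := by
          refine mul_le_mul_of_nonneg_left ?_ hD0
          rw [int_add ((bW.pow 4).cmul _) (BM.const _), integral_const_mul, int_c]
          linarith
      _ = _ := by ring
  -- integrate
  have iM : Integrable (fun t => |t| * |MM μ ξ A (Cs i)ᶜ t|) nu := by
    obtain ⟨hm, C, hC⟩ := H.MM_b (Cs i)ᶜ
    refine Integrable.of_bound (C := 1 / 4 * C)
      (Measurable.mul (measurable_norm) (measurable_norm.comp hm)).aestronglyMeasurable ?_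
    filter_upwards [nu_ae] with t ht
    rw [Real.norm_eq_abs, abs_mul, abs_abs, abs_abs]
    exact mul_le_mul ht (hC t) (abs_nonneg _) (by norm_num)
  have i1 := bzM.bt (μ := μ).int (μ := nu)
  have i3 := bzt.bt (μ := μ).int (μ := nu)
  have i4 := (BM.sum Finset.univ fun j _ => H.hh_b j).int (μ := nu)
  have main := integral_mono_ae (μ := nu)
    (f := fun t => MM μ ξ A (Cs i)ᶜ t * Q) ((H.MM_b _).int.mul_const Q)
    (((i1.add (iM.const_mul (64 * L * Z))).add (i3.const_mul (1 / 2))).add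
      (i4.const_mul (30000 * Z))) (by
      filter_upwards [nu_ae] with t ht
      exact H.fixed_t i hδ hδ4 hL hP hz hx hl hz0 hl0 h4 htau ht)
  rw [integral_mul_const, integral_add' ((i1.add (iM.const_mul (64 * L * Z))).add
    (i3.const_mul (1 / 2))) (i4.const_mul (30000 * Z)),
    integral_add' (i1.add (iM.const_mul (64 * L * Z))) (i3.const_mul (1 / 2)),
    integral_add' i1 (iM.const_mul (64 * L * Z)), integral_const_mul, integral_const_mul,
    integral_const_mul, H.term1 i hδ hz hx hl hl0] at main
  have m1 := mul_le_mul_of_nonneg_right (H.MM_int i h1) hQ0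
  have m2 := mul_le_mul_of_nonneg_left (H.MM_abs_int (Cs i)ᶜ)
    (show 0 ≤ 64 * L * Z by positivity)
  have m3 := mul_le_mul_of_nonneg_left H.hh_int (show 0 ≤ 30000 * Z by positivity)
  have m4 : tau μ ξ κ * Z ≤ D / 512 := by nlinarith
  have m5 : L * (tau μ ξ κ * Z) ≤ L * (D / 512) := mul_le_mul_of_nonneg_left m4 hL
  have hLD : 0 ≤ L * D := mul_nonneg hL hD0
  have fin : Q ≤ (50000 + L / 2) * D := by nlinarith
  refine le_trans ?_ fin
  refine int_mono (bz.mul (bx.ww.mul (BM.ind bx (bx.add bl) bT))) (bz.mul (bx.ww.mul bps))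
    fun ω => ?_
  refine mul_le_mul_of_nonneg_left (mul_le_mul_of_nonneg_left ?_ (ww_nonneg _)) (hz0 ω)
  rw [Set.indicator_apply]
  split_ifs with h
  · rw [psi_one hδ (by linarith [h.1]) (by linarith [h.2])]
  · exact psi_nonneg hδ (hl0 ω) _

lemma base (H : LD μ ξ A B Bs Cs Ds κ) (S : Finset ι) {δ : ℝ} (hδ : 0 < δ) :
    ∃ L, 0 ≤ L ∧ PP μ ξ S δ L := by
  obtain ⟨hT, K, hK⟩ := H.b0s (μ := μ) (ξ := ξ) Finset.univ
  refine ⟨ww K / δ, div_nonneg (ww_nonneg _) hδ.le, ?_⟩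
  intro z x l hz hx hl hz0 hl0 _
  have le := H.FF_le S
  have bT := H.b0s (μ := μ) (ξ := ξ) Finset.univ
  rw [← integral_const_mul]
  refine int_mono ((hz.mono le).mul ((hx.mono le).ww.mul (BM.ind (hx.mono le)
    ((hx.mono le).add (hl.mono le)) bT)))
    (((hz.mono le).mul ((hl.mono le).add (BM.const _))).cmul _) fun ω => ?_
  have h1 : ww (x ω) * (Set.Icc (x ω) (x ω + l ω)).indicator (fun _ => (1 : ℝ)) (∑ j, ξ j ω)
      ≤ ww K := by
    rw [Set.indicator_apply]
    split_ifs with h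
    · rw [mul_one]
      have : x ω ≤ K := h.1.trans ((le_abs_self _).trans (hK ω))
      unfold ww
      have := le_max_right (x ω) 0
      gcongr
    · rw [mul_zero]; exact ww_nonneg _
  have h2 : ww K ≤ ww K / δ * (l ω + δ) := by
    have : ww K / δ * (l ω + δ) = ww K + ww K / δ * l ω := by field_simp; ring
    rw [this]
    have := mul_nonneg (div_nonneg (ww_nonneg K) hδ.le) (hl0 ω)
    linarith
  calc _ ≤ z ω * (ww K / δ * (l ω + δ)) := mul_le_mul_of_nonneg_left (h1.trans h2) (hz0 ω)
    _ = _ := by ring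

lemma final (H : LD μ ξ A B Bs Cs Ds κ) (i : ι) {δ : ℝ} (hδ : 0 < δ) (hδ4 : δ ≤ 1 / 4)
    (htd : 512 * tau μ ξ κ ≤ δ) (ht0 : 0 ≤ tau μ ξ κ)
    (h1 : 1 / 2 ≤ ∫ ω, (∑ j, ξ j ω) ^ 2 ∂μ) (h2 : ∫ ω, (∑ j, ξ j ω) ^ 2 ∂μ ≤ 2) :
    PP μ ξ (B i) δ 100000 := by
  obtain ⟨L, hL, hP⟩ := H.base (B i) hδ
  have it : ∀ n : ℕ, PP μ ξ (B i) δ (100000 + L * (1 / 2) ^ n) := by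
    intro n
    induction n with
    | zero =>
      intro z x l hz hx hl hz0 hl0 hl1
      refine (hP z x l hz hx hl hz0 hl0 hl1).trans ?_
      have : 0 ≤ ∫ ω, z ω * (l ω + δ) ∂μ :=
        integral_nonneg fun ω => mul_nonneg (hz0 ω) (add_nonneg (hl0 ω) hδ.le)
      refine mul_le_mul_of_nonneg_right ?_ this
      simp
    | succ n ih =>
      have := H.step i hδ hδ4 htd ht0 h1 h2 (by positivity) ih
      convert this using 1
      ring
  intro z x l hz hx hl hz0 hl0 hl1
  set D := ∫ ω, z ω * (l ω + δ) ∂μ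
  have lim : Filter.Tendsto (fun n : ℕ => (100000 + L * (1 / 2 : ℝ) ^ n) * D) Filter.atTop
      (nhds ((100000 + L * 0) * D)) :=
    ((tendsto_const_nhds.add ((tendsto_pow_atTop_nhds_zero_of_lt_one (by norm_num)
      (by norm_num)).const_mul L))).mul_const D
  have := ge_of_tendsto' lim fun n => it n z x l hz hx hl hz0 hl0 hl1
  simpa using this

end LD
end LDep

open MeasureTheory ProbabilityTheory Real

namespace LDep
namespace LD
variable {Ω : Type*} [m0 : MeasurableSpace Ω] {μ : Measure Ω} {ι : Type*} [Fintype ι]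
    [DecidableEq ι] {ξ : ι → Ω → ℝ} {A B Bs Cs Ds : ι → Finset ι} {κ : ℕ}
    [IsProbabilityMeasure μ]

lemma tau_nonneg : 0 ≤ tau μ ξ κ :=
  mul_nonneg (sq_nonneg _) (Finset.sum_nonneg fun _ _ => integral_nonneg fun _ => by positivity)

lemma tau_pos (H : LD μ ξ A B Bs Cs Ds κ) (h1 : 1 / 2 ≤ ∫ ω, (∑ j, ξ j ω) ^ 2 ∂μ) :
    0 < tau μ ξ κ := by
  refine lt_of_le_of_ne tau_nonneg fun h => ?_
  have hk : (κ : ℝ) ^ 2 ≠ 0 := pow_ne_zero _ (by exact_mod_cast H.kpos.ne')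
  have h0 : ∑ j, ∫ ω, |ξ j ω| ^ 3 ∂μ = 0 := (mul_eq_zero.1 h.symm).resolve_left hk
  rw [Finset.sum_eq_zero_iff_of_nonneg fun _ _ => integral_nonneg fun _ => by positivity] at h0
  have hz : ∀ᵐ ω ∂μ, ∀ j, ξ j ω = 0 := by
    rw [ae_all_iff]
    intro j
    have := (integral_eq_zero_iff_of_nonneg (fun ω => by positivity)
      ((H.b0 j).abs.pow 3).int).1 (h0 j (Finset.mem_univ j))
    filter_upwards [this] with ω hω
    simpa using hω
  have : ∫ ω, (∑ j, ξ j ω) ^ 2 ∂μ = 0 := by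
    refine integral_eq_zero_of_ae ?_
    filter_upwards [hz] with ω hω
    simp [hω]
  linarith

lemma concl (H : LD μ ξ A B Bs Cs Ds κ) (i : ι)
    (h1 : 1 / 2 ≤ ∫ ω, (∑ j, ξ j ω) ^ 2 ∂μ) (h2 : ∫ ω, (∑ j, ξ j ω) ^ 2 ∂μ ≤ 2)
    {z x y : Ω → ℝ} (hz : BM (FF ξ (B i)) z) (hx : BM (FF ξ (B i)) x)
    (hy : BM (FF ξ (B i)) y) (hz0 : ∀ ω, 0 ≤ z ω) (hx0 : ∀ ω, 0 ≤ x ω) (hxy : ∀ ω, x ω ≤ y ω) :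
    ∫ ω, z ω * ((1 + ∑ j, ξ j ω) ^ 3 *
      (Set.Icc (x ω) (y ω)).indicator (fun _ => (1 : ℝ)) (∑ j, ξ j ω)) ∂μ
      ≤ 30000000 * ∫ ω, z ω * (y ω - x ω + 16 * tau μ ξ κ) ∂μ := by
  have le := H.FF_le (B i)
  have bz := hz.mono le
  have bx := hx.mono le
  have byy := hy.mono le
  have bT := H.b0s (μ := μ) (ξ := ξ) Finset.univ
  have bW := H.b0s (μ := μ) (ξ := ξ) (Cs i)ᶜ
  have ht := H.tau_pos h1
  have h4 := H.W4 i h2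
  set τ := tau μ ξ κ
  have hg : Continuous fun W : ℝ => 32 + 4 * |W| ^ 3 := by fun_prop
  have bw3 : BM m0 (fun ω => 32 + 4 * |∑ k ∈ (Cs i)ᶜ, ξ k ω| ^ 3) :=
    (BM.const _).add ((bW.abs.pow 3).cmul _)
  have hW3 : ∫ ω, 32 + 4 * |∑ k ∈ (Cs i)ᶜ, ξ k ω| ^ 3 ∂μ ≤ 424 + 1440 * τ := by
    have : ∫ ω, 32 + 4 * |∑ k ∈ (Cs i)ᶜ, ξ k ω| ^ 3 ∂μ
        ≤ ∫ ω, (4 * (∑ k ∈ (Cs i)ᶜ, ξ k ω) ^ 4 + 36) ∂μ := by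
      refine int_mono bw3 (((bW.pow 4).cmul _).add (BM.const _)) fun ω => ?_
      linarith [(pow_ineq (∑ k ∈ (Cs i)ᶜ, ξ k ω)).2]
    rw [int_add ((bW.pow 4).cmul _) (BM.const _), integral_const_mul, int_c] at this
    linarith
  have hZ0 : 0 ≤ ∫ ω, z ω ∂μ := integral_nonneg hz0
  have hzy : BM (FF ξ (B i)) (fun ω => z ω * (y ω - x ω)) := hz.mul (hy.sub hx)
  have hY0 : 0 ≤ ∫ ω, z ω * (y ω - x ω) ∂μ :=
    integral_nonneg fun ω => mul_nonneg (hz0 ω) (sub_nonneg.2 (hxy ω))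
  have eR : ∫ ω, z ω * (y ω - x ω + 16 * τ) ∂μ
      = ∫ ω, z ω * (y ω - x ω) ∂μ + 16 * τ * ∫ ω, z ω ∂μ := by
    have : ∀ ω, z ω * (y ω - x ω + 16 * τ) = z ω * (y ω - x ω) + 16 * τ * z ω :=
      fun ω => by ring
    simp only [this]
    rw [int_add (hzy.mono le) (bz.cmul _), integral_const_mul]
  have bI := BM.ind bx byy bT
  have bL : BM m0 (fun ω => z ω * ((1 + ∑ j, ξ j ω) ^ 3 *
      (Set.Icc (x ω) (y ω)).indicator (fun _ => (1 : ℝ)) (∑ j, ξ j ω))) :=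
    bz.mul ((((BM.const 1).add bT).pow 3).mul bI)
  have crude : ∀ ω, x ω ≤ ∑ j, ξ j ω → (1 + ∑ j, ξ j ω) ^ 3
      ≤ 32 + 4 * |∑ k ∈ (Cs i)ᶜ, ξ k ω| ^ 3 := by
    intro ω h
    have hT := abs_le.1 (H.TW i ω)
    have := ww_le (x := ∑ j, ξ j ω) (W := ∑ k ∈ (Cs i)ᶜ, ξ k ω) (by linarith [hT.2])
    unfold ww at this
    rwa [max_eq_left ((hx0 ω).trans h)] at this
  rw [eR]
  by_cases hτ : τ ≤ 1 / 2048
  · have hP := H.final i (δ := 512 * τ) (by positivity) (by linarith) le_rfl ht.le h1 h2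
    have hl : BM (FF ξ (B i)) (fun ω => min (y ω - x ω) 1) := by
      have := ((hy.sub hx).neg.max (BM.const (-1))).neg
      have e : (fun ω => - max (-(y ω - x ω)) (-1)) = fun ω => min (y ω - x ω) 1 := by
        funext ω; rw [max_neg_neg, neg_neg]
      rwa [e] at this
    have hp := hP z x _ hz hx hl hz0 (fun ω => le_min (sub_nonneg.2 (hxy ω)) zero_le_one)
      (fun ω => min_le_right _ _)
    have hi := H.indW i hzy hg
    have bP : BM m0 (fun ω => z ω * (ww (x ω) * (Set.Icc (x ω) (x ω + min (y ω - x ω) 1)).indicator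
        (fun _ => (1 : ℝ)) (∑ j, ξ j ω))) :=
      bz.mul (bx.ww.mul (BM.ind bx (bx.add (hl.mono le)) bT))
    have bQ : BM m0 (fun ω => z ω * (y ω - x ω) * (32 + 4 * |∑ k ∈ (Cs i)ᶜ, ξ k ω| ^ 3)) :=
      (hzy.mono le).mul bw3
    have main := int_mono (μ := μ) bL ((bP.cmul 8).add bQ) fun ω => by
      have hw := ww_nonneg (x ω)
      have hyx := sub_nonneg.2 (hxy ω)
      have hq : 0 ≤ (y ω - x ω) * (32 + 4 * |∑ k ∈ (Cs i)ᶜ, ξ k ω| ^ 3) := by positivity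
      have : (1 + ∑ j, ξ j ω) ^ 3 *
          (Set.Icc (x ω) (y ω)).indicator (fun _ => (1 : ℝ)) (∑ j, ξ j ω)
          ≤ 8 * (ww (x ω) * (Set.Icc (x ω) (x ω + min (y ω - x ω) 1)).indicator
            (fun _ => (1 : ℝ)) (∑ j, ξ j ω))
            + (y ω - x ω) * (32 + 4 * |∑ k ∈ (Cs i)ᶜ, ξ k ω| ^ 3) := by
        rw [Set.indicator_apply]
        split_ifs with h
        · have hc := crude ω h.1
          set T := ∑ j, ξ j ω
          by_cases hT : T ≤ x ω + min (y ω - x ω) 1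
          · rw [Set.indicator_of_mem (show T ∈ Set.Icc (x ω) (x ω + min (y ω - x ω) 1) from ⟨h.1, hT⟩)]
            have hT1 : T ≤ x ω + 1 := hT.trans (by linarith [min_le_right (y ω - x ω) 1])
            have hT0 := (hx0 ω).trans h.1
            have : (1 + T) ^ 3 ≤ 8 * ww (x ω) := by
              unfold ww
              rw [max_eq_left (hx0 ω)]
              calc (1 + T) ^ 3 ≤ (2 * (1 + x ω)) ^ 3 :=
                    pow_le_pow_left₀ (by linarith) (by linarith [hx0 ω]) 3
                _ = _ := by ring
            linarith
          · have h1 : 1 ≤ y ω - x ω := by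
              by_contra hlt
              rw [min_eq_left (not_le.1 hlt).le] at hT
              exact hT (by linarith [h.2])
            have n1 := ind_nonneg (Set.Icc (x ω) (x ω + min (y ω - x ω) 1)) T
            have n2 : 0 ≤ 32 + 4 * |∑ k ∈ (Cs i)ᶜ, ξ k ω| ^ 3 := by positivity
            have n3 := mul_le_mul_of_nonneg_right h1 n2
            have n4 := mul_nonneg hw n1
            linarith
        · have n1 := ind_nonneg (Set.Icc (x ω) (x ω + min (y ω - x ω) 1)) (∑ j, ξ j ω)
          have n4 := mul_nonneg hw n1
          linarith
      have := mul_le_mul_of_nonneg_left this (hz0 ω)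
      refine this.trans (le_of_eq ?_)
      ring
    rw [int_add (bP.cmul 8) bQ, integral_const_mul, hi] at main
    have hl2 : ∫ ω, z ω * (min (y ω - x ω) 1 + 512 * τ) ∂μ
        ≤ ∫ ω, (z ω * (y ω - x ω) + 512 * τ * z ω) ∂μ := by
      refine int_mono (bz.mul ((hl.mono le).add (BM.const _))) ((hzy.mono le).add (bz.cmul _))
        fun ω => ?_
      have := mul_le_mul_of_nonneg_left (min_le_left (y ω - x ω) 1) (hz0 ω)
      linarith
    rw [int_add (hzy.mono le) (bz.cmul _), integral_const_mul] at hl2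
    have m1 := mul_le_mul_of_nonneg_left hW3 hY0
    have m2 : 0 ≤ τ * ∫ ω, z ω ∂μ := by positivity
    nlinarith
  · have hi := H.indW i hz hg
    have main := int_mono (μ := μ) bL (bz.mul bw3) fun ω => by
      refine mul_le_mul_of_nonneg_left ?_ (hz0 ω)
      rw [Set.indicator_apply]
      split_ifs with h
      · rw [mul_one]; exact crude ω h.1
      · rw [mul_zero]; positivity
    rw [hi] at main
    have m1 := mul_le_mul_of_nonneg_left hW3 hZ0
    have m2 := mul_le_mul_of_nonneg_left (not_le.1 hτ).le hZ0
    nlinarith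

lemma BM_min {m : MeasurableSpace Ω} {f : Ω → ℝ} (hf : Measurable[m] f) (h0 : ∀ ω, 0 ≤ f ω)
    {K : ℝ} (hK : 0 ≤ K) : BM m (fun ω => min (f ω) K) :=
  ⟨hf.min measurable_const, K, fun ω => by
    rw [abs_of_nonneg (le_min (h0 ω) hK)]; exact min_le_right _ _⟩

end LD

namespace LD
variable {Ω : Type*} {m : MeasurableSpace Ω} [m0 : MeasurableSpace Ω] {μ : Measure Ω}
    {ι : Type*} [Fintype ι]
    [DecidableEq ι] {ξ : ι → Ω → ℝ} {A B Bs Cs Ds : ι → Finset ι} {κ : ℕ}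
    [IsProbabilityMeasure μ]

lemma main (H : LD μ ξ A B Bs Cs Ds κ) (i : ι)
    (h1 : 1 / 2 ≤ ∫ ω, (∑ j, ξ j ω) ^ 2 ∂μ) (h2 : ∫ ω, (∑ j, ξ j ω) ^ 2 ∂μ ≤ 2)
    (hm : m ≤ FF ξ (B i)) {a b : Ω → ℝ} (ha : Measurable[m] a)
    (hb : Measurable[m] b) (ha0 : ∀ ω, 0 ≤ a ω) (hab : ∀ ω, a ω ≤ b ω) :
    ∀ᵐ ω ∂μ, (μ[fun ω' => (1 + ∑ j, ξ j ω') ^ 3 *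
            Set.indicator {ω'' | a ω'' ≤ ∑ j, ξ j ω'' ∧ ∑ j, ξ j ω'' ≤ b ω''}
              (fun _ => (1 : ℝ)) ω' | m]) ω
        ≤ 30000000 * (b ω - a ω + 16 * tau μ ξ κ) := by
  have le := H.FF_le (B i)
  have hm0 : m ≤ m0 := hm.trans le
  have bT := H.b0s (μ := μ) (ξ := ξ) Finset.univ
  obtain ⟨hTm, K0, hK0⟩ := bT
  set K := max K0 0 + 1 with hK
  have hKpos : 0 ≤ K := by positivity
  have hTK : ∀ ω, ∑ j, ξ j ω < K := fun ω => by
    have := (le_abs_self _).trans (hK0 ω)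
    have := le_max_left K0 0
    linarith
  set x : Ω → ℝ := fun ω => min (a ω) K with hx
  set y : Ω → ℝ := fun ω => min (b ω) K with hy
  have bx : BM m x := BM_min ha ha0 hKpos
  have byy : BM m y := BM_min hb (fun ω => (ha0 ω).trans (hab ω)) hKpos
  have hx0 : ∀ ω, 0 ≤ x ω := fun ω => le_min (ha0 ω) hKpos
  have hxy : ∀ ω, x ω ≤ y ω := fun ω => min_le_min_right _ (hab ω)
  set f : Ω → ℝ := fun ω' => (1 + ∑ j, ξ j ω') ^ 3 *
            Set.indicator {ω'' | a ω'' ≤ ∑ j, ξ j ω'' ∧ ∑ j, ξ j ω'' ≤ b ω''}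
              (fun _ => (1 : ℝ)) ω' with hf
  have ef : ∀ ω, f ω = (1 + ∑ j, ξ j ω) ^ 3 *
      (Set.Icc (x ω) (y ω)).indicator (fun _ => (1 : ℝ)) (∑ j, ξ j ω) := by
    intro ω
    simp only [hf, Set.indicator_apply, Set.mem_ofPred_eq, Set.mem_Icc, hx, hy]
    have e : (a ω ≤ ∑ j, ξ j ω ∧ ∑ j, ξ j ω ≤ b ω) ↔
        (min (a ω) K ≤ ∑ j, ξ j ω ∧ ∑ j, ξ j ω ≤ min (b ω) K) := by
      have := hTK ω
      rw [min_le_iff, le_min_iff]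
      constructor
      · rintro ⟨h, h'⟩; exact ⟨Or.inl h, h', this.le⟩
      · rintro ⟨h | h, h', _⟩
        · exact ⟨h, h'⟩
        · linarith
    simp only [e]
  have bf : BM m0 f := by
    have : BM m0 (fun ω => (1 + ∑ j, ξ j ω) ^ 3 *
      (Set.Icc (x ω) (y ω)).indicator (fun _ => (1 : ℝ)) (∑ j, ξ j ω)) :=
      (((BM.const 1).add (H.b0s _)).pow 3).mul (BM.ind (bx.mono hm0) (byy.mono hm0) (H.b0s _))
    rwa [← funext ef] at this
  have bg : BM m (fun ω => 30000000 * (y ω - x ω + 16 * tau μ ξ κ)) :=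
    ((byy.sub bx).add (BM.const _)).cmul _
  have key : (μ[f | m]) ≤ᵐ[μ] fun ω => 30000000 * (y ω - x ω + 16 * tau μ ξ κ) := by
    refine ae_le_of_ae_le_trim (hm := hm0) ?_
    refine ae_le_of_forall_setIntegral_le
      (integrable_condExp.trim hm0 stronglyMeasurable_condExp) bg.int fun s hs _ => ?_
    rw [← setIntegral_trim hm0 stronglyMeasurable_condExp hs,
      ← setIntegral_trim hm0 bg.1.stronglyMeasurable hs, setIntegral_condExp hm0 bf.int hs,
      ← integral_indicator (hm0 s hs), ← integral_indicator (hm0 s hs)]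
    have bs : BM (FF ξ (B i)) (s.indicator fun _ => (1 : ℝ)) := by
      refine ⟨measurable_const.indicator (hm s hs), 1, fun ω => ?_⟩
      by_cases h : ω ∈ s
      · rw [Set.indicator_of_mem h]; simp
      · rw [Set.indicator_of_notMem h]; simp
    have := H.concl i h1 h2 bs (bx.mono hm) (byy.mono hm)
      (fun ω => Set.indicator_nonneg (fun _ _ => zero_le_one) ω) hx0 hxy
    rw [← integral_const_mul] at this
    refine (le_of_eq (integral_congr_ae (Filter.Eventually.of_forall fun ω => ?_))).trans
      (this.trans (le_of_eq (integral_congr_ae (Filter.Eventually.of_forall fun ω => ?_))))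
    · beta_reduce
      rw [← ef]
      by_cases h : ω ∈ s
      · rw [Set.indicator_of_mem h, Set.indicator_of_mem h, one_mul]
      · rw [Set.indicator_of_notMem h, Set.indicator_of_notMem h, zero_mul]
    · beta_reduce
      by_cases h : ω ∈ s
      · rw [Set.indicator_of_mem h, Set.indicator_of_mem h, one_mul]
      · rw [Set.indicator_of_notMem h, Set.indicator_of_notMem h, zero_mul, mul_zero]
  filter_upwards [key] with ω hω
  refine hω.trans ?_
  have : y ω - x ω ≤ b ω - a ω := by
    simp only [hx, hy]
    rcases le_total (a ω) K with h | h
    · rw [min_eq_left h]; linarith [min_le_left (b ω) K]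
    · rw [min_eq_right h]; linarith [min_le_right (b ω) K, hab ω]
  linarith

end LD

lemma FF_le_of {Ω ι : Type*} {m : MeasurableSpace Ω} {X ξ : ι → Ω → ℝ}
    (hg : ∀ i, ∃ g : ℝ → ℝ, Measurable g ∧ ∀ ω, ξ i ω = g (X i ω)) {S : Finset ι}
    (h : ∀ k ∈ S, Measurable[m] (X k)) : FF ξ S ≤ m := by
  refine iSup₂_le fun k hk => ?_
  obtain ⟨g, hgm, he⟩ := hg k
  have : ξ k = fun ω => g (X k ω) := funext he
  rw [this]
  exact measurable_iff_comap_le.1 (hgm.comp (h k hk))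

lemma FF_vec {Ω ι : Type*} {X ξ : ι → Ω → ℝ}
    (hg : ∀ i, ∃ g : ℝ → ℝ, Measurable g ∧ ∀ ω, ξ i ω = g (X i ω)) (S : Finset ι) :
    FF ξ S ≤ MeasurableSpace.comap (fun ω => fun j : S => X j.1 ω) inferInstance :=
  FF_le_of hg fun k hk => by
    have h1 := comap_measurable (m := MeasurableSpace.pi) (fun ω => fun j : S => X j.1 ω)
    exact (measurable_pi_apply (X := fun _ : S => ℝ) (⟨k, hk⟩ : S)).comp h1

lemma GG_vec {Ω ι : Type*} {X ξ : ι → Ω → ℝ}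
    (hg : ∀ i, ∃ g : ℝ → ℝ, Measurable g ∧ ∀ ω, ξ i ω = g (X i ω)) (A : ι → Finset ι)
    (S : Finset ι) :
    GG ξ A S ≤ MeasurableSpace.comap
      (fun ω => fun l : S => fun j : (A l.1 : Finset ι) => X j.1 ω) inferInstance :=
  iSup₂_le fun l hl => FF_le_of hg fun k hk => by
    have h1 := comap_measurable (m := MeasurableSpace.pi)
      (fun ω => fun l : S => fun j : (A l.1 : Finset ι) => X j.1 ω)
    have h2 := (measurable_pi_apply (X := fun l : S => (A l.1 : Finset ι) → ℝ)
      (⟨l, hl⟩ : S)).comp h1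
    exact (measurable_pi_apply (X := fun _ : (A l : Finset ι) => ℝ)
      (⟨k, hk⟩ : (A l : Finset ι))).comp h2

end LDep

theorem stmt_13 :
    ∃ C : ℝ, 0 < C ∧
    ∀ (Ω : Type) [MeasurableSpace Ω] (μ : Measure Ω) [IsProbabilityMeasure μ]
      (ι : Type) [Fintype ι] [DecidableEq ι]
      (X : ι → Ω → ℝ) (A B Bstar Cstar Dstar : ι → Finset ι),
      (∀ i, Measurable (X i)) →
      (∀ i, i ∈ A i) → (∀ i, A i ⊆ B i) → (∀ i, B i ⊆ Bstar i) →
      (∀ i, Bstar i ⊆ Cstar i) → (∀ i, Cstar i ⊆ Dstar i) →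
      (∀ i, IndepFun (X i) (fun ω => fun j : ((A i)ᶜ : Finset ι) => X j.1 ω) μ) →
      (∀ i, IndepFun (fun ω => fun j : (A i : Finset ι) => X j.1 ω)
        (fun ω => fun j : ((B i)ᶜ : Finset ι) => X j.1 ω) μ) →
      (∀ i, IndepFun (fun ω => fun j : (A i : Finset ι) => X j.1 ω)
        (fun ω => fun l : ((Bstar i)ᶜ : Finset ι) =>
          fun j : (A l.1 : Finset ι) => X j.1 ω) μ) →
      (∀ i, IndepFun (fun ω => fun l : (Bstar i : Finset ι) =>
          fun j : (A l.1 : Finset ι) => X j.1 ω)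
        (fun ω => fun l : ((Cstar i)ᶜ : Finset ι) =>
          fun j : (A l.1 : Finset ι) => X j.1 ω) μ) →
      (∀ i, IndepFun (fun ω => fun l : (Cstar i : Finset ι) =>
          fun j : (A l.1 : Finset ι) => X j.1 ω)
        (fun ω => fun l : ((Dstar i)ᶜ : Finset ι) =>
          fun j : (A l.1 : Finset ι) => X j.1 ω) μ) →
    ∀ (κ : ℕ), (κ = Finset.univ.sup fun i => max (Dstar i).card
        (Finset.univ.filter fun j => i ∈ Dstar j).card) →
    ∀ (ξ : ι → Ω → ℝ),
      (∀ i, ∃ g : ℝ → ℝ, Measurable g ∧ ∀ ω, ξ i ω = g (X i ω)) →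
      (∀ i, ∫ ω, ξ i ω ∂μ = 0) →
      (∀ i ω, |ξ i ω| ≤ 1 / (4 * (κ : ℝ))) →
    ∀ (T : Ω → ℝ), (∀ ω, T ω = ∑ j, ξ j ω) →
      (1 / 2 ≤ ∫ ω, (T ω) ^ 2 ∂μ) → (∫ ω, (T ω) ^ 2 ∂μ) ≤ 2 →
    ∀ (i : ι) (ζ : Ω → ℝ × ℝ × ℝ),
      (∀ ω, ζ ω = (ξ i ω, ∑ l ∈ A i, ξ l ω, ∑ l ∈ B i, ξ l ω)) →
    ∀ (α : ℝ), (α = 16 * (κ : ℝ) ^ 2 * ∑ j, ∫ ω, |ξ j ω| ^ 3 ∂μ) →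
    ∀ (a b : ℝ × ℝ × ℝ → ℝ), Measurable a → Measurable b →
      (∀ x, 0 ≤ a x) → (∀ x, a x ≤ b x) →
    ∀ᵐ ω ∂μ,
      (μ[fun ω' => (1 + T ω') ^ 3 *
            Set.indicator {ω'' | a (ζ ω'') ≤ T ω'' ∧ T ω'' ≤ b (ζ ω'')}
              (fun _ => (1 : ℝ)) ω' |
          MeasurableSpace.comap ζ inferInstance]) ω ≤
        C * (b (ζ ω) - a (ζ ω) + α) := by
  refine ⟨30000000, by norm_num, ?_⟩
  intro Ω _ μ _ ι _ _ X A B Bs Cs Ds hX hA hAB hBB hBC hCD i1 i2 i3 i4 i5 κ hκ ξ hξ hmean hbdd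
    T hT h1 h2 i ζ hζ α hα a b ha hb ha0 hab
  have hsup : ∀ j, max (Ds j).card (Finset.univ.filter fun l => j ∈ Ds l).card ≤ κ := fun j => by
    rw [hκ]
    exact Finset.le_sup (f := fun i => max (Ds i).card
        (Finset.univ.filter fun j => i ∈ Ds j).card) (Finset.mem_univ j)
  have hc1 : ∀ j, (Ds j).card ≤ κ := fun j => (le_max_left _ _).trans (hsup j)
  have H : LDep.LD μ ξ A B Bs Cs Ds κ :=
    { meas := fun j => by
        obtain ⟨g, hg, he⟩ := hξ j
        rw [funext he]
        exact hg.comp (hX j)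
      memA := hA
      AB := hAB
      BBs := hBB
      BsCs := hBC
      CsDs := hCD
      i1 := fun j => indep_of_indep_of_le ((IndepFun_iff_Indep _ _ _).1 (i1 j))
        (LDep.FF_le_of hξ fun k hk => by
          rw [Finset.mem_singleton.1 hk]; exact comap_measurable _) (LDep.FF_vec hξ _)
      i2 := fun j => indep_of_indep_of_le ((IndepFun_iff_Indep _ _ _).1 (i2 j))
        (LDep.FF_vec hξ _) (LDep.FF_vec hξ _)
      i3 := fun j => indep_of_indep_of_le ((IndepFun_iff_Indep _ _ _).1 (i3 j))
        (LDep.FF_vec hξ _) (LDep.GG_vec hξ A _)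
      i4 := fun j => indep_of_indep_of_le ((IndepFun_iff_Indep _ _ _).1 (i4 j))
        (LDep.GG_vec hξ A _) (LDep.GG_vec hξ A _)
      i5 := fun j => indep_of_indep_of_le ((IndepFun_iff_Indep _ _ _).1 (i5 j))
        (LDep.GG_vec hξ A _) (LDep.GG_vec hξ A _)
      mean := hmean
      bdd := hbdd
      kpos := (Finset.card_pos.2 ⟨i, hCD i (hBC i (hBB i (hAB i (hA i))))⟩).trans_le (hc1 i)
      c1 := hc1
      c2 := fun j => (le_max_right _ _).trans (hsup j) }
  obtain rfl : T = fun ω => ∑ j, ξ j ω := funext hT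
  have hm : MeasurableSpace.comap ζ inferInstance ≤ LDep.FF ξ (B i) := by
    refine measurable_iff_comap_le.1 ?_
    rw [funext hζ]
    exact (LDep.meas_FF (hAB i (hA i))).prodMk
      ((H.bFs (hAB i)).1.prodMk (H.bFs subset_rfl).1)
  have hα' : α = 16 * LDep.LD.tau μ ξ κ := by rw [hα, LDep.LD.tau]; ring
  rw [hα']
  exact H.main i h1 h2 hm (a := fun ω => a (ζ ω)) (b := fun ω => b (ζ ω))
    (ha.comp (comap_measurable ζ)) (hb.comp (comap_measurable ζ)) (fun ω => ha0 _)
    (fun ω => hab _)
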